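/- Let Σ be a non-singular fan in ℝ^n satisfying conditions (2.9.1) and (2.9.2), and let D = (d_1,…,d_r) be an r-tuple of positive integers with ∑_k d_k n_k = 0. Then the map i_D : Pol*_D(S¹,X_Σ) → ΩX_Σ induces an isomorphism (i_D)_* : π_k(Pol*_D(S¹,X_Σ)) → π_k(ΩX_Σ) ≅ π_{k+1}(X_Σ) for every k with 2 ≤ k ≤ d(D,Σ) = 2(r_min(Σ)−1)·d_min − 2. -/

import Mathlib

open scoped BigOperators
attribute [local instance] Classical.propDecidable

noncomputable section

namespace Toric


/-! ### Cones and fans -/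

/-- The real vector associated to an integer vector. -/
def zr {n : ℕ} (v : Fin n → ℤ) : Fin n → ℝ := fun i => (v i : ℝ)

/-- A convex rational polyhedral cone in `ℝ^n`. -/
def IsRatCone {n : ℕ} (σ : Set (Fin n → ℝ)) : Prop :=
  ∃ s : Finset (Fin n → ℤ),
    σ = {x | ∃ lam : (Fin n → ℤ) → ℝ, (∀ v, 0 ≤ lam v) ∧ x = ∑ v ∈ s, lam v • zr v}

/-- A cone is strongly convex if `σ ∩ (-σ) = {0}`. -/
def StronglyConvex {n : ℕ} (σ : Set (Fin n → ℝ)) : Prop := σ ∩ (-σ) = {0}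

/-- `τ` is a face of `σ`, cut out by a linear form nonnegative on `σ`. -/
def IsFaceOf {n : ℕ} (τ σ : Set (Fin n → ℝ)) : Prop :=
  ∃ L : (Fin n → ℝ) →ₗ[ℝ] ℝ, (∀ x ∈ σ, 0 ≤ L x) ∧ τ = σ ∩ {x | L x = 0}

/-- A fan in `ℝ^n`: a finite collection of strongly convex rational polyhedral cones,
closed under taking faces, such that the intersection of two cones is a face of each;
we also require that it strictly contains `{0}`. -/
structure Fan (n : ℕ) where
  cones : Set (Set (Fin n → ℝ))
  finite : cones.Finite
  ratCone : ∀ σ ∈ cones, IsRatCone σ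
  stronglyConvex : ∀ σ ∈ cones, StronglyConvex σ
  face_mem : ∀ σ ∈ cones, ∀ τ, IsFaceOf τ σ → τ ∈ cones
  inter_face : ∀ σ ∈ cones, ∀ τ ∈ cones, IsFaceOf (σ ∩ τ) σ
  zero_mem : ({0} : Set (Fin n → ℝ)) ∈ cones
  nontrivial : cones ≠ {({0} : Set (Fin n → ℝ))}

/-- A fan is complete if its cones cover `ℝ^n`. -/
def Fan.Complete {n : ℕ} (F : Fan n) : Prop := ⋃₀ F.cones = Set.univ

/-- A fan is non-singular if each of its cones is spanned by part of a `ℤ`-basis of `ℤ^n`. -/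
def Fan.NonSingular {n : ℕ} (F : Fan n) : Prop :=
  ∀ σ ∈ F.cones, ∃ (b : Module.Basis (Fin n) ℤ (Fin n → ℤ)) (s : Finset (Fin n)),
    σ = {x | ∃ lam : Fin n → ℝ, (∀ i, 0 ≤ lam i) ∧ x = ∑ i ∈ s, lam i • zr (b i)}

/-- The ray (one-dimensional cone) generated by a vector. -/
def ray {n : ℕ} (v : Fin n → ℝ) : Set (Fin n → ℝ) := {x | ∃ t : ℝ, 0 ≤ t ∧ x = t • v}

/-- The cone spanned by the vectors `n_i`, `i ∈ s`. -/
def coneIdx {n r : ℕ} (N : Fin r → Fin n → ℤ) (s : Finset (Fin r)) : Set (Fin n → ℝ) :=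
  {x | ∃ lam : Fin r → ℝ, (∀ i, 0 ≤ lam i) ∧ x = ∑ i ∈ s, lam i • zr (N i)}

/-- A point of `ℝ^n` lying in the lattice `ℤ^n`. -/
def IsLatticePoint {n : ℕ} (x : Fin n → ℝ) : Prop := ∀ i, ∃ m : ℤ, x i = (m : ℝ)

/-- `N 1, …, N r` is the (complete, repetition-free) list of primitive generators of the
one-dimensional cones of the fan `F`. -/
structure IsPrimGens {n r : ℕ} (F : Fan n) (N : Fin r → Fin n → ℤ) : Prop where
  ray_mem : ∀ k, ray (zr (N k)) ∈ F.cones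
  ne_zero : ∀ k, N k ≠ 0
  primitive : ∀ k, ray (zr (N k)) ∩ {x | IsLatticePoint x}
      = {x | ∃ c : ℕ, x = (c : ℝ) • zr (N k)}
  inj : Function.Injective N
  complete : ∀ σ ∈ F.cones, Module.finrank ℝ (Submodule.span ℝ σ) = 1 →
      ∃ k, σ = ray (zr (N k))

/-- Condition (2.9.1): a positive integral relation among the primitive generators. -/
def Cond1 {n r : ℕ} (N : Fin r → Fin n → ℤ) : Prop :=
  ∃ d : Fin r → ℕ, (∀ k, 0 < d k) ∧ ∑ k, (d k : ℤ) • N k = 0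

/-- Condition (2.9.2): the primitive generators span `ℤ^n` over `ℤ`. -/
def Cond2 {n r : ℕ} (N : Fin r → Fin n → ℤ) : Prop :=
  Submodule.span ℤ (Set.range N) = ⊤

/-- The underlying simplicial complex `K_Σ` of a fan. -/
def KC {n r : ℕ} (F : Fan n) (N : Fin r → Fin n → ℤ) : Set (Finset (Fin r)) :=
  {s | coneIdx N s ∈ F.cones}

/-- A primitive set: it spans no cone of the fan, but every proper subset does. -/
def PrimitiveSet {r : ℕ} (K : Set (Finset (Fin r))) (s : Finset (Fin r)) : Prop :=
  s ∉ K ∧ ∀ t ⊂ s, t ∈ K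

/-- `r_min`: the minimal cardinality of a primitive set. -/
def rmin {r : ℕ} (K : Set (Finset (Fin r))) : ℕ :=
  sInf {m | ∃ s : Finset (Fin r), PrimitiveSet K s ∧ s.card = m}

/-- `d_min = min {d_1, …, d_r}`. -/
def dmin {r : ℕ} (D : Fin r → ℕ) : ℕ := sInf (Set.range D)

/-- The stability dimension `d(D,Σ) = 2(r_min − 1) d_min − 2`. -/
def dBound {r : ℕ} (K : Set (Finset (Fin r))) (D : Fin r → ℕ) : ℤ :=
  2 * ((rmin K : ℤ) - 1) * (dmin D : ℤ) - 2

/-- The connectivity bound `C_D(Σ) = 2(r_min − 1) d_min − 1`. -/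
def CBound {r : ℕ} (K : Set (Finset (Fin r))) (D : Fin r → ℕ) : ℤ :=
  2 * ((rmin K : ℤ) - 1) * (dmin D : ℤ) - 1

/-! ### Coordinate subspaces, `U(K)`, `G_Σ` and the toric quotient -/

/-- The coordinate subspace `L_σ ⊆ ℂ^r`. -/
def LSub {r : ℕ} (σ : Finset (Fin r)) : Set (Fin r → ℂ) := {x | ∀ i ∈ σ, x i = 0}

/-- The complement `U(K)` of the coordinate subspace arrangement of type `K`. -/
def UK {r : ℕ} (K : Set (Finset (Fin r))) : Set (Fin r → ℂ) :=
  (⋃ σ ∈ {s : Finset (Fin r) | s ∉ K}, LSub σ)ᶜ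

lemma mem_UK {r : ℕ} {K : Set (Finset (Fin r))} {x : Fin r → ℂ} :
    x ∈ UK K ↔ ∀ σ : Finset (Fin r), σ ∉ K → ∃ i ∈ σ, x i ≠ 0 := by
  constructor
  · intro h σ hσ
    by_contra hc
    push_neg at hc
    exact h (Set.mem_biUnion hσ (fun i hi => hc i hi))
  · intro h hx
    rcases Set.mem_iUnion₂.1 hx with ⟨σ, hσ, hxσ⟩
    rcases h σ hσ with ⟨i, hi, hne⟩
    exact hne (hxσ i hi)

/-- The group `G_Σ` (as a subset of `ℂ^r`). -/
def GSet {n r : ℕ} (N : Fin r → Fin n → ℤ) : Set (Fin r → ℂ) :=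
  {μ | (∀ k, μ k ≠ 0) ∧ ∀ m : Fin n → ℤ, ∏ k, μ k ^ (∑ j, N k j * m j) = 1}

/-- The orbit relation of the `G_Σ`-action on `U(K_Σ)`. -/
def toricRel {n r : ℕ} (N : Fin r → Fin n → ℤ) (K : Set (Finset (Fin r)))
    (x y : ↥(UK K)) : Prop :=
  ∃ μ ∈ GSet N, (fun i => μ i * (x : Fin r → ℂ) i) = (y : Fin r → ℂ)

/-- The toric variety `X_Σ = U(K_Σ)/G_Σ`, as a topological quotient. -/
def XS {n r : ℕ} (N : Fin r → Fin n → ℤ) (K : Set (Finset (Fin r))) : Type :=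
  Quot (toricRel N K)

instance {n r : ℕ} (N : Fin r → Fin n → ℤ) (K : Set (Finset (Fin r))) :
    TopologicalSpace (XS N K) :=
  instTopologicalSpaceQuot

/-- The quotient map `q_Σ : U(K_Σ) → X_Σ`. -/
def qmap {n r : ℕ} (N : Fin r → Fin n → ℤ) (K : Set (Finset (Fin r))) :
    ↥(UK K) → XS N K :=
  Quot.mk (toricRel N K)

/-- `q_Σ` as a continuous map. -/
def qCont {n r : ℕ} (N : Fin r → Fin n → ℤ) (K : Set (Finset (Fin r))) :
    C(↥(UK K), XS N K) :=
  ⟨qmap N K, continuous_quot_mk⟩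

lemma coneIdx_empty {n r : ℕ} (N : Fin r → Fin n → ℤ) :
    coneIdx N (∅ : Finset (Fin r)) = ({0} : Set (Fin n → ℝ)) := by
  ext x
  constructor
  · rintro ⟨lam, -, hx⟩
    simpa using hx
  · intro hx
    exact ⟨0, fun i => le_refl 0, by simpa using hx⟩

lemma empty_mem_KC {n r : ℕ} (F : Fan n) (N : Fin r → Fin n → ℤ) :
    (∅ : Finset (Fin r)) ∈ KC F N := by
  show coneIdx N ∅ ∈ F.cones
  rw [coneIdx_empty]
  exact F.zero_mem

/-- The point `(1,…,1)`. -/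
def onesC {r : ℕ} : Fin r → ℂ := fun _ => 1

lemma ones_mem_UK {r : ℕ} {K : Set (Finset (Fin r))} (h : (∅ : Finset (Fin r)) ∈ K) :
    (onesC : Fin r → ℂ) ∈ UK K := by
  rw [mem_UK]
  intro σ hσ
  rcases Finset.nonempty_iff_ne_empty.2 (fun he : σ = ∅ => hσ (by rw [he]; exact h)) with ⟨i, hi⟩
  exact ⟨i, hi, one_ne_zero⟩

/-- The base point `(1,…,1)` of `U(K_Σ)`. -/
def onesUK {r : ℕ} {K : Set (Finset (Fin r))} (h : (∅ : Finset (Fin r)) ∈ K) : ↥(UK K) :=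
  ⟨onesC, ones_mem_UK h⟩

/-- The base point `[1,…,1]` of `X_Σ`. -/
def baseX {n r : ℕ} (N : Fin r → Fin n → ℤ) (K : Set (Finset (Fin r)))
    (h : (∅ : Finset (Fin r)) ∈ K) : XS N K :=
  qmap N K (onesUK h)



/-! ### Spaces of tuples of monic polynomials -/

/-- The monic polynomial `z^d + a_{d-1} z^{d-1} + ⋯ + a_0` with coefficient data `a`. -/
def toPoly {d : ℕ} (a : Fin d → ℂ) : Polynomial ℂ :=
  Polynomial.X ^ d + ∑ i : Fin d, Polynomial.C (a i) * Polynomial.X ^ (i : ℕ)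

/-- The space `Pol*_D(S¹, X_Σ)` of `r`-tuples of monic polynomials of multidegree `D`
(in coefficient coordinates) such that for every `σ ∉ K` the polynomials `{f_i : i ∈ σ}`
have no common real root. -/
def PolSp {r : ℕ} (K : Set (Finset (Fin r))) (D : Fin r → ℕ) :
    Set (∀ k : Fin r, Fin (D k) → ℂ) :=
  {f | ∀ σ : Finset (Fin r), σ ∉ K → ∀ t : ℝ,
        ∃ k ∈ σ, (toPoly (f k)).eval (t : ℂ) ≠ 0}

lemma polEval_mem_UK {r : ℕ} {K : Set (Finset (Fin r))} {D : Fin r → ℕ}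
    (f : ↥(PolSp K D)) (t : ℝ) :
    (fun k => (toPoly (f.1 k)).eval (t : ℂ)) ∈ UK K :=
  mem_UK.2 fun σ hσ => f.2 σ hσ t

/-! ### Loop spaces and induced maps on homotopy groups -/

/-- The loop space `Ω X = Map*(S¹, X)` with `S¹ = ℝ ∪ {∞}` (the one-point
compactification of `ℝ`), based at `x₀`. -/
def Loop (X : Type*) [TopologicalSpace X] (x₀ : X) : Type _ :=
  {γ : C(OnePoint ℝ, X) // γ OnePoint.infty = x₀}

instance {X : Type*} [TopologicalSpace X] (x₀ : X) : TopologicalSpace (Loop X x₀) :=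
  instTopologicalSpaceSubtype

/-- The constant loop, base point of `Ω X`. -/
def Loop.const {X : Type*} [TopologicalSpace X] (x₀ : X) : Loop X x₀ :=
  ⟨ContinuousMap.const _ x₀, rfl⟩

/-- A based continuous map induces a continuous map of loop spaces. -/
def loopMap {X Y : Type*} [TopologicalSpace X] [TopologicalSpace Y] {x₀ : X} {y₀ : Y}
    (f : C(X, Y)) (hf : f x₀ = y₀) : C(Loop X x₀, Loop Y y₀) where
  toFun γ := ⟨f.comp γ.1, by simp [γ.2, hf]⟩
  continuous_toFun := by
    apply Continuous.subtype_mk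
    exact (ContinuousMap.continuous_postcomp f).comp continuous_subtype_val

/-- The map induced by a continuous map on homotopy groups (`π_q`). -/
def piMap (q : ℕ) {X Y : Type*} [TopologicalSpace X] [TopologicalSpace Y]
    (f : C(X, Y)) (x : X) :
    HomotopyGroup (Fin q) X x → HomotopyGroup (Fin q) Y (f x) :=
  Quotient.map
    (fun p => ⟨f.comp p.1, fun y hy => by
      show f (p.1 y) = f x
      rw [p.2 y hy]⟩)
    (fun p₁ p₂ h => h.elim fun H => ⟨H.compContinuousMap f⟩)

/-- `f` is a homotopy equivalence through dimension `d`: it induces isomorphisms on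
`π_k` for all `k ≤ d` (at every base point). -/
def HomotopyEquivThrough {X Y : Type*} [TopologicalSpace X] [TopologicalSpace Y]
    (f : C(X, Y)) (d : ℤ) : Prop :=
  ∀ (x : X) (k : ℕ), (k : ℤ) ≤ d → Function.Bijective (piMap k f x)

/-- A genuine homotopy equivalence. -/
def IsHtpyEquiv {X Y : Type*} [TopologicalSpace X] [TopologicalSpace Y]
    (f : C(X, Y)) : Prop :=
  ∃ g : C(Y, X), (f.comp g).Homotopic (ContinuousMap.id Y) ∧
    (g.comp f).Homotopic (ContinuousMap.id X)

/-! ### `i_D`, lifts, and stabilization maps -/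

/-- `j : Pol*_D → Ω U(K_Σ)` is a lift of `i_D` through `Ω q_Σ`, i.e. `Ω q_Σ ∘ j = i_D`:
for every tuple `f` and real `t`, the loop `j f` at time `t` lies over the point
`[f_1(t), …, f_r(t)]` of `X_Σ` (and at `∞` over `[1,…,1]`, automatically). -/
def IsLiftOfID {n r : ℕ} (N : Fin r → Fin n → ℤ) (K : Set (Finset (Fin r)))
    (hE : (∅ : Finset (Fin r)) ∈ K) (D : Fin r → ℕ)
    (j : ↥(PolSp K D) → Loop ↥(UK K) (onesUK hE)) : Prop :=
  ∀ (f : ↥(PolSp K D)) (t : ℝ),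
    qmap N K ((j f).1 (t : OnePoint ℝ)) =
      qmap N K ⟨fun k => (toPoly (f.1 k)).eval (t : ℂ), polEval_mem_UK f t⟩

/-- `i : Pol*_D → Ω X_Σ` is the map `i_D` given by evaluation. -/
def IsID {n r : ℕ} (N : Fin r → Fin n → ℤ) (K : Set (Finset (Fin r)))
    (hE : (∅ : Finset (Fin r)) ∈ K) (D : Fin r → ℕ)
    (i : ↥(PolSp K D) → Loop (XS N K) (baseX N K hE)) : Prop :=
  ∀ (f : ↥(PolSp K D)) (t : ℝ),
    (i f).1 (t : OnePoint ℝ) =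
      qmap N K ⟨fun k => (toPoly (f.1 k)).eval (t : ℂ), polEval_mem_UK f t⟩

/-- `φ` is an admissible parameter for the stabilization maps: a homeomorphism of `ℂ`
onto the half plane `{Re < bound}` carrying `ℝ` onto `(-∞, bound)`. -/
def AdmissiblePhi (bound : ℝ) (φ : ℂ → ℂ) : Prop :=
  Continuous φ ∧ Function.Injective φ ∧ IsOpenMap φ ∧
    Set.range φ = {w : ℂ | w.re < bound} ∧
    φ '' {z : ℂ | z.im = 0} = {z : ℂ | z.im = 0 ∧ z.re < bound}

/-- The defining property of the stabilization map
`s_{D,D'}(f)_k = φ(f_k) · (z - x_k)^{d'_k - d_k}`, where `φ(f)` denotes the monic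
polynomial whose roots are the images under `φ` of the roots of `f`. -/
def StabSpec {r : ℕ} (K : Set (Finset (Fin r))) (φ : ℂ → ℂ) (xpt : Fin r → ℂ)
    (D D' : Fin r → ℕ) (s : ↥(PolSp K D) → ↥(PolSp K D')) : Prop :=
  ∀ (f : ↥(PolSp K D)) (k : Fin r),
    toPoly ((s f).1 k) =
      (((toPoly (f.1 k)).roots.map φ).map
        fun α => Polynomial.X - Polynomial.C α).prod
        * (Polynomial.X - Polynomial.C (xpt k)) ^ (D' k - D k)

/-- The general defining property of the map `j_D : Pol*_D → Ω U(K_Σ)`: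
when `∑ d_k n_k = 0` it is a lift of `i_D` through `Ω q_Σ`, and otherwise it is the
composite `j_{D₀} ∘ s_{D,D₀}` for a suitable `D₀ = m₀ D*` as in condition (2.9.1). -/
def IsJD {n r : ℕ} (N : Fin r → Fin n → ℤ) (K : Set (Finset (Fin r)))
    (hE : (∅ : Finset (Fin r)) ∈ K) (D : Fin r → ℕ)
    (j : C(↥(PolSp K D), Loop ↥(UK K) (onesUK hE))) : Prop :=
  ((∑ k, (D k : ℤ) • N k = 0) ∧ IsLiftOfID N K hE D j) ∨
  ((∑ k, (D k : ℤ) • N k ≠ 0) ∧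
    ∃ (dstar : Fin r → ℕ) (m₀ : ℕ),
      (∀ k, 0 < dstar k) ∧ (∑ k, (dstar k : ℤ) • N k = 0) ∧
      (∀ k, D k < m₀ * dstar k) ∧
      ∃ (φ : ℂ → ℂ) (xpt : Fin r → ℂ),
        AdmissiblePhi ((∑ k, D k : ℕ) : ℝ) φ ∧
        (∀ k, ((∑ k, D k : ℕ) : ℝ) < (xpt k).re) ∧ Function.Injective xpt ∧
        ∃ (j₀ : C(↥(PolSp K fun k => m₀ * dstar k), Loop ↥(UK K) (onesUK hE)))
          (s₀ : C(↥(PolSp K D), ↥(PolSp K fun k => m₀ * dstar k))),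
          IsLiftOfID N K hE _ j₀ ∧ StabSpec K φ xpt D _ s₀ ∧ j = j₀.comp s₀)

/-! ### Stabilized (colimit) spaces -/

/-- The multidegree `D + t·e`. -/
def Dt {r : ℕ} (D : Fin r → ℕ) (t : ℕ) : Fin r → ℕ := fun k => D k + t

/-- Carrier of the stabilized space: the disjoint union of the `Pol*_{D+te}`. -/
def ColCar {r : ℕ} (K : Set (Finset (Fin r))) (D : Fin r → ℕ) : Type :=
  Σ t : ℕ, ↥(PolSp K (Dt D t))

instance {r : ℕ} (K : Set (Finset (Fin r))) (D : Fin r → ℕ) :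
    TopologicalSpace (ColCar K D) := by
  unfold ColCar; infer_instance

/-- The identifications generating the colimit along the stabilization maps. -/
def ColRel {r : ℕ} (K : Set (Finset (Fin r))) (D : Fin r → ℕ)
    (s : ∀ t : ℕ, ↥(PolSp K (Dt D t)) → ↥(PolSp K (Dt D (t + 1)))) :
    ColCar K D → ColCar K D → Prop :=
  fun a b => b = ⟨a.1 + 1, s a.1 a.2⟩

/-- The stabilized space `Pol^Σ_{D+∞} = colim_t Pol*_{D+te}(S¹, X_Σ)`. -/
def PolColim {r : ℕ} (K : Set (Finset (Fin r))) (D : Fin r → ℕ)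
    (s : ∀ t : ℕ, ↥(PolSp K (Dt D t)) → ↥(PolSp K (Dt D (t + 1)))) : Type :=
  Quot (ColRel K D s)

instance {r : ℕ} (K : Set (Finset (Fin r))) (D : Fin r → ℕ)
    (s : ∀ t : ℕ, ↥(PolSp K (Dt D t)) → ↥(PolSp K (Dt D (t + 1)))) :
    TopologicalSpace (PolColim K D s) :=
  instTopologicalSpaceQuot

/-- Admissibility of a family of stabilization maps `s_{D+te}`. -/
def AdmissibleStabFamily {r : ℕ} (K : Set (Finset (Fin r))) (D : Fin r → ℕ)
    (s : ∀ t : ℕ, ↥(PolSp K (Dt D t)) → ↥(PolSp K (Dt D (t + 1)))) : Prop :=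
  ∀ t : ℕ, ∃ (φ : ℂ → ℂ) (xpt : Fin r → ℂ),
    AdmissiblePhi ((∑ k, Dt D t k : ℕ) : ℝ) φ ∧
    (∀ k, ((∑ k, Dt D t k : ℕ) : ℝ) < (xpt k).re) ∧ Function.Injective xpt ∧
    StabSpec K φ xpt (Dt D t) (Dt D (t + 1)) (s t)




/-! ### Elementary facts on `toPoly` -/

lemma toPoly_eval {d : ℕ} (a : Fin d → ℂ) (z : ℂ) :
    (toPoly a).eval z = z ^ d + ∑ b : Fin d, a b * z ^ (b : ℕ) := by
  simp [toPoly, Polynomial.eval_finsetSum]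

lemma toPoly_natDegree_lt {d : ℕ} (a : Fin d → ℂ) :
    (∑ i : Fin d, Polynomial.C (a i) * Polynomial.X ^ (i : ℕ)).degree < (d : WithBot ℕ) := by
  apply lt_of_le_of_lt (Polynomial.degree_sum_le _ _)
  rw [Finset.sup_lt_iff (by exact WithBot.bot_lt_coe d)]
  intro i _
  refine lt_of_le_of_lt (Polynomial.degree_C_mul_X_pow_le _ _) ?_
  exact_mod_cast i.2

lemma toPoly_monic {d : ℕ} (a : Fin d → ℂ) : (toPoly a).Monic := by
  unfold toPoly
  exact Polynomial.monic_X_pow_add (toPoly_natDegree_lt a)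

lemma toPoly_natDegree {d : ℕ} (a : Fin d → ℂ) : (toPoly a).natDegree = d := by
  unfold toPoly
  rw [Polynomial.natDegree_add_eq_left_of_degree_lt, Polynomial.natDegree_X_pow]
  rw [Polynomial.degree_X_pow]
  exact toPoly_natDegree_lt a

lemma toPoly_coeff {d : ℕ} (a : Fin d → ℂ) (b : Fin d) : (toPoly a).coeff (b : ℕ) = a b := by
  unfold toPoly
  simp only [Polynomial.coeff_add, Polynomial.coeff_X_pow, Polynomial.finsetSum_coeff,
    Polynomial.coeff_C_mul]
  rw [if_neg (by have := b.2; omega), Finset.sum_eq_single b]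
  · simp
  · intro c _ hc
    rw [if_neg (fun h => hc (Fin.ext h.symm))]; simp
  · simp

lemma toPoly_of_monic {d : ℕ} (p : Polynomial ℂ) (hp : p.Monic) (hd : p.natDegree = d) :
    toPoly (fun b : Fin d => p.coeff b) = p := by
  subst hd
  ext n
  rcases lt_trichotomy n p.natDegree with h | h | h
  · exact toPoly_coeff (fun b : Fin p.natDegree => p.coeff b) ⟨n, h⟩
  · have := (toPoly_monic (fun b : Fin p.natDegree => p.coeff b)).coeff_natDegree
    rw [toPoly_natDegree] at this
    rw [h, this, hp.coeff_natDegree]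
  · rw [Polynomial.coeff_eq_zero_of_natDegree_lt h, Polynomial.coeff_eq_zero_of_natDegree_lt]
    rwa [toPoly_natDegree]

lemma toPoly_injective {d : ℕ} : Function.Injective (toPoly (d := d)) := by
  intro a b h
  funext i
  rw [← toPoly_coeff a i, h, toPoly_coeff]

lemma toPoly_continuous_eval {d : ℕ} (z : ℂ) :
    Continuous (fun a : Fin d → ℂ => (toPoly a).eval z) := by
  simp only [toPoly_eval]
  fun_prop

/-! ### The certificate -/

lemma certificate {d : ℕ} (T : Finset ℝ) (Y : ℝ → ℂ) (hY : ∀ t ∈ T, Y t ≠ 0)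
    (hno : ¬ ∃ a : Fin d → ℂ, ∀ t ∈ T,
      0 < ((toPoly a).eval (t : ℂ) * (starRingEnd ℂ) (Y t)).re) :
    ∃ (S : Finset ℝ) (lam : ℝ → ℝ), S ⊆ T ∧ (∀ t ∈ S, 0 < lam t) ∧ d < S.card ∧
      ∀ b < d, ∑ t ∈ S, (lam t : ℂ) * (t : ℂ) ^ b * Y t = 0 := by
  classical
  -- the affine map
  let L : (Fin d → ℂ) → (T → ℝ) := fun a t =>
    ((toPoly a).eval ((t : ℝ) : ℂ) * (starRingEnd ℂ) (Y t)).re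
  have hLaff : ∀ a a' : Fin d → ℂ, ∀ u v : ℝ, u + v = 1 →
      L (u • a + v • a') = u • L a + v • L a' := by
    intro a a' u v huv
    funext t
    simp only [L, Pi.add_apply, Pi.smul_apply, smul_eq_mul]
    have : (toPoly (u • a + v • a')).eval ((t : ℝ) : ℂ)
        = u * (toPoly a).eval ((t : ℝ) : ℂ) + v * (toPoly a').eval ((t : ℝ) : ℂ) := by
      simp only [toPoly_eval, Pi.add_apply, Pi.smul_apply, Complex.real_smul, mul_add,
        Finset.mul_sum, add_mul, Finset.sum_add_distrib]
      have h1 : ((t : ℝ) : ℂ) ^ d = (u : ℂ) * ((t : ℝ) : ℂ) ^ d + v * ((t : ℝ) : ℂ) ^ d := by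
        rw [← add_mul, ← Complex.ofReal_add, huv]; simp
      simp only [mul_assoc]
      linear_combination h1
    rw [this, add_mul, Complex.add_re, mul_assoc, mul_assoc, Complex.re_ofReal_mul,
      Complex.re_ofReal_mul]
  let C : Set (T → ℝ) := Set.range L
  have hC : Convex ℝ C := by
    rintro _ ⟨a, rfl⟩ _ ⟨a', rfl⟩ u v _ _ huv
    exact ⟨u • a + v • a', hLaff a a' u v huv⟩
  let O : Set (T → ℝ) := {v | ∀ t, 0 < v t}
  have hO : IsOpen O := by
    have : O = Set.pi Set.univ (fun _ => Set.Ioi 0) := by ext v; simp [O]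
    rw [this]
    exact isOpen_set_pi Set.finite_univ (fun _ _ => isOpen_Ioi)
  have hOc : Convex ℝ O := by
    intro v hv w hw a b ha hb hab t
    have h1 := hv t
    have h2 := hw t
    simp only [Pi.add_apply, Pi.smul_apply, smul_eq_mul]
    rcases eq_or_lt_of_le ha with h | h
    · have : b = 1 := by linarith
      subst this; rw [← h]; simpa using h2
    · have := mul_pos h h1
      have := mul_nonneg hb h2.le
      linarith
  have hdisj : Disjoint O C := by
    rw [Set.disjoint_left]
    rintro v hv ⟨a, rfl⟩
    exact hno ⟨a, fun t ht => hv ⟨t, ht⟩⟩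
  obtain ⟨f, u, hfu, huC⟩ := geometric_hahn_banach_open hOc hO hC hdisj
  let mu : T → ℝ := fun t => f (Pi.single t 1)
  have hf : ∀ v : T → ℝ, f v = ∑ t, v t * mu t := by
    intro v
    conv_lhs => rw [pi_eq_sum_univ' v]
    rw [map_sum]
    apply Finset.sum_congr rfl
    intro t _
    rw [map_smul, smul_eq_mul]
  -- signs
  have hu0 : 0 ≤ u := by
    by_contra hneg
    push Not at hneg
    have h1 : Filter.Tendsto (fun ε : ℝ => f (ε • (fun _ => (1:ℝ)))) (nhdsWithin 0 (Set.Ioi 0))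
        (nhds (f ((0:ℝ) • (fun _ => (1:ℝ))))) := by
      apply Filter.Tendsto.mono_left _ nhdsWithin_le_nhds
      apply Continuous.tendsto
      fun_prop
    rw [zero_smul, map_zero] at h1
    have h2 : (0:ℝ) ≤ u := by
      refine le_of_tendsto h1 ?_
      filter_upwards [self_mem_nhdsWithin] with ε hε
      exact (hfu _ (fun t => by simpa using hε)).le
    linarith
  have hmu : ∀ t, mu t ≤ 0 := by
    intro t
    by_contra hpos
    push Not at hpos
    -- take v = 1 + R single
    have h1 : ∀ R : ℝ, 0 ≤ R → f (fun _ => 1) + R * mu t < u := by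
      intro R hR
      have := hfu ((fun _ => 1) + R • Pi.single t 1) (by
        intro s
        simp only [Pi.add_apply, Pi.smul_apply, smul_eq_mul]
        have : 0 ≤ (Pi.single t 1 : T → ℝ) s := by
          by_cases h : s = t
          · subst h; simp
          · simp [h]
        have := mul_nonneg hR this
        linarith)
      rw [map_add, map_smul, smul_eq_mul] at this
      exact this
    have h2 := h1 (|u - f (fun _ => 1)| / mu t) (by positivity)
    rw [div_mul_cancel₀ _ hpos.ne'] at h2
    have := le_abs_self (u - f (fun _ => 1))
    linarith
  -- vanish
  have hvan : ∀ b : Fin d, ∑ t : T, (mu t : ℂ) * ((t : ℝ) : ℂ) ^ (b : ℕ) * Y t = 0 := by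
    intro b
    set w : ℂ := ∑ t : T, (mu t : ℂ) * ((t : ℝ) : ℂ) ^ (b : ℕ) * Y t with hw
    have hlin : ∀ z : ℂ, f (L (Pi.single b z)) = f (L 0) + (z * (starRingEnd ℂ) w).re := by
      intro z
      rw [hf, hf, hw, map_sum, Finset.mul_sum, Complex.re_sum, ← Finset.sum_add_distrib]
      apply Finset.sum_congr rfl
      intro t _
      simp only [L, toPoly_eval, Pi.zero_apply, zero_mul, Finset.sum_const_zero, add_zero, map_mul,
        map_pow, Complex.conj_ofReal]
      rw [Finset.sum_eq_single b (by intro c _ hc; simp [hc]) (by simp)]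
      rw [Pi.single_eq_same, add_mul, Complex.add_re, add_mul]
      congr 1
      rw [mul_comm _ (mu t), ← Complex.re_ofReal_mul]
      congr 1
      ring
    by_contra hne
    have h1 := huC (L (Pi.single b (-(((f (L 0)) + 1 : ℝ) : ℂ) / (starRingEnd ℂ) w))) ⟨_, rfl⟩
    rw [hlin, div_mul_cancel₀ _ (by simpa using hne)] at h1
    rw [← Complex.ofReal_neg, Complex.ofReal_re] at h1
    linarith
  have hmune : ∃ t, mu t ≠ 0 := by
    by_contra hall
    push Not at hall
    have h0 : ∀ v, f v = 0 := by intro v; rw [hf]; simp [hall]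
    have h1 := hfu (fun _ => 1) (fun _ => one_pos)
    have h2 := huC (L 0) ⟨_, rfl⟩
    rw [h0] at h1 h2
    linarith
  -- transfer
  let lam : ℝ → ℝ := fun t => if h : t ∈ T then - mu ⟨t, h⟩ else 0
  let S : Finset ℝ := T.filter (fun t => lam t ≠ 0)
  have hlampos : ∀ t ∈ S, 0 < lam t := by
    intro t ht
    obtain ⟨hT, hne⟩ := Finset.mem_filter.1 ht
    have : 0 ≤ lam t := by
      simp only [lam, hT, dif_pos]
      have := hmu ⟨t, hT⟩
      linarith
    exact lt_of_le_of_ne this (Ne.symm hne)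
  have hsum : ∀ b < d, ∑ t ∈ S, (lam t : ℂ) * (t : ℂ) ^ b * Y t = 0 := by
    intro b hb
    have h1 := hvan ⟨b, hb⟩
    have h2 : ∑ t ∈ S, (lam t : ℂ) * (t : ℂ) ^ b * Y t
        = ∑ t ∈ T, (lam t : ℂ) * (t : ℂ) ^ b * Y t := by
      apply Finset.sum_filter_of_ne
      intro t _ h hl
      rw [hl] at h
      simp at h
    rw [h2, ← Finset.sum_coe_sort]
    rw [← neg_eq_zero, ← h1, ← Finset.sum_neg_distrib]
    apply Finset.sum_congr rfl
    intro t _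
    simp [lam]
  have hSne : S.Nonempty := by
    obtain ⟨t, ht⟩ := hmune
    refine ⟨t, Finset.mem_filter.2 ⟨t.2, ?_⟩⟩
    simpa [lam] using ht
  refine ⟨S, lam, Finset.filter_subset _ _, hlampos, ?_, hsum⟩
  by_contra hcard
  push Not at hcard
  obtain ⟨t0, ht0⟩ := hSne
  -- interpolation
  let q : Polynomial ℂ := ∏ s ∈ S.erase t0, (Polynomial.X - Polynomial.C (s : ℂ))
  have hqdeg : q.natDegree < d := by
    have : q.natDegree = (S.erase t0).card := by
      rw [Polynomial.natDegree_prod_of_monic _ _ (fun s _ => Polynomial.monic_X_sub_C _)]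
      simp
    rw [this, Finset.card_erase_of_mem ht0]
    have := Finset.card_pos.2 ⟨t0, ht0⟩
    omega
  have h1 : ∑ t ∈ S, (lam t : ℂ) * q.eval (t : ℂ) * Y t = 0 := by
    have : ∀ t : ℝ, (lam t : ℂ) * q.eval (t : ℂ) * Y t
        = ∑ b ∈ Finset.range d, q.coeff b * ((lam t : ℂ) * (t : ℂ) ^ b * Y t) := by
      intro t
      rw [Polynomial.eval_eq_sum_range' hqdeg, Finset.mul_sum, Finset.sum_mul]
      apply Finset.sum_congr rfl
      intro b _
      ring
    simp only [this]
    rw [Finset.sum_comm]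
    apply Finset.sum_eq_zero
    intro b hb
    rw [← Finset.mul_sum, hsum b (Finset.mem_range.1 hb), mul_zero]
  rw [Finset.sum_eq_single t0] at h1
  · have hl := hlampos t0 ht0
    have hq : q.eval (t0 : ℂ) ≠ 0 := by
      rw [Polynomial.eval_prod, Finset.prod_ne_zero_iff]
      intro s hs
      simp only [Polynomial.eval_sub, Polynomial.eval_X, Polynomial.eval_C]
      rw [sub_ne_zero]
      intro h
      exact (Finset.mem_erase.1 hs).1 (Complex.ofReal_injective h).symm
    have hYt := hY t0 (Finset.filter_subset _ _ ht0)
    have hl' : (lam t0 : ℂ) ≠ 0 := by exact_mod_cast hl.ne'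
    exact mul_ne_zero (mul_ne_zero hl' hq) hYt h1
  · intro t ht hne
    have : q.eval (t : ℂ) = 0 := by
      rw [Polynomial.eval_prod]
      apply Finset.prod_eq_zero (Finset.mem_erase.2 ⟨hne, ht⟩)
      simp
    rw [this]; ring
  · intro h; exact absurd ht0 h



/-! ### Genericity -/

/-- The condition allowing the `k`-th coordinate to be replaced by a polynomial of degree `d`. -/
def GoodP {r : ℕ} (K : Set (Finset (Fin r))) (e : Fin r → ℕ) (k : Fin r) (d : ℕ)
    (y : ∀ j, Fin (e j) → ℂ) : Prop :=
  ∃ a : Fin d → ℂ, ∀ t : ℝ, ∀ σ : Finset (Fin r), σ ∉ K → k ∈ σ →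
    (∀ j ∈ σ, j ≠ k → (toPoly (y j)).eval (t : ℂ) = 0) →
    0 < ((toPoly a).eval (t : ℂ) * (starRingEnd ℂ) ((toPoly (y k)).eval (t : ℂ))).re

/-- Hankel matrix. -/
def hankel {J : ℕ} (d : ℕ) (t lam : Fin J → ℝ) : Matrix (Fin d) (Fin d) ℂ :=
  fun b b' => ∑ i, (lam i : ℂ) * (t i : ℂ) ^ ((b : ℕ) + (b' : ℕ))

lemma hankel_det_ne {J d : ℕ} (t lam : Fin J → ℝ) (ht : Function.Injective t)
    (hl : ∀ i, 0 < lam i) (hJ : d ≤ J) : (hankel d t lam).det ≠ 0 := by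
  intro h0
  obtain ⟨v, hv, hv0⟩ := Matrix.exists_mulVec_eq_zero_iff.2 h0
  let p : Polynomial ℂ := ∑ b : Fin d, Polynomial.C (v b) * Polynomial.X ^ (b : ℕ)
  have hpe : ∀ z : ℂ, p.eval z = ∑ b : Fin d, v b * z ^ (b : ℕ) := by
    intro z; simp [p, Polynomial.eval_finsetSum]
  have hpd : p.degree < (d : WithBot ℕ) := toPoly_natDegree_lt v
  have h1 : ∑ i, (lam i : ℂ) * ((starRingEnd ℂ) (p.eval (t i : ℂ)) * p.eval (t i : ℂ)) = 0 := by
    have : ∑ b, (starRingEnd ℂ) (v b) * ((hankel d t lam).mulVec v) b = 0 := by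
      simp [hv0]
    rw [← this]
    simp only [Matrix.mulVec, dotProduct, hankel, Finset.sum_mul, Finset.mul_sum, hpe, map_sum,
      map_mul, map_pow, Complex.conj_ofReal]
    conv_rhs =>
      rw [Finset.sum_congr rfl (fun b _ => Finset.sum_comm)]
      rw [Finset.sum_comm]
    apply Finset.sum_congr rfl
    intro i _
    rw [Finset.sum_comm]
    apply Finset.sum_congr rfl
    intro b _
    apply Finset.sum_congr rfl
    intro b' _
    ring
  have h2 : ∀ i, p.eval (t i : ℂ) = 0 := by
    have h3 : ∑ i, lam i * Complex.normSq (p.eval (t i : ℂ)) = 0 := by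
      have : ((∑ i, lam i * Complex.normSq (p.eval (t i : ℂ)) : ℝ) : ℂ) = 0 := by
        rw [← h1]
        push_cast
        apply Finset.sum_congr rfl
        intro i _
        rw [Complex.normSq_eq_conj_mul_self]
      exact_mod_cast this
    rw [Finset.sum_eq_zero_iff_of_nonneg
      (fun i _ => mul_nonneg (hl i).le (Complex.normSq_nonneg _))] at h3
    intro i
    have := h3 i (Finset.mem_univ _)
    rcases mul_eq_zero.1 this with h | h
    · exact absurd h (hl i).ne'
    · exact Complex.normSq_eq_zero.1 h
  have h3 : p = 0 := by
    apply Polynomial.eq_zero_of_degree_lt_of_eval_index_eq_zero (s := Finset.univ)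
      (v := fun i : Fin J => (t i : ℂ))
    · intro i _ j _ hij
      exact ht (Complex.ofReal_injective hij)
    · refine lt_of_lt_of_le hpd ?_
      simp only [Finset.card_univ, Fintype.card_fin]
      exact_mod_cast hJ
    · intro i _; exact h2 i
  apply hv
  funext b
  have : p.coeff (b : ℕ) = v b := by
    have h := toPoly_coeff v b
    unfold toPoly at h
    rw [Polynomial.coeff_add, Polynomial.coeff_X_pow, if_neg (by have := b.2; omega),
      zero_add] at h
    exact h
  rw [← this, h3]; simp

/-- A family of polynomials with smooth coefficients. -/
def CoefSm {E : Type*} [NormedAddCommGroup E] [NormedSpace ℝ E] (p : E → Polynomial ℂ) : Prop :=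
  ∀ b, ContDiff ℝ 1 (fun x => (p x).coeff b)

lemma CoefSm.mul {E : Type*} [NormedAddCommGroup E] [NormedSpace ℝ E] {p q : E → Polynomial ℂ}
    (hp : CoefSm p) (hq : CoefSm q) : CoefSm (fun x => p x * q x) := by
  intro b
  simp only [Polynomial.coeff_mul]
  exact ContDiff.sum (fun i _ => (hp i.1).mul (hq i.2))

lemma CoefSm.prod {E : Type*} [NormedAddCommGroup E] [NormedSpace ℝ E] {ι : Type*}
    (s : Finset ι) {p : ι → E → Polynomial ℂ}
    (hp : ∀ i ∈ s, CoefSm (p i)) : CoefSm (fun x => ∏ i ∈ s, p i x) := by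
  induction s using Finset.induction_on with
  | empty => intro b; simpa using contDiff_const
  | insert i s hi ih =>
    simp only [Finset.prod_insert hi]
    exact (hp i (Finset.mem_insert_self _ _)).mul
      (ih (fun j hj => hp j (Finset.mem_insert_of_mem hj)))

lemma contDiffAt_det {E : Type*} [NormedAddCommGroup E] [NormedSpace ℝ E] {d : ℕ}
    {A : E → Matrix (Fin d) (Fin d) ℂ} (hA : ∀ i j, ContDiff ℝ 1 (fun x => A x i j)) :
    ContDiff ℝ 1 (fun x => (A x).det) := by
  simp only [Matrix.det_apply']
  apply ContDiff.sum
  intro σ _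
  apply ContDiff.mul contDiff_const
  apply contDiff_prod
  intro i _
  exact hA _ _

section Param
variable {r : ℕ} (e : Fin r → ℕ) (k : Fin r) (d J : ℕ) (s : Fin J → Finset (Fin r))

/-- codimension in the `j`-th coordinate -/
def nn (j : Fin r) : ℕ := if j = k then d else (Finset.univ.filter (fun i => j ∈ s i)).card

/-- parameter space -/
abbrev ParE : Type := (Fin J → ℝ) × (Fin J → ℝ) × (∀ j, Fin (e j - nn k d J s j) → ℂ)

/-- right-hand side of the linear system -/
def RR (j : Fin r) (x : ParE e k d J s) (b : Fin d) : ℂ :=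
  ∑ i, (x.2.1 i : ℂ) * (x.1 i : ℂ) ^ (b : ℕ) *
    ((x.1 i : ℂ) ^ (e j) + ∑ c, x.2.2 j c * (x.1 i : ℂ) ^ ((c : ℕ) + d))

/-- the parametrization of the bad set -/
def Psi (x : ParE e k d J s) (j : Fin r) (b : Fin (e j)) : ℂ :=
  if j = k then
    (if hb : (b : ℕ) < d then
      - ((hankel d x.1 x.2.1).det)⁻¹ * (hankel d x.1 x.2.1).cramer (RR e k d J s j x) ⟨b, hb⟩
    else if h : (b : ℕ) - d < e j - nn k d J s j then x.2.2 j ⟨(b : ℕ) - d, h⟩ else 0)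
  else
    ((∏ i ∈ Finset.univ.filter (fun i => j ∈ s i),
      (Polynomial.X - Polynomial.C (x.1 i : ℂ))) * toPoly (x.2.2 j)).coeff (b : ℕ)

lemma hankel_smooth (b b' : Fin d) :
    ContDiff ℝ 1 (fun x : ParE e k d J s => hankel d x.1 x.2.1 b b') := by
  unfold hankel
  apply ContDiff.sum
  intro i _
  have h1 : ContDiff ℝ 1 (fun x : ParE e k d J s => (x.1 i : ℂ)) :=
    Complex.ofRealCLM.contDiff.comp (by fun_prop)
  have h2 : ContDiff ℝ 1 (fun x : ParE e k d J s => (x.2.1 i : ℂ)) :=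
    Complex.ofRealCLM.contDiff.comp (by fun_prop)
  exact h2.mul (h1.pow _)

lemma hh_smooth (j : Fin r) (c : Fin (e j - nn k d J s j)) :
    ContDiff ℝ 1 (fun x : ParE e k d J s => x.2.2 j c) := by
  have h1 : ContDiff ℝ 1 (fun x : ParE e k d J s => x.2.2) := by fun_prop
  exact contDiff_pi.1 (contDiff_pi.1 h1 j) c

lemma RR_smooth (j : Fin r) (b : Fin d) :
    ContDiff ℝ 1 (fun x : ParE e k d J s => RR e k d J s j x b) := by
  unfold RR
  apply ContDiff.sum
  intro i _
  have h1 : ContDiff ℝ 1 (fun x : ParE e k d J s => (x.1 i : ℂ)) :=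
    Complex.ofRealCLM.contDiff.comp (by fun_prop)
  have h2 : ContDiff ℝ 1 (fun x : ParE e k d J s => (x.2.1 i : ℂ)) :=
    Complex.ofRealCLM.contDiff.comp (by fun_prop)
  refine (h2.mul (h1.pow _)).mul ((h1.pow _).add (ContDiff.sum fun c _ => ?_))
  exact ContDiff.mul (hh_smooth e k d J s j c) (h1.pow _)

lemma Psi_smooth (x : ParE e k d J s) (hx : (hankel d x.1 x.2.1).det ≠ 0) :
    ContDiffAt ℝ 1 (Psi e k d J s) x := by
  rw [contDiffAt_pi]
  intro j
  rw [contDiffAt_pi]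
  intro b
  unfold Psi
  by_cases hj : j = k
  · simp only [if_pos hj]
    by_cases hb : (b : ℕ) < d
    · simp only [dif_pos hb]
      have h1 : ContDiff ℝ 1 (fun x : ParE e k d J s => (hankel d x.1 x.2.1).det) :=
        contDiffAt_det (fun i j => hankel_smooth e k d J s i j)
      have h2 : ContDiff ℝ 1 (fun x : ParE e k d J s =>
          (hankel d x.1 x.2.1).cramer (RR e k d J s j x) ⟨b, hb⟩) := by
        simp only [Matrix.cramer_apply]
        apply contDiffAt_det
        intro i i'
        simp only [Matrix.updateCol_apply]
        split_ifs
        · exact RR_smooth e k d J s j i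
        · exact hankel_smooth e k d J s i i'
      exact ((h1.contDiffAt.inv hx).neg).mul h2.contDiffAt
    · simp only [dif_neg hb]
      by_cases h : (b : ℕ) - d < e j - nn k d J s j
      · simp only [dif_pos h]
        exact (hh_smooth e k d J s j _).contDiffAt
      · simp only [dif_neg h]
        exact contDiffAt_const
  · simp only [if_neg hj]
    apply ContDiff.contDiffAt
    refine (CoefSm.mul (E := ParE e k d J s) ?_ ?_) (b : ℕ)
    · apply CoefSm.prod
      intro i _ c
      simp only [Polynomial.coeff_sub, Polynomial.coeff_C]
      apply ContDiff.sub contDiff_const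
      split_ifs
      · exact Complex.ofRealCLM.contDiff.comp (by fun_prop)
      · exact contDiff_const
    · intro c
      simp only [toPoly, Polynomial.coeff_add, Polynomial.finsetSum_coeff,
        Polynomial.coeff_C_mul]
      apply ContDiff.add contDiff_const
      apply ContDiff.sum
      intro i _
      exact ContDiff.mul (hh_smooth e k d J s j i) contDiff_const

lemma ParE_finrank :
    Module.finrank ℝ (ParE e k d J s) = J + (J + ∑ j, (e j - nn k d J s j) * 2) := by
  rw [Module.finrank_prod, Module.finrank_prod, Module.finrank_fin_fun,
    Module.finrank_pi_fintype]
  congr 2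
  apply Finset.sum_congr rfl
  intro j _
  rw [Module.finrank_pi_fintype]
  simp

end Param



lemma bad_param {r : ℕ} (K : Set (Finset (Fin r))) (e : Fin r → ℕ) (k : Fin r) (d : ℕ)
    (ρ : ℕ) (hρ : 2 ≤ ρ) (hK : ∀ σ : Finset (Fin r), σ ∉ K → ρ ≤ σ.card) (hd : d ≤ e k)
    (y : ∀ j, Fin (e j) → ℂ) (hy : y ∈ PolSp K e) (hbad : ¬ GoodP K e k d y) :
    ∃ (J : ℕ) (s : Fin J → Finset (Fin r)), d < J ∧ (∀ i, s i ∉ K ∧ k ∈ s i) ∧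
      (∀ j, nn k d J s j ≤ e j) ∧
      ∃ x : ParE e k d J s, (hankel d x.1 x.2.1).det ≠ 0 ∧ Psi e k d J s x = y := by
  -- the finite set of relevant points
  let P : ℝ → Finset (Fin r) → Prop := fun t σ => σ ∉ K ∧ k ∈ σ ∧
    ∀ j ∈ σ, j ≠ k → (toPoly (y j)).eval (t : ℂ) = 0
  have hfin : {t : ℝ | ∃ σ, P t σ}.Finite := by
    have h1 : (⋃ j : Fin r, {t : ℝ | (toPoly (y j)).IsRoot (t : ℂ)}).Finite := by
      apply Set.finite_iUnion
      intro j
      have h2 : {z : ℂ | (toPoly (y j)).IsRoot z}.Finite :=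
        Polynomial.finite_setOfPred_isRoot (toPoly_monic _).ne_zero
      exact h2.preimage (Complex.ofReal_injective.injOn)
    refine h1.subset ?_
    rintro t ⟨σ, hσ, hk, h⟩
    have hc := hK σ hσ
    have : 0 < (σ.erase k).card := by rw [Finset.card_erase_of_mem hk]; omega
    obtain ⟨j, hj⟩ := Finset.card_pos.1 this
    rw [Finset.mem_erase] at hj
    exact Set.mem_iUnion.2 ⟨j, h j hj.2 hj.1⟩
  let T : Finset ℝ := hfin.toFinset
  have hT : ∀ t, t ∈ T ↔ ∃ σ, P t σ := by intro t; simp [T]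
  let Y : ℝ → ℂ := fun t => (toPoly (y k)).eval (t : ℂ)
  have hY : ∀ t ∈ T, Y t ≠ 0 := by
    intro t ht
    obtain ⟨σ, hσ, hk, h⟩ := (hT t).1 ht
    obtain ⟨j, hj, hne⟩ := hy σ hσ t
    by_cases hjk : j = k
    · subst hjk; exact hne
    · exact absurd (h j hj hjk) hne
  obtain ⟨S, lam, hST, hlam, hcard, hsum⟩ := certificate (d := d) T Y hY (by
    rintro ⟨a, ha⟩
    refine hbad ⟨a, fun t σ hσ hk h => ha t ((hT t).2 ⟨σ, hσ, hk, h⟩)⟩)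
  let ee := S.equivFin.symm
  let tt : Fin S.card → ℝ := fun i => (ee i : ℝ)
  have htt : Function.Injective tt := Subtype.val_injective.comp ee.injective
  have httS : ∀ i, tt i ∈ S := fun i => (ee i).2
  have hch : ∀ i, ∃ σ, P (tt i) σ := fun i => (hT _).1 (hST (httS i))
  choose s hs using hch
  have hsumf : ∀ f : ℝ → ℂ, ∑ i, f (tt i) = ∑ t ∈ S, f t := by
    intro f
    rw [← Finset.sum_coe_sort S]
    exact Equiv.sum_comp ee (fun t : S => f t)
  let A : Fin r → Finset (Fin S.card) := fun j => Finset.univ.filter (fun i => j ∈ s i)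
  let pr : Fin r → Polynomial ℂ := fun j => ∏ i ∈ A j, (Polynomial.X - Polynomial.C (tt i : ℂ))
  have hprm : ∀ j, (pr j).Monic := fun j =>
    Polynomial.monic_prod_of_monic _ _ (fun i _ => Polynomial.monic_X_sub_C _)
  have hprd : ∀ j, (pr j).natDegree = (A j).card := by
    intro j
    rw [Polynomial.natDegree_prod_of_monic _ _ (fun i _ => Polynomial.monic_X_sub_C _)]
    simp
  have hdvd : ∀ j, j ≠ k → pr j ∣ toPoly (y j) := by
    intro j hj
    apply Finset.prod_dvd_of_coprime
    · intro i _ i' _ hne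
      exact Polynomial.pairwise_coprime_X_sub_C
        (s := fun i => (tt i : ℂ)) (Complex.ofReal_injective.comp htt) hne
    · intro i hi
      rw [Polynomial.dvd_iff_isRoot]
      exact (hs i).2.2 j (Finset.mem_filter.1 hi).2 hj
  choose q hq using hdvd
  have hqm : ∀ j hj, (q j hj).Monic := by
    intro j hj
    have h1 := toPoly_monic (y j)
    rw [hq j hj] at h1
    exact (hprm j).of_mul_monic_left h1
  have hqd : ∀ j hj, (A j).card + (q j hj).natDegree = e j := by
    intro j hj
    rw [← hprd j, ← (hprm j).natDegree_mul (hqm j hj), ← hq j hj, toPoly_natDegree]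
  have hnn : ∀ j, j ≠ k → nn k d S.card s j = (A j).card := by
    intro j hj; simp [nn, hj, A]
  have hnk : nn k d S.card s k = d := by simp [nn]
  refine ⟨S.card, s, hcard, fun i => ⟨(hs i).1, (hs i).2.1⟩, ?_, ?_⟩
  · intro j
    by_cases hj : j = k
    · subst hj; rw [hnk]; exact hd
    · rw [hnn j hj, ← hqd j hj]; omega
  let h : ∀ j, Fin (e j - nn k d S.card s j) → ℂ := fun j c =>
    if hj : j = k then (if hc : (c : ℕ) + d < e j then y j ⟨(c : ℕ) + d, hc⟩ else 0)
    else (q j hj).coeff c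
  let x : ParE e k d S.card s := (tt, fun i => lam (tt i), h)
  have hdet : (hankel d x.1 x.2.1).det ≠ 0 :=
    hankel_det_ne _ _ htt (fun i => hlam _ (httS i)) hcard.le
  refine ⟨x, hdet, ?_⟩
  funext j b
  unfold Psi
  by_cases hj : j = k
  · rw [if_pos hj]
    subst hj
    split_ifs with hb hc
    · -- the linear system
      have hlow : (hankel d x.1 x.2.1).mulVec (fun b : Fin d => y j ⟨b, by omega⟩)
          = - RR e j d S.card s j x := by
        funext b'
        rw [Pi.neg_apply, ← add_eq_zero_iff_eq_neg]
        rw [← hsum b' b'.2, ← hsumf (fun t => (lam t : ℂ) * (t : ℂ) ^ (b' : ℕ) * Y t)]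
        simp only [Matrix.mulVec, dotProduct, hankel, RR, Finset.sum_mul]
        rw [Finset.sum_comm, ← Finset.sum_add_distrib]
        apply Finset.sum_congr rfl
        intro i _
        simp only [x, Y, toPoly_eval]
        have hsplit : ∑ b : Fin (e j), y j b * (tt i : ℂ) ^ (b : ℕ)
            = ∑ b : Fin d, y j ⟨b, by omega⟩ * (tt i : ℂ) ^ (b : ℕ)
              + ∑ c : Fin (e j - nn j d S.card s j), h j c * (tt i : ℂ) ^ ((c : ℕ) + d) := by
          let f : ℕ → ℂ := fun b => if hb : b < e j then y j ⟨b, hb⟩ * (tt i : ℂ) ^ b else 0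
          have e1 : ∑ b : Fin (e j), y j b * (tt i : ℂ) ^ (b : ℕ)
              = ∑ b ∈ Finset.range (e j), f b := by
            rw [Finset.sum_range]
            apply Finset.sum_congr rfl
            intro b _
            simp [f]
          have e2 : ∑ b : Fin d, y j ⟨b, by omega⟩ * (tt i : ℂ) ^ (b : ℕ)
              = ∑ b ∈ Finset.range d, f b := by
            rw [Finset.sum_range]
            apply Finset.sum_congr rfl
            intro b _
            simp only [f]
            rw [dif_pos]
          have e3 : ∑ c : Fin (e j - nn j d S.card s j), h j c * (tt i : ℂ) ^ ((c : ℕ) + d)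
              = ∑ c ∈ Finset.range (e j - d), f (d + c) := by
            rw [Finset.sum_range]
            apply Fintype.sum_equiv (finCongr (by rw [hnk]))
            intro c
            have hc := lt_of_lt_of_eq c.2 (congrArg (fun z => e j - z) hnk)
            have hc' : (c : ℕ) + d < e j := by omega
            have hc'' : d + (c : ℕ) < e j := by omega
            simp only [f, h, finCongr_apply, Fin.val_cast, dif_pos, hc', hc'', add_comm d]
          rw [e1, e2, e3, ← Finset.sum_range_add_sum_Ico f hd, Finset.sum_Ico_eq_sum_range]
        rw [hsplit]
        have e4 : ∑ b : Fin d, (lam (tt i) : ℂ) * (tt i : ℂ) ^ ((b' : ℕ) + (b : ℕ)) *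
              y j ⟨b, by omega⟩
            = (lam (tt i) : ℂ) * (tt i : ℂ) ^ (b' : ℕ) *
              ∑ b : Fin d, y j ⟨b, by omega⟩ * (tt i : ℂ) ^ (b : ℕ) := by
          rw [Finset.mul_sum]
          apply Finset.sum_congr rfl
          intro b _
          rw [pow_add]; ring
        rw [e4]
        ring
      have h1 := Matrix.mulVec_cramer (hankel d x.1 x.2.1) (RR e j d S.card s j x)
      have h2 : (hankel d x.1 x.2.1).mulVec ((hankel d x.1 x.2.1).cramer (RR e j d S.card s j x)
          + (hankel d x.1 x.2.1).det • (fun b : Fin d => y j ⟨b, by omega⟩)) = 0 := by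
        rw [Matrix.mulVec_add, h1, Matrix.mulVec_smul, hlow]
        simp
      have h3 := Matrix.eq_zero_of_mulVec_eq_zero hdet h2
      have h4 := congrFun h3 ⟨b, hb⟩
      simp only [Pi.add_apply, Pi.smul_apply, smul_eq_mul, Pi.zero_apply] at h4
      rw [add_eq_zero_iff_eq_neg] at h4
      rw [h4]
      field_simp
    · have hb' : (b : ℕ) - d + d = b := by omega
      simp only [x, h]
      rw [dif_pos trivial, dif_pos (by omega)]
      congr 1
      exact Fin.ext hb'
    · exfalso
      rw [hnk] at hc
      have := b.2
      omega
  · rw [if_neg hj]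
    have : toPoly (h j) = q j hj := by
      simp only [h, dif_neg hj]
      apply toPoly_of_monic _ (hqm j hj)
      rw [hnn j hj, ← hqd j hj]
      omega
    simp only [x]
    rw [this]
    have h2 := hq j hj
    rw [← toPoly_coeff (y j) b, h2]

/-- Generic translates of a low-dimensional family are good. -/
theorem generic {r : ℕ} (K : Set (Finset (Fin r))) (e : Fin r → ℕ) (k : Fin r) (d : ℕ)
    (ρ : ℕ) (hρ : 2 ≤ ρ) (hK : ∀ σ : Finset (Fin r), σ ∉ K → ρ ≤ σ.card) (hd : d ≤ e k)
    {m : ℕ} (hm : m < 2 * (ρ - 1) * d)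
    (g : (Fin m → ℝ) → (∀ j, Fin (e j) → ℂ)) (hg : ContDiff ℝ 1 g) :
    Dense {w : ∀ j, Fin (e j) → ℂ | ∀ x, g x + w ∈ PolSp K e → GoodP K e k d (g x + w)} := by
  let I : Type := Σ J : ℕ, (Fin J → Finset (Fin r))
  let OK : I → Prop := fun p => d < p.1 ∧ (∀ i, p.2 i ∉ K ∧ k ∈ p.2 i) ∧
      (∀ j, nn k d p.1 p.2 j ≤ e j)
  let W : {p : I // OK p} → Set (∀ j, Fin (e j) → ℂ) := fun p =>
    (fun z : (Fin m → ℝ) × ParE e k d p.1.1 p.1.2 => Psi e k d p.1.1 p.1.2 z.2 - g z.1) ''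
      {z | (hankel d z.2.1 z.2.2.1).det ≠ 0}
  have hfr : Module.finrank ℝ (∀ j, Fin (e j) → ℂ) = ∑ j, e j * 2 := by
    rw [Module.finrank_pi_fintype]
    apply Finset.sum_congr rfl
    intro j _
    rw [Module.finrank_pi_fintype]
    simp
  have hpos : 0 < Module.finrank ℝ (∀ j, Fin (e j) → ℂ) := by
    rw [hfr]
    apply Finset.sum_pos'
    · intros; positivity
    · refine ⟨k, Finset.mem_univ _, ?_⟩
      have : 0 < d := by
        rcases Nat.eq_zero_or_pos d with h | h
        · subst h; simp at hm
        · exact h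
      omega
  have hW : dimH (⋃ p, W p) < Module.finrank ℝ (∀ j, Fin (e j) → ℂ) := by
    have : dimH (⋃ p, W p) ≤ ((Module.finrank ℝ (∀ j, Fin (e j) → ℂ) - 1 : ℕ) : ENNReal) := by
      rw [dimH_iUnion]
      apply iSup_le
      rintro ⟨⟨J, s⟩, hJ, hs, hn⟩
      have h1 : dimH (W ⟨⟨J, s⟩, hJ, hs, hn⟩) ≤
          dimH (Set.univ : Set ((Fin m → ℝ) × ParE e k d J s)) := by
        refine le_trans ?_ (dimH_mono (Set.subset_univ
          {z : (Fin m → ℝ) × ParE e k d J s | (hankel d z.2.1 z.2.2.1).det ≠ 0}))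
        apply dimH_image_le_of_locally_lipschitzOn
        intro z hz
        have hsm : ContDiffAt ℝ 1 (fun z : (Fin m → ℝ) × ParE e k d J s =>
            Psi e k d J s z.2 - g z.1) z := by
          apply ContDiffAt.sub
          · exact (Psi_smooth e k d J s z.2 hz).comp z contDiffAt_snd
          · exact (hg.comp contDiff_fst).contDiffAt
        obtain ⟨C, t, ht, hL⟩ := hsm.exists_lipschitzOnWith
        exact ⟨C, t, mem_nhdsWithin_of_mem_nhds ht, hL⟩
      refine h1.trans ?_
      rw [Real.dimH_univ_eq_finrank]
      rw [Module.finrank_prod, ParE_finrank, Module.finrank_fin_fun, hfr]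
      have hsumn : J * (ρ - 1) + d ≤ ∑ j, nn k d J s j := by
        rw [← Finset.add_sum_erase _ _ (Finset.mem_univ k)]
        have e1 : nn k d J s k = d := by simp [nn]
        have e2 : ∑ j ∈ Finset.univ.erase k, nn k d J s j
            = ∑ i, ((s i).erase k).card := by
          have : ∀ j ∈ Finset.univ.erase k, nn k d J s j
              = ∑ i, if j ∈ s i then 1 else 0 := by
            intro j hj
            rw [nn, if_neg (Finset.mem_erase.1 hj).1, Finset.card_filter]
          rw [Finset.sum_congr rfl this, Finset.sum_comm]
          apply Finset.sum_congr rfl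
          intro i _
          rw [← Finset.card_filter]
          congr 1
          ext j
          simp [and_comm]
        rw [e1, e2]
        have e3 : ∑ i : Fin J, (ρ - 1) ≤ ∑ i, ((s i).erase k).card := by
          apply Finset.sum_le_sum
          intro i _
          rw [Finset.card_erase_of_mem (hs i).2]
          have := hK _ (hs i).1
          omega
        simp only [Finset.sum_const, Finset.card_univ, Fintype.card_fin, smul_eq_mul] at e3
        omega
      have hsplit : ∑ j, (e j - nn k d J s j) * 2 + (∑ j, nn k d J s j) * 2 = ∑ j, e j * 2 := by
        rw [Finset.sum_mul, ← Finset.sum_add_distrib]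
        apply Finset.sum_congr rfl
        intro j _
        have : nn k d J s j ≤ e j := hn j
        omega
      have hJ' : d < J := hJ
      have hmain : m + 2 * J + 1 ≤ 2 * (J * (ρ - 1) + d) := by
        obtain ⟨u, rfl⟩ : ∃ u, ρ = u + 2 := ⟨ρ - 2, by omega⟩
        have : u + 2 - 1 = u + 1 := by omega
        rw [this] at hm ⊢
        have : d * u ≤ J * u := Nat.mul_le_mul_right _ hJ.le
        nlinarith
      have : m + (J + (J + ∑ j, (e j - nn k d J s j) * 2)) ≤ ∑ j, e j * 2 - 1 := by
        omega
      exact_mod_cast this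
    refine lt_of_le_of_lt this ?_
    exact_mod_cast Nat.sub_lt hpos one_pos
  refine (dense_compl_of_dimH_lt_finrank hW).mono ?_
  intro w hw x hx
  by_contra hbad
  apply hw
  obtain ⟨J, s, hJ, hs, hn, z, hz, hzy⟩ := bad_param K e k d ρ hρ hK hd _ hx hbad
  refine Set.mem_iUnion.2 ⟨⟨⟨J, s⟩, hJ, hs, hn⟩, (x, z), hz, ?_⟩
  simp only
  rw [hzy]
  simp



/-! ### Rational functions on the circle -/

lemma real_add_ne {w : ℂ} (hw : w.im ≠ 0) (t : ℝ) : (t : ℂ) + w ≠ 0 := by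
  intro h
  apply hw
  have := congrArg Complex.im h
  simpa using this

/-- the function `1/(t+w)` -/
def u0 (w : ℂ) : OnePoint ℝ → ℂ := fun p => p.elim 0 (fun t => ((t : ℂ) + w)⁻¹)

lemma u0_coe (w : ℂ) (t : ℝ) : u0 w (t : OnePoint ℝ) = ((t : ℂ) + w)⁻¹ := rfl
lemma u0_infty (w : ℂ) : u0 w OnePoint.infty = 0 := rfl

lemma u0_continuous {w : ℂ} (hw : w.im ≠ 0) : Continuous (u0 w) := by
  rw [OnePoint.continuous_iff]
  constructor
  · rw [u0_infty]
    simp only [u0_coe]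
    rw [Filter.coclosedCompact_eq_cocompact]
    have h1 : Filter.Tendsto (fun t : ℝ => (t : ℂ) + w) (Filter.cocompact ℝ)
        (Filter.cocompact ℂ) := by
      have h2 : Topology.IsClosedEmbedding (fun t : ℝ => (t : ℂ) + w) :=
        (Homeomorph.addRight w).isClosedEmbedding.comp Complex.isometry_ofReal.isClosedEmbedding
      exact h2.tendsto_cocompact
    rw [← Metric.cobounded_eq_cocompact (α := ℂ)] at h1
    exact Filter.tendsto_inv₀_cobounded.comp h1
  · simp only [u0_coe]
    exact Continuous.inv₀ (by fun_prop) (real_add_ne hw)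

/-- the function `t/(t+w)` -/
def u1 (w : ℂ) : OnePoint ℝ → ℂ := fun p => 1 - w * u0 w p

lemma u1_continuous {w : ℂ} (hw : w.im ≠ 0) : Continuous (u1 w) := by
  have := u0_continuous hw
  unfold u1
  fun_prop

lemma u1_infty (w : ℂ) : u1 w OnePoint.infty = 1 := by simp [u1, u0_infty]

lemma u1_coe {w : ℂ} (hw : w.im ≠ 0) (t : ℝ) :
    u1 w (t : OnePoint ℝ) = (t : ℂ) * ((t : ℂ) + w)⁻¹ := by
  have := real_add_ne hw t
  rw [u1, u0_coe]
  field_simp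
  ring

/-- the denominators -/
def den (D M : ℕ) (t : ℝ) : ℂ := ((t : ℂ) + Complex.I) ^ D * (1 + (t : ℂ) ^ 2) ^ M

lemma one_add_sq_factor (t : ℝ) :
    (1 + (t : ℂ) ^ 2) = ((t : ℂ) + Complex.I) * ((t : ℂ) + -Complex.I) := by
  have := Complex.I_sq
  linear_combination this

lemma I_im_ne : Complex.I.im ≠ 0 := by simp
lemma negI_im_ne : (-Complex.I).im ≠ 0 := by simp

lemma one_add_sq_ne (t : ℝ) : (1 + (t : ℂ) ^ 2) ≠ 0 := by
  rw [one_add_sq_factor]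
  exact mul_ne_zero (real_add_ne I_im_ne t) (real_add_ne negI_im_ne t)

lemma den_ne (D M : ℕ) (t : ℝ) : den D M t ≠ 0 :=
  mul_ne_zero (pow_ne_zero _ (real_add_ne I_im_ne t)) (pow_ne_zero _ (one_add_sq_ne t))

/-- basic rational functions `t^b / den` -/
def phi (D M b : ℕ) (p : OnePoint ℝ) : ℂ :=
  u1 Complex.I p ^ (min b (D + M)) * u0 Complex.I p ^ (D + M - b) *
    (u1 (-Complex.I) p ^ (b - (D + M)) * u0 (-Complex.I) p ^ (M - (b - (D + M))))

lemma phi_continuous (D M b : ℕ) : Continuous (phi D M b) := by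
  have h1 := u0_continuous I_im_ne
  have h2 := u0_continuous negI_im_ne
  have h3 := u1_continuous I_im_ne
  have h4 := u1_continuous negI_im_ne
  unfold phi
  fun_prop

lemma phi_coe (D M b : ℕ) (hb : b ≤ D + 2 * M) (t : ℝ) :
    phi D M b (t : OnePoint ℝ) = (t : ℂ) ^ b / den D M t := by
  have h1 := real_add_ne I_im_ne t
  have h2 := real_add_ne negI_im_ne t
  rw [phi, u1_coe I_im_ne, u1_coe negI_im_ne, u0_coe, u0_coe, den, one_add_sq_factor]
  rcases le_total b (D + M) with h | h
  · obtain ⟨c, hc⟩ := Nat.exists_eq_add_of_le h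
    have e0 : b - (D + M) = 0 := by omega
    have e1 : D + M - b = c := by omega
    rw [min_eq_left h, e0, e1, pow_zero, one_mul, Nat.sub_zero, mul_pow, mul_pow,
      eq_div_iff (by positivity)]
    have : ((t : ℂ) + Complex.I) ^ D * (((t : ℂ) + Complex.I) ^ M)
      = ((t : ℂ) + Complex.I) ^ b * ((t : ℂ) + Complex.I) ^ c := by
      rw [← pow_add, ← pow_add, hc]
    have h3 : ((t : ℂ) + Complex.I) ^ D * (((t : ℂ) + Complex.I) ^ M * ((t : ℂ) + -Complex.I) ^ M)
      = ((t : ℂ) + Complex.I) ^ b * ((t : ℂ) + Complex.I) ^ c * ((t : ℂ) + -Complex.I) ^ M := by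
      rw [← this]; ring
    rw [h3]
    simp only [inv_pow]
    have p1 := pow_ne_zero b h1
    have p2 := pow_ne_zero c h1
    have p3 := pow_ne_zero M h2
    generalize ((t : ℂ) + Complex.I) ^ b = A at *
    generalize ((t : ℂ) + Complex.I) ^ c = B at *
    generalize ((t : ℂ) + -Complex.I) ^ M = C at *
    field_simp
  · obtain ⟨c, hc⟩ := Nat.exists_eq_add_of_le h
    obtain ⟨c', hc'⟩ := Nat.exists_eq_add_of_le hb
    have e0 : b - (D + M) = c := by omega
    have e1 : D + M - b = 0 := by omega
    have e2 : M - c = c' := by omega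
    have e3 : M = c + c' := by omega
    rw [min_eq_right h, e0, e1, e2, pow_zero, mul_one, eq_div_iff (by positivity), hc, mul_pow,
      mul_pow, mul_pow, pow_add _ _ c]
    have : ((t : ℂ) + -Complex.I) ^ M = ((t : ℂ) + -Complex.I) ^ c * ((t : ℂ) + -Complex.I) ^ c' := by
      rw [← pow_add, ← e3]
    rw [this]
    simp only [inv_pow, pow_add]
    have p1 := pow_ne_zero D h1
    have p4 := pow_ne_zero M h1
    have p2 := pow_ne_zero c h2
    have p3 := pow_ne_zero c' h2
    generalize ((t : ℂ) + Complex.I) ^ D = A at *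
    generalize ((t : ℂ) + Complex.I) ^ M = A' at *
    generalize ((t : ℂ) + -Complex.I) ^ c = B at *
    generalize ((t : ℂ) + -Complex.I) ^ c' = C at *
    field_simp

lemma phi_infty (D M b : ℕ) (hb : b ≤ D + 2 * M) :
    phi D M b OnePoint.infty = if b = D + 2 * M then 1 else 0 := by
  rw [phi, u1_infty, u1_infty, u0_infty, u0_infty, one_pow, one_pow, one_mul, one_mul]
  split_ifs with h
  · have e1 : D + M - b = 0 := by omega
    have e2 : M - (b - (D + M)) = 0 := by omega
    rw [e1, e2]; simp
  · by_cases h2 : D + M - b = 0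
    · have : M - (b - (D + M)) ≠ 0 := by omega
      simp [this]
    · simp [h2]

/-- the monic rational function with coefficients `c` -/
def rat (D M : ℕ) (c : Fin (D + 2 * M) → ℂ) (p : OnePoint ℝ) : ℂ :=
  phi D M (D + 2 * M) p + ∑ b, c b * phi D M b p

lemma rat_continuous (D M : ℕ) :
    Continuous (fun z : (Fin (D + 2 * M) → ℂ) × OnePoint ℝ => rat D M z.1 z.2) := by
  have := phi_continuous D M
  unfold rat
  fun_prop

lemma rat_coe (D M : ℕ) (c : Fin (D + 2 * M) → ℂ) (t : ℝ) :
    rat D M c (t : OnePoint ℝ) = (toPoly c).eval (t : ℂ) / den D M t := by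
  rw [rat, toPoly_eval, add_div, Finset.sum_div, phi_coe _ _ _ le_rfl]
  congr 1
  apply Finset.sum_congr rfl
  intro b _
  rw [phi_coe _ _ _ b.2.le, mul_div_assoc]

lemma rat_infty (D M : ℕ) (c : Fin (D + 2 * M) → ℂ) : rat D M c OnePoint.infty = 1 := by
  rw [rat, phi_infty _ _ _ le_rfl, if_pos rfl, Finset.sum_eq_zero, add_zero]
  intro b _
  rw [phi_infty _ _ _ b.2.le, if_neg (by have := b.2; omega), mul_zero]

lemma rat_coe_eq_zero (D M : ℕ) (c : Fin (D + 2 * M) → ℂ) (t : ℝ) :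
    rat D M c (t : OnePoint ℝ) = 0 ↔ (toPoly c).eval (t : ℂ) = 0 := by
  rw [rat_coe, div_eq_zero_iff]
  simp [den_ne]

lemma rat_injective (D M : ℕ) (c c' : Fin (D + 2 * M) → ℂ) (h : ∀ p, rat D M c p = rat D M c' p) :
    c = c' := by
  apply toPoly_injective
  apply Polynomial.eq_of_infinite_eval_eq
  have : Set.range (fun t : ℝ => (t : ℂ)) ⊆ {x | (toPoly c).eval x = (toPoly c').eval x} := by
    rintro _ ⟨t, rfl⟩
    have h1 := h (t : OnePoint ℝ)
    rw [rat_coe, rat_coe] at h1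
    exact (div_left_inj' (den_ne D M t)).1 h1
  exact (Set.infinite_range_of_injective Complex.ofReal_injective).mono this

lemma rat_line (D M : ℕ) (c c' : Fin (D + 2 * M) → ℂ) (u : ℝ) (p : OnePoint ℝ) :
    rat D M ((1 - u) • c + u • c') p = (1 - u) * rat D M c p + u * rat D M c' p := by
  simp only [rat, Pi.add_apply, Pi.smul_apply, Complex.real_smul, add_mul, Finset.sum_add_distrib,
    mul_add, Finset.mul_sum, mul_assoc]
  push_cast
  simp only [sub_mul, one_mul]
  ring

/-- Positivity transfers between polynomials and rational functions. -/
lemma rat_re_pos (D M : ℕ) (a : Fin (D + 2 * 0) → ℂ) (y : Fin (D + 2 * M) → ℂ) (t : ℝ) :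
    0 < (rat D 0 a (t : OnePoint ℝ) * (starRingEnd ℂ) (rat D M y (t : OnePoint ℝ))).re ↔
    0 < ((toPoly a).eval (t : ℂ) * (starRingEnd ℂ) ((toPoly y).eval (t : ℂ))).re := by
  rw [rat_coe, rat_coe]
  have h1 : (0:ℝ) < Complex.normSq (((t : ℂ) + Complex.I) ^ D) * (1 + t ^ 2) ^ M := by
    have : ((t : ℂ) + Complex.I) ^ D ≠ 0 := pow_ne_zero _ (real_add_ne I_im_ne t)
    have := Complex.normSq_pos.2 this
    positivity
  have h2 : (toPoly a).eval (t : ℂ) / den D 0 t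
      * (starRingEnd ℂ) ((toPoly y).eval (t : ℂ) / den D M t)
      = (((Complex.normSq (((t : ℂ) + Complex.I) ^ D) * (1 + t ^ 2) ^ M)⁻¹ : ℝ) : ℂ) *
        ((toPoly a).eval (t : ℂ) * (starRingEnd ℂ) ((toPoly y).eval (t : ℂ))) := by
    have h3 : (starRingEnd ℂ) (den D M t) = (starRingEnd ℂ) (((t : ℂ) + Complex.I) ^ D) *
        (1 + (t : ℂ) ^ 2) ^ M := by
      simp [den]
    rw [map_div₀, h3]
    push_cast
    rw [← Complex.mul_conj]
    have e1 := real_add_ne I_im_ne t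
    have e2 := one_add_sq_ne t
    have e3 : (starRingEnd ℂ) (((t : ℂ) + Complex.I) ^ D) ≠ 0 := by
      rw [Ne, map_eq_zero]; exact pow_ne_zero _ e1
    simp only [den, pow_zero, mul_one]
    field_simp
  rw [h2, Complex.re_ofReal_mul]
  constructor
  · intro h
    exact (pos_iff_pos_of_mul_pos h).1 (inv_pos.2 h1)
  · intro h
    exact mul_pos (inv_pos.2 h1) h



/-! ### Straight-line homotopies, openness, perturbation -/

/-- the cube -/
abbrev Cu (m : ℕ) : Type := Fin m → unitInterval

/-- its boundary -/
abbrev bd (m : ℕ) : Set (Cu m) := Cube.boundary (Fin m)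

lemma bd_closed (m : ℕ) : IsClosed (bd m) := by
  have : bd m = ⋃ i : Fin m, {y : Cu m | y i = 0 ∨ y i = 1} := by
    ext y; simp [Cube.boundary]
  rw [this]
  apply isClosed_iUnion_of_finite
  intro i
  exact (isClosed_eq (by fun_prop) (by fun_prop)).union (isClosed_eq (by fun_prop) (by fun_prop))

/-- the relative part of the cylinder -/
def SS (m : ℕ) : Set (Cu m × OnePoint ℝ) := {p | p.1 ∈ bd m ∨ p.2 = OnePoint.infty}

lemma UK_open {r : ℕ} (K : Set (Finset (Fin r))) : IsOpen (UK K) := by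
  unfold UK
  rw [isOpen_compl_iff]
  apply Set.Finite.isClosed_biUnion (Set.toFinite _)
  intro σ _
  have : LSub σ = ⋂ i ∈ σ, {x : Fin r → ℂ | x i = 0} := by
    ext x; simp [LSub]
  rw [this]
  exact isClosed_biInter fun i _ => isClosed_eq (by fun_prop) (by fun_prop)

lemma homRel_line {X : Type*} [TopologicalSpace X] {r : ℕ} {K : Set (Finset (Fin r))}
    (f g : C(X, ↥(UK K))) (S : Set X) (hS : ∀ x ∈ S, (f x : Fin r → ℂ) = g x)
    (h : ∀ x, ∀ u : ℝ, 0 ≤ u → u ≤ 1 →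
      (1 - u) • (f x : Fin r → ℂ) + u • (g x : Fin r → ℂ) ∈ UK K) :
    f.HomotopicRel g S := by
  refine ⟨⟨⟨⟨fun z => ⟨(1 - (z.1 : ℝ)) • (f z.2 : Fin r → ℂ) + (z.1 : ℝ) • (g z.2 : Fin r → ℂ),
    h z.2 z.1 z.1.2.1 z.1.2.2⟩, ?_⟩, ?_, ?_⟩, ?_⟩⟩
  · apply Continuous.subtype_mk
    fun_prop
  · intro x; ext1; simp
  · intro x; ext1; simp
  · intro t x hx
    ext1
    simp only [ContinuousMap.coe_mk]
    rw [← hS x hx, ← add_smul]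
    simp

lemma open_forall {Y P : Type*} [TopologicalSpace Y] [TopologicalSpace P] [CompactSpace P]
    {W : Set (Y × P)} (hW : IsOpen W) : IsOpen {y | ∀ p, (y, p) ∈ W} := by
  rw [isOpen_iff_eventually]
  intro y hy
  have := IsCompact.eventually_forall_of_forall_eventually (x₀ := y)
    (isCompact_univ : IsCompact (Set.univ : Set P)) (P := fun y p => (y, p) ∈ W)
    (fun p _ => hW.eventually_mem (hy p))
  filter_upwards [this] with z hz p using hz p trivial

/-- Perturbation to a generic map relative to the boundary. -/
lemma perturb {m : ℕ} {E : Type*} [NormedAddCommGroup E] [NormedSpace ℝ E]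
    (c : C(Cu m, E)) {U Gd : Set E} (hU : IsOpen U) (hGd : IsOpen Gd)
    (hcU : ∀ s, c s ∈ U) (hcG : ∀ s ∈ bd m, c s ∈ Gd)
    (gen : ∀ g : (Fin m → ℝ) → E, ContDiff ℝ 1 g → Dense {w | ∀ x, g x + w ∈ U → g x + w ∈ Gd}) :
    ∃ c' : C(Cu m, E), (∀ s ∈ bd m, c' s = c s) ∧ (∀ s, c' s ∈ Gd) ∧
      ∀ s, ∀ u : ℝ, 0 ≤ u → u ≤ 1 → (1 - u) • c s + u • c' s ∈ U := by
  obtain ⟨ε1, hε1, h1⟩ := (isCompact_range c.continuous).exists_thickening_subset_open hU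
    (by rintro _ ⟨s, rfl⟩; exact hcU s)
  obtain ⟨ε2, hε2, h2⟩ := ((bd_closed m).isCompact.image c.continuous).exists_thickening_subset_open
    hGd (by rintro _ ⟨s, hs, rfl⟩; exact hcG s hs)
  set V : Set (Cu m) := c ⁻¹' Metric.thickening (ε2 / 2) (c '' bd m) with hV
  have hVo : IsOpen V := Metric.isOpen_thickening.preimage c.continuous
  have hbV : bd m ⊆ V := fun s hs =>
    Metric.self_subset_thickening (by positivity) _ (Set.mem_image_of_mem c hs)
  obtain ⟨χ, hχ0, hχ1, hχ⟩ := exists_continuous_zero_one_of_isClosed (bd_closed m)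
    hVo.isClosed_compl (Set.disjoint_compl_right_iff_subset.2 hbV)
  set ε := min ε1 (ε2 / 2) with hε
  have hεp : 0 < ε := by positivity
  set cl : (Fin m → ℝ) → Cu m := fun x i => Set.projIcc 0 1 zero_le_one (x i) with hcl
  have hclc : Continuous cl := by
    apply continuous_pi
    intro i
    exact continuous_projIcc.comp (continuous_apply i)
  obtain ⟨g, hg, hgc, -⟩ := (c.continuous.comp hclc).exists_contDiff_approx 1
    (ε := fun _ => ε / 2) continuous_const (fun _ => by positivity)
  obtain ⟨w, hw, hwε⟩ := (gen g (by exact_mod_cast hg)).exists_dist_lt 0 (ε := ε / 2) (by positivity)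
  set inc : Cu m → (Fin m → ℝ) := fun s i => (s i : ℝ) with hinc
  have hincc : Continuous inc := by fun_prop
  have hci : ∀ s, cl (inc s) = s := by
    intro s; funext i; simp [hcl, hinc]
  have hclose : ∀ s, ‖g (inc s) + w - c s‖ < ε := by
    intro s
    have a1 := hgc (inc s)
    simp only [Function.comp, hci, dist_eq_norm] at a1
    have a2 : ‖w‖ < ε / 2 := by simpa [dist_eq_norm] using hwε
    calc ‖g (inc s) + w - c s‖ = ‖(g (inc s) - c s) + w‖ := by congr 1; abel
      _ ≤ _ := norm_add_le _ _
      _ < ε := by linarith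
  have hgcont := hg.continuous
  let c' : C(Cu m, E) := ⟨fun s => c s + χ s • (g (inc s) + w - c s), by fun_prop⟩
  have hc'c : ∀ s, ‖c' s - c s‖ < ε := by
    intro s
    simp only [c', ContinuousMap.coe_mk, add_sub_cancel_left, norm_smul]
    calc _ ≤ 1 * ‖g (inc s) + w - c s‖ := by
          gcongr
          rw [Real.norm_eq_abs, abs_of_nonneg (hχ s).1]; exact (hχ s).2
      _ < ε := by rw [one_mul]; exact hclose s
  have hline : ∀ s, ∀ u : ℝ, 0 ≤ u → u ≤ 1 → (1 - u) • c s + u • c' s ∈ U := by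
    intro s u hu0 hu1
    apply h1
    rw [Metric.mem_thickening_iff]
    refine ⟨c s, ⟨s, rfl⟩, ?_⟩
    have : (1 - u) • c s + u • c' s - c s = u • (c' s - c s) := by
      rw [sub_smul, smul_sub, one_smul]; abel
    rw [dist_eq_norm, this, norm_smul, Real.norm_eq_abs, abs_of_nonneg hu0]
    calc u * ‖c' s - c s‖ ≤ 1 * ‖c' s - c s‖ := by gcongr
      _ < ε1 := by rw [one_mul]; exact (hc'c s).trans_le (min_le_left _ _)
  refine ⟨c', ?_, ?_, hline⟩
  · intro s hs
    simp [c', hχ0 hs]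
  · intro s
    by_cases hs : s ∈ V
    · apply h2
      obtain ⟨z, hz, hd⟩ := Metric.mem_thickening_iff.1 hs
      refine Metric.mem_thickening_iff.2 ⟨z, hz, ?_⟩
      calc dist (c' s) z ≤ dist (c' s) (c s) + dist (c s) z := dist_triangle _ _ _
        _ < ε2 / 2 + ε2 / 2 := by
          gcongr
          rw [dist_eq_norm]
          exact (hc'c s).trans_le (min_le_right _ _)
        _ = ε2 := by ring
    · have e : c' s = g (inc s) + w := by
        have : χ s = 1 := hχ1 hs
        simp [c', this]
      rw [e]
      apply hw
      rw [← e]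
      simpa using hline s 1 zero_le_one le_rfl

/-! ### The positivity condition -/

section cond
variable {r : ℕ} (K : Set (Finset (Fin r))) (D M : Fin r → ℕ) (k : Fin r)

/-- coefficient data -/
abbrev EE : Type := ∀ j, Fin (D j + 2 * M j) → ℂ

/-- vector of rational functions -/
def RV (y : EE D M) (p : OnePoint ℝ) : Fin r → ℂ := fun j => rat (D j) (M j) (y j) p

lemma rat_cont2 {X : Type*} [TopologicalSpace X] {d l : ℕ} {f : X → Fin (d + 2 * l) → ℂ}
    {g : X → OnePoint ℝ} (hf : Continuous f) (hg : Continuous g) :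
    Continuous (fun x => rat d l (f x) (g x)) := by
  have h : Continuous (fun x => (f x, g x)) := hf.prodMk hg
  have h2 := (rat_continuous d l).comp h
  simp only [Function.comp_def] at h2
  exact h2

lemma RV_continuous : Continuous (fun z : EE D M × OnePoint ℝ => RV D M z.1 z.2) := by
  apply continuous_pi
  intro j
  have h1 : Continuous (fun z : EE D M × OnePoint ℝ => z.1 j) :=
    (continuous_apply j).comp continuous_fst
  have h2 : Continuous (fun z : EE D M × OnePoint ℝ => z.2) := continuous_snd
  exact rat_cont2 h1 h2

lemma RV_cont2 {X : Type*} [TopologicalSpace X] {f : X → EE D M}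
    {g : X → OnePoint ℝ} (hf : Continuous f) (hg : Continuous g) :
    Continuous (fun x => RV D M (f x) (g x)) := by
  have h : Continuous (fun x => (f x, g x)) := hf.prodMk hg
  have h2 := (RV_continuous D M).comp h
  simp only [Function.comp_def] at h2
  exact h2

/-- the positivity condition -/
def Cnd (y : EE D M) (a : Fin (D k + 2 * 0) → ℂ) (p : OnePoint ℝ) : Prop :=
  ∀ σ : Finset (Fin r), σ ∉ K → k ∈ σ → (∃ j ∈ σ, j ≠ k ∧ RV D M y p j ≠ 0) ∨
    0 < (rat (D k) 0 a p * (starRingEnd ℂ) (RV D M y p k)).re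

lemma Cnd_open : IsOpen {z : EE D M × (Fin (D k + 2 * 0) → ℂ) | ∀ p, Cnd K D M k z.1 z.2 p} := by
  apply open_forall (W := {z : (EE D M × (Fin (D k + 2 * 0) → ℂ)) × OnePoint ℝ |
    Cnd K D M k z.1.1 z.1.2 z.2})
  unfold Cnd
  have hR : Continuous (fun z : (EE D M × (Fin (D k + 2 * 0) → ℂ)) × OnePoint ℝ =>
      RV D M z.1.1 z.2) :=
    RV_cont2 D M (continuous_fst.comp continuous_fst) continuous_snd
  have hr : Continuous (fun z : (EE D M × (Fin (D k + 2 * 0) → ℂ)) × OnePoint ℝ =>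
      rat (D k) 0 z.1.2 z.2) :=
    rat_cont2 (continuous_snd.comp continuous_fst) continuous_snd
  simp only [Set.ofPred_forall, Set.ofPred_or]
  refine isOpen_iInter_of_finite fun σ => isOpen_iInter_of_finite fun _ =>
    isOpen_iInter_of_finite fun _ => IsOpen.union ?_ ?_
  · simp only [Set.ofPred_exists, Set.ofPred_and]
    refine isOpen_iUnion fun j => isOpen_const.inter (isOpen_const.inter ?_)
    exact isOpen_ne_fun ((continuous_apply j).comp hR) continuous_const
  · refine isOpen_lt continuous_const (Complex.continuous_re.comp (hr.mul ?_))
    exact Complex.continuous_conj.comp ((continuous_apply k).comp hR)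

lemma Cnd_convex (y : EE D M) :
    Convex ℝ {a : Fin (D k + 2 * 0) → ℂ | ∀ p, Cnd K D M k y a p} := by
  intro a ha b hb u v hu hv huv p σ hσ hk
  rcases ha p σ hσ hk with h | h
  · exact Or.inl h
  rcases hb p σ hσ hk with h' | h'
  · exact Or.inl h'
  right
  have hu' : u = 1 - v := by linarith
  rw [hu', rat_line, add_mul, mul_assoc, mul_assoc, Complex.add_re]
  have e : ((1 : ℂ) - (v : ℂ)) = ((u : ℝ) : ℂ) := by rw [hu']; push_cast; rfl
  rw [e, Complex.re_ofReal_mul, Complex.re_ofReal_mul]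
  rcases hu.eq_or_lt with h0 | h0
  · have : v = 1 := by linarith
    rw [← h0, this]; simpa using h'
  · have := mul_pos h0 h
    have := mul_nonneg hv h'.le
    linarith

lemma RV_infty (y : EE D M) (j : Fin r) : RV D M y OnePoint.infty j = 1 := rat_infty _ _ _

lemma Cnd_of_good (y : EE D M) (h : GoodP K (fun j => D j + 2 * M j) k (D k) y) :
    ∃ a : Fin (D k + 2 * 0) → ℂ, ∀ p, Cnd K D M k y a p := by
  obtain ⟨a, ha⟩ := h
  refine ⟨a, fun p σ hσ hk => ?_⟩
  induction p using OnePoint.rec with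
  | infty => right; rw [RV_infty, rat_infty]; simp
  | coe t =>
    by_cases hj : ∃ j ∈ σ, j ≠ k ∧ RV D M y t j ≠ 0
    · exact Or.inl hj
    right
    push Not at hj
    rw [RV, rat_re_pos]
    exact ha t σ hσ hk fun j hj1 hj2 => (rat_coe_eq_zero _ _ _ _).1 (hj j hj1 hj2)

lemma polSp_iff (hE : (∅ : Finset (Fin r)) ∈ K) (y : EE D M) :
    y ∈ PolSp K (fun j => D j + 2 * M j) ↔ ∀ p, RV D M y p ∈ UK K := by
  constructor
  · intro h p
    rw [mem_UK]
    intro σ hσ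
    induction p using OnePoint.rec with
    | infty =>
      obtain ⟨i, hi⟩ := Finset.nonempty_iff_ne_empty.2 (fun he : σ = ∅ => hσ (he ▸ hE))
      exact ⟨i, hi, by rw [RV_infty]; exact one_ne_zero⟩
    | coe t =>
      obtain ⟨i, hi, h0⟩ := h σ hσ t
      exact ⟨i, hi, fun h1 => h0 ((rat_coe_eq_zero _ _ _ _).1 h1)⟩
  · intro h σ hσ t
    obtain ⟨i, hi, h0⟩ := mem_UK.1 (h t) σ hσ
    exact ⟨i, hi, fun h1 => h0 ((rat_coe_eq_zero _ _ _ _).2 h1)⟩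

lemma polSp_open (hE : (∅ : Finset (Fin r)) ∈ K) :
    IsOpen (PolSp K (fun j => D j + 2 * M j)) := by
  have : PolSp K (fun j => D j + 2 * M j) = {y : EE D M | ∀ p, RV D M y p ∈ UK K} := by
    ext y; exact polSp_iff K D M hE y
  rw [this]
  exact open_forall (W := {z : EE D M × OnePoint ℝ | RV D M z.1 z.2 ∈ UK K})
    ((UK_open K).preimage (RV_continuous D M))

end cond



/-! ### Reduction of the denominators, one coordinate at a time -/

section core
variable {r m : ℕ} (K : Set (Finset (Fin r))) (D : Fin r → ℕ)

/-- boundary condition -/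
def BC (P : ∀ j, C(Cu m, Fin (D j + 2 * 0) → ℂ)) (F : C(Cu m × OnePoint ℝ, ↥(UK K))) : Prop :=
  ∀ s ∈ bd m, ∀ p j, (F (s, p)).1 j = rat (D j) 0 (P j s) p

/-- coordinate `j` of `F` is given by monic rational functions with `M` extra denominators -/
def StateAt (F : C(Cu m × OnePoint ℝ, ↥(UK K))) (j : Fin r) (M : ℕ) : Prop :=
  ∃ c : C(Cu m, Fin (D j + 2 * M) → ℂ), ∀ s p, (F (s, p)).1 j = rat (D j) M (c s) p

lemma BC_of_homotopic {P : ∀ j, C(Cu m, Fin (D j + 2 * 0) → ℂ)}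
    {F F' : C(Cu m × OnePoint ℝ, ↥(UK K))} (h : F.HomotopicRel F' (SS m)) (hb : BC K D P F) :
    BC K D P F' := by
  intro s hs p j
  have : F (s, p) = F' (s, p) := by
    obtain ⟨H⟩ := h
    exact H.fst_eq_snd (Or.inl hs)
  rw [← this]
  exact hb s hs p j

lemma select (M : Fin r → ℕ) (k : Fin r) (c : C(Cu m, EE D M)) (Pk : C(Cu m, Fin (D k + 2 * 0) → ℂ))
    (hb : ∀ s ∈ bd m, ∀ p, Cnd K D M k (c s) (Pk s) p)
    (hg : ∀ s, ∃ a : Fin (D k + 2 * 0) → ℂ, ∀ p, Cnd K D M k (c s) a p) :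
    ∃ a : C(Cu m, Fin (D k + 2 * 0) → ℂ), (∀ s ∈ bd m, a s = Pk s) ∧
      ∀ s p, Cnd K D M k (c s) (a s) p := by
  have hconv : ∀ s : Cu m, Convex ℝ
      ({a : Fin (D k + 2 * 0) → ℂ | ∀ p, Cnd K D M k (c s) a p} ∩ {a | s ∈ bd m → a = Pk s}) := by
    intro s
    refine (Cnd_convex K D M k (c s)).inter ?_
    by_cases hs : s ∈ bd m
    · simp only [hs, true_imp_iff, Set.ofPred_eq_eq_singleton]
      exact convex_singleton _
    · simp only [hs, false_imp_iff]
      exact convex_univ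
  obtain ⟨a, ha⟩ := exists_continuous_forall_mem_convex_of_local hconv (by
    intro s
    by_cases hs : s ∈ bd m
    · have hcont : Continuous (fun x : Cu m => (c x, Pk x)) := by fun_prop
      refine ⟨_, ((Cnd_open K D M k).preimage hcont).mem_nhds (hb s hs), Pk,
        Pk.continuous.continuousOn, ?_⟩
      intro y hy
      exact ⟨hy, fun _ => rfl⟩
    · obtain ⟨a, ha⟩ := hg s
      have hcont : Continuous (fun x : Cu m => (c x, a)) := by fun_prop
      refine ⟨_, Filter.inter_mem (((Cnd_open K D M k).preimage hcont).mem_nhds ha)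
        ((bd_closed m).isOpen_compl.mem_nhds hs), fun _ => a, continuousOn_const, ?_⟩
      rintro y ⟨hy, hy2⟩
      exact ⟨hy, fun h => absurd h hy2⟩)
  exact ⟨a, fun s hs => (ha s).2 hs, fun s => (ha s).1⟩

theorem step_core (ρ : ℕ) (hρ : 2 ≤ ρ) (hK : ∀ σ : Finset (Fin r), σ ∉ K → ρ ≤ σ.card)
    (hD : ∀ j, m < 2 * (ρ - 1) * D j) (P : ∀ j, C(Cu m, Fin (D j + 2 * 0) → ℂ))
    (M : Fin r → ℕ) (F : C(Cu m × OnePoint ℝ, ↥(UK K))) (hb : BC K D P F)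
    (hst : ∀ j, StateAt K D F j (M j)) (k : Fin r) :
    ∃ F' : C(Cu m × OnePoint ℝ, ↥(UK K)), F.HomotopicRel F' (SS m) ∧
      (∀ j, j ≠ k → StateAt K D F' j (M j)) ∧ StateAt K D F' k 0 := by
  have hE : (∅ : Finset (Fin r)) ∈ K := by
    by_contra h
    have := hK _ h
    simp at this; omega
  choose c0 hc0 using hst
  let c : C(Cu m, EE D M) := ⟨fun s j => c0 j s, by fun_prop⟩
  have hF : ∀ s p, (F (s, p)).1 = RV D M (c s) p := by
    intro s p; funext j; exact hc0 j s p
  have hcU : ∀ s, c s ∈ PolSp K (fun j => D j + 2 * M j) := by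
    intro s
    rw [polSp_iff K D M hE]
    intro p
    rw [← hF]; exact (F (s, p)).2
  have hUo := polSp_open K D M hE
  set Gd : Set (EE D M) := {y | ∃ a : Fin (D k + 2 * 0) → ℂ, ∀ p, Cnd K D M k y a p} with hGd
  have hGo : IsOpen Gd := by
    have : Gd = Prod.fst '' {z : EE D M × (Fin (D k + 2 * 0) → ℂ) | ∀ p, Cnd K D M k z.1 z.2 p} := by
      ext y
      simp [hGd]
    rw [this]
    exact isOpenMap_fst _ (Cnd_open K D M k)
  have hPb : ∀ s ∈ bd m, ∀ p, Cnd K D M k (c s) (P k s) p := by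
    intro s hs p σ hσ hk
    by_cases hj : ∃ j ∈ σ, j ≠ k ∧ RV D M (c s) p j ≠ 0
    · exact Or.inl hj
    right
    push Not at hj
    have h1 : RV D M (c s) p k ≠ 0 := by
      obtain ⟨i, hi, h0⟩ := mem_UK.1 (F (s, p)).2 σ hσ
      rw [hF] at h0
      by_cases hik : i = k
      · rwa [hik] at h0
      · exact absurd (hj i hi hik) h0
    have h2 : rat (D k) 0 (P k s) p = RV D M (c s) p k := by
      rw [← hF, ← hb s hs p k]
    rw [h2, Complex.mul_conj, Complex.ofReal_re]
    exact Complex.normSq_pos.2 h1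
  obtain ⟨c', hc'b, hc'G, hc'U⟩ := perturb c hUo hGo hcU
    (fun s hs => ⟨P k s, hPb s hs⟩) (by
      intro g hg
      refine (generic K (fun j => D j + 2 * M j) k (D k) ρ hρ hK (by omega) (hD k) g hg).mono ?_
      intro w hw x hx
      exact Cnd_of_good K D M k _ (hw x hx))
  obtain ⟨a, hab, ha⟩ := select K D M k c' (P k)
    (fun s hs => by rw [hc'b s hs]; exact hPb s hs) hc'G
  have hU1 : ∀ s p, RV D M (c' s) p ∈ UK K := by
    intro s
    rw [← polSp_iff K D M hE]
    simpa using hc'U s 1 zero_le_one le_rfl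
  let F1 : C(Cu m × OnePoint ℝ, ↥(UK K)) := ⟨fun z => ⟨RV D M (c' z.1) z.2, hU1 _ _⟩,
    Continuous.subtype_mk (RV_cont2 D M (c'.continuous.comp continuous_fst) continuous_snd) _⟩
  -- the second straight line
  have key : ∀ s p, ∀ u : ℝ, 0 ≤ u → u ≤ 1 → (1 - u) • RV D M (c' s) p +
      u • Function.update (RV D M (c' s) p) k (rat (D k) 0 (a s) p) ∈ UK K := by
    intro s p u hu0 hu1
    rw [mem_UK]
    intro σ hσ
    have hoff : ∀ j, j ≠ k → ((1 - u) • RV D M (c' s) p +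
      u • Function.update (RV D M (c' s) p) k (rat (D k) 0 (a s) p)) j = RV D M (c' s) p j := by
      intro j hj
      rw [Pi.add_apply, Pi.smul_apply, Pi.smul_apply, Function.update_of_ne hj, ← add_smul]
      simp
    by_cases hk : k ∈ σ
    · rcases ha s p σ hσ hk with ⟨j, hj, hjk, h0⟩ | h0
      · exact ⟨j, hj, by rw [hoff j hjk]; exact h0⟩
      · refine ⟨k, hk, fun h1 => ?_⟩
        rw [Pi.add_apply, Pi.smul_apply, Pi.smul_apply, Function.update_self] at h1
        have h2 : RV D M (c' s) p k ≠ 0 := by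
          intro h; rw [h] at h0; simp at h0
        have h3 := Complex.normSq_pos.2 h2
        have h4 : (((1 - u) • RV D M (c' s) p k + u • rat (D k) 0 (a s) p) *
          (starRingEnd ℂ) (RV D M (c' s) p k)).re = (1 - u) * Complex.normSq (RV D M (c' s) p k)
            + u * (rat (D k) 0 (a s) p * (starRingEnd ℂ) (RV D M (c' s) p k)).re := by
          rw [add_mul, Complex.add_re, Complex.real_smul, Complex.real_smul, mul_assoc, mul_assoc,
            Complex.mul_conj, Complex.re_ofReal_mul, Complex.re_ofReal_mul, Complex.ofReal_re]
        rw [h1, zero_mul, Complex.zero_re] at h4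
        rcases hu0.eq_or_lt with hz | hz
        · rw [← hz] at h4; simp only [sub_zero, one_mul, zero_mul, add_zero] at h4; exact h3.ne h4
        · have := mul_pos hz h0
          have := mul_nonneg (sub_nonneg.2 hu1) h3.le
          linarith
    · obtain ⟨i, hi, h0⟩ := mem_UK.1 (hU1 s p) σ hσ
      exact ⟨i, hi, by rw [hoff i (fun h => hk (h ▸ hi))]; exact h0⟩
  have hF2c : Continuous (fun z : Cu m × OnePoint ℝ =>
      Function.update (RV D M (c' z.1) z.2) k (rat (D k) 0 (a z.1) z.2)) :=
    Continuous.update (RV_cont2 D M (c'.continuous.comp continuous_fst) continuous_snd) k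
      (rat_cont2 (a.continuous.comp continuous_fst) continuous_snd)
  have hU2 : ∀ z : Cu m × OnePoint ℝ,
      Function.update (RV D M (c' z.1) z.2) k (rat (D k) 0 (a z.1) z.2) ∈ UK K := fun z => by
    simpa using key z.1 z.2 1 zero_le_one le_rfl
  let F2 : C(Cu m × OnePoint ℝ, ↥(UK K)) :=
    ⟨fun z => ⟨Function.update (RV D M (c' z.1) z.2) k (rat (D k) 0 (a z.1) z.2),
      hU2 z⟩, Continuous.subtype_mk hF2c hU2⟩
  have H1 : F.HomotopicRel F1 (SS m) := by
    apply homRel_line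
    · rintro ⟨s, p⟩ hs
      rw [hF]
      show _ = RV D M (c' s) p
      rcases hs with hs | hs
      · rw [hc'b s hs]
      · simp only at hs
        subst hs
        funext j
        rw [RV_infty, RV_infty]
    · rintro ⟨s, p⟩ u hu0 hu1
      rw [hF]
      show (1 - u) • _ + u • RV D M (c' s) p ∈ _
      have := (polSp_iff K D M hE _).1 (hc'U s u hu0 hu1) p
      convert this using 1
      funext j
      simp only [RV, Pi.add_apply, Pi.smul_apply, Complex.real_smul]
      have e := rat_line (D j) (M j) (c s j) (c' s j) u p
      push_cast
      exact e.symm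
  have H2 : F1.HomotopicRel F2 (SS m) := by
    apply homRel_line
    · rintro ⟨s, p⟩ hs
      show RV D M (c' s) p = Function.update (RV D M (c' s) p) k (rat (D k) 0 (a s) p)
      have : rat (D k) 0 (a s) p = RV D M (c' s) p k := by
        rcases hs with hs | hs
        · rw [hab s hs, hc'b s hs, ← hF, ← hb s hs p k]
        · simp only at hs
          subst hs
          rw [RV_infty, rat_infty]
      rw [this, Function.update_eq_self]
    · rintro ⟨s, p⟩ u hu0 hu1
      exact key s p u hu0 hu1
  refine ⟨F2, H1.trans H2, ?_, ?_⟩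
  · intro j hj
    refine ⟨⟨fun s => c' s j, by fun_prop⟩, fun s p => ?_⟩
    show Function.update (RV D M (c' s) p) k (rat (D k) 0 (a s) p) j = _
    rw [Function.update_of_ne hj]
    rfl
  · refine ⟨a, fun s p => ?_⟩
    show Function.update (RV D M (c' s) p) k (rat (D k) 0 (a s) p) k = _
    rw [Function.update_self]

theorem step_all (ρ : ℕ) (hρ : 2 ≤ ρ) (hK : ∀ σ : Finset (Fin r), σ ∉ K → ρ ≤ σ.card)
    (hD : ∀ j, m < 2 * (ρ - 1) * D j) (P : ∀ j, C(Cu m, Fin (D j + 2 * 0) → ℂ))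
    (M : Fin r → ℕ) (F : C(Cu m × OnePoint ℝ, ↥(UK K))) (hb : BC K D P F)
    (hst : ∀ j, StateAt K D F j (M j)) :
    ∃ F' : C(Cu m × OnePoint ℝ, ↥(UK K)), F.HomotopicRel F' (SS m) ∧
      (∀ j, StateAt K D F' j 0) := by
  have : ∀ T : Finset (Fin r), ∃ F' : C(Cu m × OnePoint ℝ, ↥(UK K)), F.HomotopicRel F' (SS m) ∧
      (∀ j, StateAt K D F' j (if j ∈ T then 0 else M j)) := by
    intro T
    induction T using Finset.induction_on with
    | empty => exact ⟨F, ContinuousMap.HomotopicRel.refl _, by simpa using hst⟩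
    | insert k T hk ih =>
      obtain ⟨F1, h1, h2⟩ := ih
      obtain ⟨F2, h3, h4, h5⟩ := step_core K D ρ hρ hK hD P _ F1 (BC_of_homotopic K D h1 hb) h2 k
      refine ⟨F2, h1.trans h3, fun j => ?_⟩
      by_cases hj : j = k
      · subst hj; simpa using h5
      · have := h4 j hj
        simpa [hj] using this
  obtain ⟨F', h1, h2⟩ := this Finset.univ
  exact ⟨F', h1, by simpa using h2⟩

end core



/-! ### Approximation by rational functions -/

lemma rat_of_monic {d M : ℕ} (q : Polynomial ℂ) (hq : q.Monic) (hd : q.natDegree = d + 2 * M)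
    (t : ℝ) : rat d M (fun b => q.coeff b) (t : OnePoint ℝ) = q.eval (t : ℂ) / den d M t := by
  rw [rat_coe, toPoly_of_monic q hq hd]

/-- raising the exponent of the denominator -/
def raise {d M : ℕ} (l : ℕ) (c : Fin (d + 2 * M) → ℂ) : Fin (d + 2 * (M + l)) → ℂ :=
  fun b => (toPoly c * (1 + Polynomial.X ^ 2) ^ l).coeff b

lemma toPoly_coeff_continuous {d : ℕ} (a : ℕ) :
    Continuous (fun c : Fin d → ℂ => (toPoly c).coeff a) := by
  unfold toPoly
  simp only [Polynomial.coeff_add, Polynomial.coeff_X_pow, Polynomial.finsetSum_coeff,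
    Polynomial.coeff_C_mul]
  fun_prop

lemma raise_continuous {d M : ℕ} (l : ℕ) : Continuous (raise (d := d) (M := M) l) := by
  unfold raise
  apply continuous_pi
  intro b
  simp only [Polynomial.coeff_mul]
  have := toPoly_coeff_continuous (d := d + 2 * M)
  fun_prop

lemma onesq_monic (l : ℕ) : ((1 + Polynomial.X ^ 2 : Polynomial ℂ) ^ l).Monic := by
  apply Polynomial.Monic.pow
  rw [add_comm]
  exact Polynomial.monic_X_pow_add (by simp)

lemma onesq_natDegree (l : ℕ) : ((1 + Polynomial.X ^ 2 : Polynomial ℂ) ^ l).natDegree = 2 * l := by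
  have : (1 + Polynomial.X ^ 2 : Polynomial ℂ).natDegree = 2 := by
    compute_degree!
  rw [Polynomial.natDegree_pow, this, mul_comm]

lemma eq_of_coe {f g : OnePoint ℝ → ℂ} (hf : Continuous f) (hg : Continuous g)
    (h : ∀ t : ℝ, f t = g t) : f = g := by
  refine (OnePoint.denseRange_coe (X := ℝ)).equalizer hf hg ?_
  funext t; exact h t

lemma rat_cont1 {d M : ℕ} (c : Fin (d + 2 * M) → ℂ) : Continuous (rat d M c) :=
  rat_cont2 (f := fun _ => c) continuous_const continuous_id

lemma rat_raise {d M : ℕ} (l : ℕ) (c : Fin (d + 2 * M) → ℂ) (p : OnePoint ℝ) :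
    rat d (M + l) (raise l c) p = rat d M c p := by
  refine congrFun (eq_of_coe (rat_cont1 _) (rat_cont1 _) fun t => ?_) p
  unfold raise
  rw [rat_of_monic _ ((toPoly_monic c).mul (onesq_monic l)), rat_coe, den, den]
  · have h1 := one_add_sq_ne t
    have h2 := real_add_ne I_im_ne t
    simp only [Polynomial.eval_mul, Polynomial.eval_pow, Polynomial.eval_add, Polynomial.eval_one,
      Polynomial.eval_X, pow_add]
    field_simp
  · rw [Polynomial.Monic.natDegree_mul (toPoly_monic c) (onesq_monic l), toPoly_natDegree,
      onesq_natDegree]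
    ring

/-- rational functions with poles at `± i` -/
def RatP (g : OnePoint ℝ → ℂ) (M : ℕ) (q : Polynomial ℂ) : Prop :=
  q.natDegree ≤ 2 * M ∧ ∀ t : ℝ, g t = q.eval (t : ℂ) / (1 + (t : ℂ) ^ 2) ^ M

lemma RatP_mul {f g : OnePoint ℝ → ℂ} {M M' q q'} (h : RatP f M q) (h' : RatP g M' q') :
    RatP (f * g) (M + M') (q * q') := by
  refine ⟨Polynomial.natDegree_mul_le.trans (by have := h.1; have := h'.1; omega), fun t => ?_⟩
  rw [Pi.mul_apply, h.2, h'.2, Polynomial.eval_mul, pow_add, div_mul_div_comm]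

lemma RatP_raise {f : OnePoint ℝ → ℂ} {M q} (l : ℕ) (h : RatP f M q) :
    RatP f (M + l) (q * (1 + Polynomial.X ^ 2) ^ l) := by
  refine ⟨Polynomial.natDegree_mul_le.trans ?_, fun t => ?_⟩
  · rw [onesq_natDegree]; have := h.1; omega
  · have h1 := one_add_sq_ne t
    rw [h.2]
    simp only [Polynomial.eval_mul, Polynomial.eval_pow, Polynomial.eval_add, Polynomial.eval_one,
      Polynomial.eval_X, pow_add]
    field_simp

lemma RatP_add {f g : OnePoint ℝ → ℂ} {M M' q q'} (h : RatP f M q) (h' : RatP g M' q') :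
    ∃ q'', RatP (f + g) (M + M') q'' := by
  have a := RatP_raise M' h
  have b := RatP_raise M h'
  rw [add_comm M' M] at b
  refine ⟨_, Polynomial.natDegree_add_le_of_degree_le a.1 b.1, fun t => ?_⟩
  rw [Pi.add_apply, a.2, b.2, Polynomial.eval_add, add_div]

lemma RatP_const (z : ℂ) : RatP (fun _ => z) 0 (Polynomial.C z) :=
  ⟨by simp, fun t => by simp⟩

lemma RatP_star {f : OnePoint ℝ → ℂ} {M q} (h : RatP f M q) :
    RatP (fun p => (starRingEnd ℂ) (f p)) M (q.map (starRingEnd ℂ)) := by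
  refine ⟨Polynomial.natDegree_map_le.trans h.1, fun t => ?_⟩
  show (starRingEnd ℂ) (f t) = _
  rw [h.2, map_div₀]
  have : (starRingEnd ℂ) (q.eval (t : ℂ)) = (q.map (starRingEnd ℂ)).eval (t : ℂ) := by
    rw [Polynomial.eval_map, ← Polynomial.eval₂_at_apply]; simp
  rw [this]
  simp

/-- the star algebra of these functions -/
def RatA : StarSubalgebra ℂ C(OnePoint ℝ, ℂ) where
  carrier := {g | ∃ M q, RatP g M q}
  mul_mem' := by
    rintro f g ⟨M, q, h⟩ ⟨M', q', h'⟩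
    exact ⟨_, _, RatP_mul h h'⟩
  add_mem' := by
    rintro f g ⟨M, q, h⟩ ⟨M', q', h'⟩
    obtain ⟨q'', h''⟩ := RatP_add h h'
    exact ⟨_, q'', h''⟩
  algebraMap_mem' := fun z => ⟨_, _, RatP_const z⟩
  star_mem' := by
    rintro f ⟨M, q, h⟩
    exact ⟨_, _, RatP_star h⟩

lemma RatP_u0 : RatP (u0 Complex.I) 1 (Polynomial.X - Polynomial.C Complex.I) := by
  refine ⟨?_, fun t => ?_⟩
  · rw [Polynomial.natDegree_X_sub_C]; omega
  · have h1 := real_add_ne I_im_ne t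
    have h2 := real_add_ne negI_im_ne t
    rw [u0_coe, one_add_sq_factor]
    simp only [Polynomial.eval_sub, Polynomial.eval_X, Polynomial.eval_C, pow_one]
    rw [← sub_eq_add_neg] at h2 ⊢
    field_simp

lemma RatA_sep : RatA.SeparatesPoints := by
  intro x y hxy
  refine ⟨_, ⟨⟨u0 Complex.I, u0_continuous I_im_ne⟩, ⟨_, _, RatP_u0⟩, rfl⟩, ?_⟩
  intro h
  apply hxy
  simp only [ContinuousMap.coe_mk] at h
  induction x using OnePoint.rec with
  | infty =>
    induction y using OnePoint.rec with
    | infty => rfl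
    | coe t =>
      rw [u0_infty, u0_coe] at h
      exact absurd h.symm (inv_ne_zero (real_add_ne I_im_ne t))
  | coe s =>
    induction y using OnePoint.rec with
    | infty =>
      rw [u0_infty, u0_coe] at h
      exact absurd h (inv_ne_zero (real_add_ne I_im_ne s))
    | coe t =>
      rw [u0_coe, u0_coe, inv_inj, add_left_inj] at h
      rw [Complex.ofReal_injective h]

lemma RatP_monic {g : OnePoint ℝ → ℂ} (hg : Continuous g) (h1 : g OnePoint.infty = 1) {M q}
    (h : RatP g M q) : q.Monic ∧ q.natDegree = 2 * M := by
  have hc : q.coeff (2 * M) = 1 := by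
    have : g = fun p => ∑ b ∈ Finset.range (2 * M + 1), q.coeff b * phi 0 M b p := by
      apply eq_of_coe hg
      · have := phi_continuous 0 M
        fun_prop
      · intro t
        rw [h.2, Polynomial.eval_eq_sum_range' (Nat.lt_succ_of_le h.1), Finset.sum_div]
        apply Finset.sum_congr rfl
        intro b hb
        rw [phi_coe _ _ _ (by have := Finset.mem_range.1 hb; omega), den, pow_zero, one_mul,
          mul_div_assoc]
    rw [this] at h1
    simp only at h1
    rw [Finset.sum_eq_single (2 * M)] at h1
    · rw [phi_infty _ _ _ (by omega), if_pos (by omega), mul_one] at h1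
      exact h1
    · intro b hb hb2
      rw [phi_infty _ _ _ (by have := Finset.mem_range.1 hb; omega), if_neg (by omega), mul_zero]
    · intro hb; simp at hb
  have hm := Polynomial.monic_of_natDegree_le_of_coeff_eq_one _ h.1 hc
  refine ⟨hm, le_antisymm h.1 (Polynomial.le_natDegree_of_ne_zero (by rw [hc]; exact one_ne_zero))⟩

lemma density1 (d : ℕ) (g : C(OnePoint ℝ, ℂ)) (hg : g OnePoint.infty = 1) {ε : ℝ} (hε : 0 < ε) :
    ∃ M, ∃ c : Fin (d + 2 * M) → ℂ, ∀ p, ‖rat d M c p - g p‖ < ε := by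
  have hd := ContinuousMap.starSubalgebra_topologicalClosure_eq_top_of_separatesPoints RatA RatA_sep
  have hmem : g ∈ RatA.topologicalClosure := by rw [hd]; trivial
  rw [← SetLike.mem_coe, StarSubalgebra.topologicalClosure_coe, Metric.mem_closure_iff] at hmem
  obtain ⟨a, ⟨M, q, ha⟩, hdist⟩ := hmem (ε / 2) (by positivity)
  have hap : ∀ p, ‖g p - a p‖ < ε / 2 := by
    intro p
    rw [← dist_eq_norm]
    exact (ContinuousMap.dist_apply_le_dist p).trans_lt hdist
  set z := g OnePoint.infty - a OnePoint.infty with hz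
  obtain ⟨q2, h2⟩ := RatP_add ha (RatP_const z)
  have hcont : Continuous ((⇑a) + fun _ => z) := a.continuous.add continuous_const
  obtain ⟨hm, hdeg⟩ := RatP_monic hcont (by simp [hz, hg]) h2
  have hXI : ((Polynomial.X + Polynomial.C Complex.I) ^ d).Monic :=
    (Polynomial.monic_X_add_C _).pow d
  have hfun : rat d (M + 0) (fun b => (q2 * (Polynomial.X + Polynomial.C Complex.I) ^ d).coeff b)
      = (⇑a) + fun _ => z := by
    apply eq_of_coe (rat_cont1 _) hcont
    intro t
    rw [rat_of_monic _ (hm.mul hXI), h2.2, den]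
    · have h1 := one_add_sq_ne t
      have h3 := real_add_ne I_im_ne t
      simp only [Polynomial.eval_mul, Polynomial.eval_pow, Polynomial.eval_add, Polynomial.eval_C,
        Polynomial.eval_X]
      field_simp
    · rw [hm.natDegree_mul hXI, hdeg, Polynomial.natDegree_pow, Polynomial.natDegree_X_add_C]
      ring
  refine ⟨M + 0, fun b => (q2 * (Polynomial.X + Polynomial.C Complex.I) ^ d).coeff b,
    fun p => ?_⟩
  rw [hfun]
  show ‖a p + z - g p‖ < ε
  calc ‖a p + z - g p‖ = ‖z - (g p - a p)‖ := by
        congr 1; ring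
    _ ≤ ‖z‖ + ‖g p - a p‖ := norm_sub_le _ _
    _ < ε / 2 + ε / 2 := add_lt_add (hap _) (hap _)
    _ = ε := by ring

/-- Approximation with parameters. -/
lemma approx1 {m : ℕ} (d : ℕ) (f : C(Cu m × OnePoint ℝ, ℂ)) (hf : ∀ s, f (s, OnePoint.infty) = 1)
    (P : C(Cu m, Fin (d + 2 * 0) → ℂ)) (hb : ∀ s ∈ bd m, ∀ p, f (s, p) = rat d 0 (P s) p)
    {ε : ℝ} (hε : 0 < ε) :
    ∃ M, ∃ c : C(Cu m, Fin (d + 2 * M) → ℂ), (∀ s p, ‖rat d M (c s) p - f (s, p)‖ < ε) ∧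
      ∀ s ∈ bd m, ∀ p, rat d M (c s) p = rat d 0 (P s) p := by
  set T : ∀ M, Cu m → Set (Fin (d + 2 * M) → ℂ) := fun M s =>
    {c | (∀ p, ‖rat d M c p - f (s, p)‖ < ε)} ∩ {c | s ∈ bd m → ∀ p, rat d M c p = rat d 0 (P s) p}
    with hT
  have hconv : ∀ M s, Convex ℝ (T M s) := by
    intro M s
    apply Convex.inter
    · intro a ha b hb' u v hu hv huv p
      have hu' : u = 1 - v := by linarith
      have e : rat d M (u • a + v • b) p - f (s, p)
          = (u : ℂ) * (rat d M a p - f (s, p)) + (v : ℂ) * (rat d M b p - f (s, p)) := by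
        rw [hu', rat_line]; push_cast; ring
      rw [e]
      refine (norm_add_le _ _).trans_lt ?_
      rw [norm_mul, norm_mul, Complex.norm_of_nonneg hu, Complex.norm_of_nonneg hv]
      have h1 := ha p
      have h2 := hb' p
      rcases hu.eq_or_lt with h0 | h0
      · have : v = 1 := by linarith
        rw [← h0, this]; simpa using h2
      · have := mul_lt_mul_of_pos_left h1 h0
        have := mul_le_mul_of_nonneg_left h2.le hv
        nlinarith
    · intro a ha b hb' u v hu hv huv hs p
      have hu' : u = 1 - v := by linarith
      rw [hu', rat_line, ha hs p, hb' hs p]; ring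
  have hloc : ∀ s, ∃ M, ∃ U : Set (Cu m), IsOpen U ∧ s ∈ U ∧ ∃ g : Cu m → Fin (d + 2 * M) → ℂ,
      Continuous g ∧ ∀ x ∈ U, g x ∈ T M x := by
    have hopen : ∀ M, ∀ g : Cu m → Fin (d + 2 * M) → ℂ, Continuous g →
        IsOpen {x | ∀ p, ‖rat d M (g x) p - f (x, p)‖ < ε} := by
      intro M g hg
      apply open_forall (W := {z : Cu m × OnePoint ℝ | ‖rat d M (g z.1) z.2 - f (z.1, z.2)‖ < ε})
      have := rat_cont2 (d := d) (l := M) (hg.comp (continuous_fst (X := Cu m) (Y := OnePoint ℝ)))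
        continuous_snd
      simp only [Function.comp_def] at this
      exact isOpen_lt (by fun_prop) continuous_const
    intro s
    by_cases hs : s ∈ bd m
    · refine ⟨0, _, hopen 0 P P.continuous, ?_, P, P.continuous, fun x hx => ⟨hx, fun _ _ => rfl⟩⟩
      intro p
      rw [hb s hs p]; simpa using hε
    · obtain ⟨M, c, hc⟩ := density1 d ⟨fun p => f (s, p), by fun_prop⟩ (hf s) hε
      refine ⟨M, _, (hopen M (fun _ => c) continuous_const).inter (bd_closed m).isOpen_compl,
        ⟨hc, hs⟩, fun _ => c, continuous_const, fun x hx => ⟨hx.1, fun h => absurd h hx.2⟩⟩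
  choose M U hUo hsU g hg hgT using hloc
  obtain ⟨t, ht⟩ := CompactSpace.elim_nhds_subcover U (fun s => (hUo s).mem_nhds (hsU s))
  set M0 := t.sup M with hM0
  obtain ⟨c, hc⟩ := exists_continuous_forall_mem_convex_of_local (hconv M0) (by
    intro x
    have hx : x ∈ ⋃ s ∈ t, U s := by rw [ht]; trivial
    simp only [Set.mem_iUnion] at hx
    obtain ⟨s, hs, hxs⟩ := hx
    have hle : M s ≤ M0 := Finset.le_sup hs
    obtain ⟨l, hl⟩ := Nat.exists_eq_add_of_le hle
    rw [hl]
    refine ⟨U s, (hUo s).mem_nhds hxs, fun y => raise l (g s y),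
      ((raise_continuous l).comp (hg s)).continuousOn, fun y hy => ?_⟩
    have := hgT s y hy
    constructor
    · intro p; rw [rat_raise]; exact this.1 p
    · intro h p; rw [rat_raise]; exact this.2 h p)
  exact ⟨M0, c, fun s => (hc s).1, fun s hs => (hc s).2 hs⟩

theorem approx {r m : ℕ} (K : Set (Finset (Fin r))) (D : Fin r → ℕ)
    (P : ∀ j, C(Cu m, Fin (D j + 2 * 0) → ℂ)) (F : C(Cu m × OnePoint ℝ, ↥(UK K)))
    (hb : BC K D P F) (hinf : ∀ s j, (F (s, OnePoint.infty)).1 j = 1) :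
    ∃ (F' : C(Cu m × OnePoint ℝ, ↥(UK K))) (M : Fin r → ℕ), F.HomotopicRel F' (SS m) ∧
      ∀ j, StateAt K D F' j (M j) := by
  have hFc : Continuous (fun z => (F z).1) := by fun_prop
  obtain ⟨ε, hε, hth⟩ := (isCompact_range hFc).exists_thickening_subset_open (UK_open K)
    (by rintro _ ⟨z, rfl⟩; exact (F z).2)
  have := fun j => approx1 (D j) ⟨fun z => (F z).1 j, (continuous_apply j).comp hFc⟩ (fun s => hinf s j) (P j)
    (fun s hs p => hb s hs p j) hε
  choose M c hc1 hc2 using this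
  have hclose : ∀ z : Cu m × OnePoint ℝ, ∀ u : ℝ, 0 ≤ u → u ≤ 1 →
      (1 - u) • (F z).1 + u • (fun j => rat (D j) (M j) (c j z.1) z.2) ∈ UK K := by
    intro z u hu0 hu1
    apply hth
    refine Metric.mem_thickening_iff.2 ⟨(F z).1, ⟨z, rfl⟩, ?_⟩
    rw [dist_pi_lt_iff hε]
    intro j
    rw [dist_eq_norm]
    have e : ((1 - u) • (F z).1 + u • (fun j => rat (D j) (M j) (c j z.1) z.2)) j - (F z).1 j
        = (u : ℂ) * (rat (D j) (M j) (c j z.1) z.2 - (F z).1 j) := by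
      simp only [Pi.add_apply, Pi.smul_apply, Complex.real_smul]; push_cast; ring
    rw [e, norm_mul, Complex.norm_of_nonneg hu0]
    calc _ ≤ 1 * ‖rat (D j) (M j) (c j z.1) z.2 - (F z).1 j‖ := by gcongr
      _ < ε := by rw [one_mul]; exact hc1 j z.1 z.2
  have hU : ∀ z : Cu m × OnePoint ℝ, (fun j => rat (D j) (M j) (c j z.1) z.2) ∈ UK K := by
    intro z; simpa using hclose z 1 zero_le_one le_rfl
  have hcont : Continuous (fun z : Cu m × OnePoint ℝ => fun j => rat (D j) (M j) (c j z.1) z.2) :=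
    continuous_pi fun j => rat_cont2 ((c j).continuous.comp continuous_fst) continuous_snd
  refine ⟨⟨fun z => ⟨_, hU z⟩, hcont.subtype_mk hU⟩, M, ?_, fun j => ⟨c j, fun s p => rfl⟩⟩
  apply homRel_line
  · rintro ⟨s, p⟩ hs
    funext j
    show (F (s, p)).1 j = rat (D j) (M j) (c j s) p
    rcases hs with hs | hs
    · rw [hc2 j s hs, hb s hs p j]
    · simp only at hs
      subst hs
      rw [hinf, rat_infty]
  · exact hclose



/-! ### Splittings from non-singularity -/

lemma zr_smul_nat {n : ℕ} (c : ℕ) (v : Fin n → ℤ) : zr ((c : ℤ) • v) = (c : ℝ) • zr v := by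
  funext i; simp [zr]

lemma zr_injective {n : ℕ} : Function.Injective (zr (n := n)) := by
  intro v w h
  funext i
  have := congrFun h i
  simpa [zr] using this

lemma gen_is_basis {n r : ℕ} (F : Fan n) (N : Fin r → Fin n → ℤ) (hN : IsPrimGens F N)
    (σ : Finset (Fin r)) (hσ : σ ∈ KC F N)
    (b : Module.Basis (Fin n) ℤ (Fin n → ℤ)) (s : Finset (Fin n))
    (hb : coneIdx N σ = {x | ∃ lam : Fin n → ℝ, (∀ i, 0 ≤ lam i) ∧ x = ∑ i ∈ s, lam i • zr (b i)})
    (j : Fin r) (hj : j ∈ σ) : ∃ l, b l = N j := by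
  have hrc : ray (zr (N j)) ⊆ coneIdx N σ := by
    rintro x ⟨t, ht, rfl⟩
    refine ⟨fun i => if i = j then t else 0, fun i => by dsimp only; split_ifs <;> simp [ht], ?_⟩
    rw [Finset.sum_eq_single j]
    · simp
    · intro i _ hi; simp [hi]
    · intro h; exact absurd hj h
  obtain ⟨L, hL0, hL⟩ := F.inter_face _ hσ _ (hN.ray_mem j)
  rw [Set.inter_eq_right.2 hrc] at hL
  have hNj : zr (N j) ∈ ray (zr (N j)) := ⟨1, zero_le_one, by simp⟩
  have hNc := hrc hNj
  rw [hb] at hNc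
  obtain ⟨lam, hlam, hx⟩ := hNc
  have hLN : L (zr (N j)) = 0 := by
    have h := hNj
    rw [hL] at h
    exact h.2
  have hbi : ∀ i ∈ s, zr (b i) ∈ coneIdx N σ := by
    intro i hi
    rw [hb]
    refine ⟨fun i' => if i' = i then 1 else 0, fun i => by dsimp only; split_ifs <;> simp, ?_⟩
    rw [Finset.sum_eq_single i]
    · simp
    · intro i' _ hi'; simp [hi']
    · intro h; exact absurd hi h
  have hne : ∃ l ∈ s, lam l ≠ 0 := by
    by_contra hcon
    push Not at hcon
    apply hN.ne_zero j
    apply zr_injective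
    rw [hx, Finset.sum_eq_zero]
    · funext i; simp [zr]
    · intro i hi; rw [hcon i hi, zero_smul]
  obtain ⟨l, hl, hl0⟩ := hne
  have hLl : L (zr (b l)) = 0 := by
    rw [hx, map_sum] at hLN
    have := (Finset.sum_eq_zero_iff_of_nonneg (fun i hi => by
      rw [map_smul, smul_eq_mul]
      exact mul_nonneg (hlam i) (hL0 _ (hbi i hi)))).1 hLN l hl
    rw [map_smul, smul_eq_mul] at this
    exact (mul_eq_zero.1 this).resolve_left hl0
  have hmem : zr (b l) ∈ ray (zr (N j)) := by
    rw [hL]; exact ⟨hbi l hl, hLl⟩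
  have hmem2 : zr (b l) ∈ ray (zr (N j)) ∩ {x | IsLatticePoint x} :=
    ⟨hmem, fun i => ⟨b l i, rfl⟩⟩
  rw [hN.primitive j] at hmem2
  obtain ⟨c, hc⟩ := hmem2
  rw [← zr_smul_nat] at hc
  have hc' := zr_injective hc
  have h1 := congrArg (fun v => b.repr v l) hc'
  simp only [Module.Basis.repr_self, Finsupp.single_eq_same, map_smul, Finsupp.smul_apply,
    smul_eq_mul] at h1
  have hc1 : (c : ℤ) = 1 := by
    have hu : IsUnit (c : ℤ) := IsUnit.of_mul_eq_one _ h1.symm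
    rcases Int.isUnit_iff.1 hu with h | h
    · exact h
    · omega
  exact ⟨l, by rw [hc', hc1, one_smul]⟩

theorem exists_theta {n r : ℕ} (F : Fan n) (hF : F.NonSingular) (N : Fin r → Fin n → ℤ)
    (hN : IsPrimGens F N) (h2 : Cond2 N) (σ : Finset (Fin r)) (hσ : σ ∈ KC F N) :
    ∃ Θ : (Fin n → ℤ) →ₗ[ℤ] (Fin r → ℤ), (∀ v, ∑ k, Θ v k • N k = v) ∧
      ∀ j ∈ σ, Θ (N j) = Pi.single j 1 := by
  obtain ⟨b, s, hb⟩ := hF _ hσ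
  have hl := fun j hj => gen_is_basis F N hN σ hσ b s hb j hj
  have hco : ∀ v : Fin n → ℤ, ∃ c : Fin r → ℤ, ∑ k, c k • N k = v := by
    intro v
    have : v ∈ Submodule.span ℤ (Set.range N) := by rw [h2]; trivial
    exact (Submodule.mem_span_range_iff_exists_fun ℤ).1 this
  choose co hco using hco
  have hex : ∀ l, ∃ c : Fin r → ℤ, ∑ k, c k • N k = b l ∧ ∀ j ∈ σ, N j = b l → c = Pi.single j 1 := by
    intro l
    by_cases h : ∃ j ∈ σ, N j = b l
    · obtain ⟨j, hj, hjl⟩ := h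
      refine ⟨Pi.single j 1, ?_, ?_⟩
      · rw [Finset.sum_eq_single j]
        · simpa using hjl
        · intro k _ hk; simp [hk]
        · simp
      · intro j' _ hj'
        rw [hN.inj (hj'.trans hjl.symm)]
    · push Not at h
      exact ⟨co (b l), hco _, fun j hj hjl => absurd hjl (h j hj)⟩
  choose c hc1 hc2 using hex
  refine ⟨b.constr ℤ c, ?_, ?_⟩
  · intro v
    let Nl : (Fin r → ℤ) →ₗ[ℤ] (Fin n → ℤ) := Fintype.linearCombination ℤ N
    have : Nl ∘ₗ (b.constr ℤ c) = LinearMap.id := by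
      apply b.ext
      intro l
      simp only [LinearMap.comp_apply, Module.Basis.constr_basis, LinearMap.id_apply]
      rw [← hc1 l]
      rfl
    exact LinearMap.congr_fun this v
  · intro j hj
    obtain ⟨l, hl⟩ := hl j hj
    rw [← hl, Module.Basis.constr_basis]
    exact hc2 l j hj hl.symm



/-! ### The group and local triviality of the quotient map -/

section grp
variable {n r : ℕ} {N : Fin r → Fin n → ℤ} {K : Set (Finset (Fin r))}

lemma G_one : (1 : Fin r → ℂ) ∈ GSet N := ⟨fun _ => one_ne_zero, fun m => by simp⟩

lemma G_mul {μ ν : Fin r → ℂ} (h : μ ∈ GSet N) (h' : ν ∈ GSet N) : μ * ν ∈ GSet N := by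
  refine ⟨fun k => mul_ne_zero (h.1 k) (h'.1 k), fun m => ?_⟩
  simp only [Pi.mul_apply, mul_zpow, Finset.prod_mul_distrib]
  rw [h.2 m, h'.2 m, one_mul]

lemma G_inv {μ : Fin r → ℂ} (h : μ ∈ GSet N) : μ⁻¹ ∈ GSet N := by
  refine ⟨fun k => inv_ne_zero (h.1 k), fun m => ?_⟩
  simp only [Pi.inv_apply, inv_zpow, Finset.prod_inv_distrib]
  rw [h.2 m, inv_one]

lemma G_inv_mul {μ : Fin r → ℂ} (h : μ ∈ GSet N) : μ⁻¹ * μ = 1 := by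
  funext k; exact inv_mul_cancel₀ (h.1 k)

lemma G_functional {μ : Fin r → ℂ} (h : μ ∈ GSet N) (φ : (Fin n → ℤ) →ₗ[ℤ] ℤ) :
    ∏ k, μ k ^ (φ (N k)) = 1 := by
  rw [← h.2 (fun j => φ (Pi.single j 1))]
  apply Finset.prod_congr rfl
  intro k _
  congr 1
  have e : N k = ∑ j, N k j • (Pi.single j 1 : Fin n → ℤ) := by
    funext i
    simp [Finset.sum_apply, Pi.single_apply]
  conv_lhs => rw [e]
  rw [map_sum]
  apply Finset.sum_congr rfl
  intro j _
  rw [map_smul, smul_eq_mul]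

lemma G_smul_UK {μ x : Fin r → ℂ} (h : ∀ k, μ k ≠ 0) (hx : x ∈ UK K) : μ * x ∈ UK K := by
  rw [mem_UK] at *
  intro σ hσ
  obtain ⟨i, hi, h0⟩ := hx σ hσ
  exact ⟨i, hi, mul_ne_zero (h i) h0⟩

lemma toricRel_iff {x y : ↥(UK K)} : toricRel N K x y ↔ ∃ μ ∈ GSet N, μ * x.1 = y.1 := Iff.rfl

lemma toricRel_equiv : Equivalence (toricRel N K) := by
  refine ⟨fun x => ⟨1, G_one, by simp⟩, ?_, ?_⟩
  · rintro x y ⟨μ, hμ, h⟩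
    refine ⟨μ⁻¹, G_inv hμ, ?_⟩
    rw [← h]
    funext i
    simp [hμ.1 i]
  · rintro x y z ⟨μ, hμ, h⟩ ⟨ν, hν, h'⟩
    refine ⟨ν * μ, G_mul hν hμ, ?_⟩
    rw [← h', ← h]
    funext i
    simp [mul_assoc]

lemma qmap_eq_iff {x y : ↥(UK K)} : qmap N K x = qmap N K y ↔ toricRel N K x y := by
  constructor
  · intro h
    exact (Equivalence.eqvGen_iff toricRel_equiv).1 (Quot.eqvGen_exact h)
  · exact fun h => Quot.sound h

/-- the equivariant correction monomials -/
def mu (Θ : (Fin n → ℤ) →ₗ[ℤ] (Fin r → ℤ)) (N : Fin r → Fin n → ℤ) (x : Fin r → ℂ) : Fin r → ℂ :=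
  fun k => ∏ j, x j ^ (Θ (N j) k - (Pi.single j 1 : Fin r → ℤ) k)

/-- the chart -/
def Uch (σ : Finset (Fin r)) : Set (Fin r → ℂ) := {x | ∀ j, j ∉ σ → x j ≠ 0}

lemma Uch_open (σ : Finset (Fin r)) : IsOpen (Uch σ) := by
  unfold Uch
  simp only [Set.ofPred_forall]
  exact isOpen_iInter_of_finite fun j => isOpen_iInter_of_finite fun _ =>
    isOpen_ne_fun (by fun_prop) (by fun_prop)

variable {Θ : (Fin n → ℤ) →ₗ[ℤ] (Fin r → ℤ)} {σ : Finset (Fin r)}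

lemma mu_mem (h1 : ∀ v, ∑ k, Θ v k • N k = v) (h2 : ∀ j ∈ σ, Θ (N j) = Pi.single j 1)
    {x : Fin r → ℂ} (hx : x ∈ Uch σ) : mu Θ N x ∈ GSet N := by
  have hz : ∀ j k, x j ^ (Θ (N j) k - (Pi.single j 1 : Fin r → ℤ) k) ≠ 0 := by
    intro j k
    by_cases hj : j ∈ σ
    · rw [h2 j hj]; simp
    · exact zpow_ne_zero _ (hx j hj)
  refine ⟨fun k => Finset.prod_ne_zero_iff.2 fun j _ => hz j k, fun m => ?_⟩
  simp only [mu, ← Finset.prod_zpow, ← zpow_mul]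
  rw [Finset.prod_comm]
  apply Finset.prod_eq_one
  intro j _
  by_cases hj : j ∈ σ
  · apply Finset.prod_eq_one
    intro k _
    rw [h2 j hj]; simp
  · have hxj := hx j hj
    have hs : ∀ (s : Finset (Fin r)) (e : Fin r → ℤ), ∏ k ∈ s, x j ^ e k = x j ^ (∑ k ∈ s, e k) := by
      intro s e
      induction s using Finset.induction_on with
      | empty => simp
      | insert a s ha ih => rw [Finset.prod_insert ha, Finset.sum_insert ha, ih, zpow_add₀ hxj]
    rw [hs]
    convert zpow_zero (x j) using 2
    have e1 : ∀ i, ∑ k, Θ (N j) k * N k i = N j i := by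
      intro i
      have := congrFun (h1 (N j)) i
      simpa [Finset.sum_apply] using this
    simp only [sub_mul, Finset.sum_sub_distrib, Finset.mul_sum]
    rw [Finset.sum_comm]
    have e2 : ∑ k, ∑ i, (Pi.single j 1 : Fin r → ℤ) k * (N k i * m i) = ∑ i, N j i * m i := by
      rw [Finset.sum_eq_single j]
      · simp
      · intro k _ hk; simp [hk]
      · simp
    rw [e2, sub_eq_zero]
    apply Finset.sum_congr rfl
    intro i _
    simp only [← mul_assoc]
    rw [← Finset.sum_mul, e1]

lemma mu_equiv {g x : Fin r → ℂ} (hg : g ∈ GSet N) : mu Θ N (g * x) = g⁻¹ * mu Θ N x := by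
  funext k
  simp only [mu, Pi.mul_apply, Pi.inv_apply, mul_zpow, Finset.prod_mul_distrib]
  congr 1
  have e : ∀ j, g j ^ (Θ (N j) k - (Pi.single j 1 : Fin r → ℤ) k)
      = g j ^ (Θ (N j) k) * (g j ^ ((Pi.single j 1 : Fin r → ℤ) k))⁻¹ := by
    intro j
    rw [sub_eq_add_neg, zpow_add₀ (hg.1 j), zpow_neg]
  simp only [e, Finset.prod_mul_distrib]
  have e1 := G_functional hg ((LinearMap.proj k).comp Θ)
  simp only [LinearMap.comp_apply, LinearMap.proj_apply] at e1
  rw [e1, one_mul, Finset.prod_eq_single k]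
  · simp
  · intro j _ hj; simp [Pi.single_apply, hj.symm]
  · simp

lemma mu_cont (h2 : ∀ j ∈ σ, Θ (N j) = Pi.single j 1) :
    ContinuousOn (mu Θ N) (Uch σ) := by
  apply continuousOn_pi.2
  intro k
  unfold mu
  apply continuousOn_finsetProd
  intro j _
  by_cases hj : j ∈ σ
  · rw [h2 j hj]
    simp only [sub_self, zpow_zero]
    exact continuousOn_const
  · intro x hx
    exact ContinuousAt.continuousWithinAt
      (((continuous_apply j).continuousAt (x := x)).zpow₀ _ (Or.inl (hx j hj)))

lemma q_open : IsOpenQuotientMap (qmap N K) := by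
  refine ⟨Quot.mk_surjective, continuous_quot_mk, ?_⟩
  intro W hW
  have : IsOpen (qmap N K ⁻¹' (qmap N K '' W)) := by
    have : qmap N K ⁻¹' (qmap N K '' W) = ⋃ g : GSet N,
        (fun x : ↥(UK K) => (⟨g.1 * x.1, G_smul_UK g.2.1 x.2⟩ : ↥(UK K))) ⁻¹' W := by
      ext x
      simp only [Set.mem_preimage, Set.mem_image, Set.mem_iUnion]
      constructor
      · rintro ⟨y, hy, h⟩
        obtain ⟨μ, hμ, h⟩ := qmap_eq_iff.1 h.symm
        refine ⟨⟨μ, hμ⟩, ?_⟩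
        convert hy
        exact h
      · rintro ⟨g, hg⟩
        exact ⟨_, hg, (qmap_eq_iff.2 ⟨g.1, g.2, rfl⟩).symm⟩
    rw [this]
    refine isOpen_iUnion fun g => hW.preimage ?_
    apply Continuous.subtype_mk
    exact continuous_const.mul continuous_subtype_val
  exact this

/-- the combinatorial hypothesis on the complex -/
def HasTheta (N : Fin r → Fin n → ℤ) (K : Set (Finset (Fin r))) : Prop :=
  ∀ σ ∈ K, ∃ Θ : (Fin n → ℤ) →ₗ[ℤ] (Fin r → ℤ), (∀ v, ∑ k, Θ v k • N k = v) ∧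
      ∀ j ∈ σ, Θ (N j) = Pi.single j 1

lemma exists_chart (x : ↥(UK K)) : ∃ σ ∈ K, x.1 ∈ Uch σ := by
  refine ⟨Finset.univ.filter (fun i => x.1 i = 0), ?_, ?_⟩
  · by_contra h
    obtain ⟨i, hi, h0⟩ := mem_UK.1 x.2 _ h
    exact h0 (Finset.mem_filter.1 hi).2
  · intro j hj h0
    exact hj (by simp [h0])

/-- local sections -/
lemma local_section (hT : HasTheta N K) (y : XS N K) : ∃ V : Set (XS N K), IsOpen V ∧ y ∈ V ∧
    ∃ s : XS N K → ↥(UK K), ContinuousOn s V ∧ ∀ z ∈ V, qmap N K (s z) = z := by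
  obtain ⟨x, rfl⟩ := (q_open (N := N) (K := K)).surjective y
  obtain ⟨σ, hσ, hx⟩ := exists_chart x
  obtain ⟨Θ, h1, h2⟩ := hT σ hσ
  set W : Set ↥(UK K) := {u | u.1 ∈ Uch σ} with hW
  have hWo : IsOpen W := (Uch_open σ).preimage continuous_subtype_val
  -- the invariant section upstairs
  let sec : ↥(UK K) → ↥(UK K) := fun u =>
    if h : u.1 ∈ Uch σ then ⟨mu Θ N u.1 * u.1, G_smul_UK (mu_mem h1 h2 h).1 u.2⟩ else u
  have hsec : ∀ u ∈ W, (sec u).1 = mu Θ N u.1 * u.1 := by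
    intro u hu
    have : u.1 ∈ Uch σ := hu
    simp [sec, this]
  have hWinv : ∀ u u', toricRel N K u u' → u ∈ W → u' ∈ W := by
    rintro u u' ⟨g, hg, h⟩ hu j hj
    rw [← h]
    exact mul_ne_zero (hg.1 j) (hu j hj)
  have hinv : ∀ u ∈ W, ∀ u', toricRel N K u u' → sec u' = sec u := by
    rintro u hu u' hr
    have hu' := hWinv u u' hr hu
    obtain ⟨g, hg, h⟩ := hr
    ext1
    rw [hsec u hu, hsec u' hu', ← h]
    have := mu_equiv (Θ := Θ) (x := u.1) hg
    change mu Θ N (g * u.1) * (g * u.1) = _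
    rw [this]
    have hi := G_inv_mul hg
    calc g⁻¹ * mu Θ N u.1 * (g * u.1) = (g⁻¹ * g) * (mu Θ N u.1 * u.1) := by ring
      _ = _ := by rw [hi, one_mul]
  have hseccont : ContinuousOn sec W := by
    rw [Topology.IsInducing.subtypeVal.continuousOn_iff]
    have : ContinuousOn (fun u : ↥(UK K) => mu Θ N u.1 * u.1) W :=
      ((mu_cont h2).comp continuous_subtype_val.continuousOn (fun u hu => hu)).mul
        continuous_subtype_val.continuousOn
    exact this.congr fun u hu => hsec u hu
  let s : XS N K → ↥(UK K) := fun z => sec (Function.surjInv (q_open (N := N) (K := K)).surjective z)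
  have hsq : ∀ u ∈ W, s (qmap N K u) = sec u := by
    intro u hu
    refine hinv u hu _ (qmap_eq_iff.1 ?_)
    exact (Function.surjInv_eq (q_open (N := N) (K := K)).surjective (qmap N K u)).symm
  refine ⟨qmap N K '' W, (q_open (N := N) (K := K)).isOpenMap _ hWo, ⟨x, hx, rfl⟩, s, ?_, ?_⟩
  · rintro _ ⟨u, hu, rfl⟩
    apply ContinuousAt.continuousWithinAt
    rw [← (q_open (N := N) (K := K)).continuousAt_comp_iff]
    have h1 : ContinuousAt sec u := hseccont.continuousAt (hWo.mem_nhds hu)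
    refine h1.congr ?_
    filter_upwards [hWo.mem_nhds hu] with v hv
    exact (hsq v hv).symm
  · rintro _ ⟨u, hu, rfl⟩
    rw [hsq u hu, eq_comm, qmap_eq_iff]
    exact ⟨mu Θ N u.1, mu_mem h1 h2 hu, (hsec u hu).symm⟩

/-- translation function -/
def TT (N : Fin r → Fin n → ℤ) (K : Set (Finset (Fin r))) (z : ↥(UK K) × ↥(UK K)) : Fin r → ℂ :=
  if h : toricRel N K z.1 z.2 then h.choose else 1

lemma TT_mem (z : ↥(UK K) × ↥(UK K)) : TT N K z ∈ GSet N := by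
  unfold TT
  split_ifs with h
  · exact h.choose_spec.1
  · exact G_one

lemma TT_mul {z : ↥(UK K) × ↥(UK K)} (h : toricRel N K z.1 z.2) : TT N K z * z.1.1 = z.2.1 := by
  unfold TT
  rw [dif_pos h]
  exact h.choose_spec.2

lemma TT_formula (h1 : ∀ v, ∑ k, Θ v k • N k = v) (h2 : ∀ j ∈ σ, Θ (N j) = Pi.single j 1)
    {g x y : Fin r → ℂ} (hg : g ∈ GSet N) (hx : x ∈ Uch σ) (h : g * x = y) :
    g = mu Θ N x * (mu Θ N y)⁻¹ := by
  rw [← h, mu_equiv hg]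
  have := (mu_mem h1 h2 hx).1
  funext k
  simp only [Pi.mul_apply, Pi.inv_apply, mul_inv, inv_inv]
  field_simp [this k]

lemma TT_unique (hT : HasTheta N K) {z : ↥(UK K) × ↥(UK K)} {g : Fin r → ℂ} (hg : g ∈ GSet N)
    (h : g * z.1.1 = z.2.1) : TT N K z = g := by
  obtain ⟨σ, hσ, hx⟩ := exists_chart z.1
  obtain ⟨Θ, h1, h2⟩ := hT σ hσ
  rw [TT_formula h1 h2 hg hx h]
  exact TT_formula h1 h2 (TT_mem z) hx (TT_mul ⟨g, hg, h⟩)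

lemma TT_cont (hT : HasTheta N K) :
    ContinuousOn (TT N K) {z | toricRel N K z.1 z.2} := by
  rintro z hz
  obtain ⟨σ, hσ, hx⟩ := exists_chart z.1
  obtain ⟨Θ, h1, h2⟩ := hT σ hσ
  have hy : z.2.1 ∈ Uch σ := by
    obtain ⟨g, hg, h⟩ := hz
    intro j hj
    rw [← h]
    exact mul_ne_zero (hg.1 j) (hx j hj)
  have hc : ContinuousAt (fun z : ↥(UK K) × ↥(UK K) => mu Θ N z.1.1 * (mu Θ N z.2.1)⁻¹) z := by
    have a1 : ContinuousAt (fun z : ↥(UK K) × ↥(UK K) => mu Θ N z.1.1) z :=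
      ContinuousAt.comp (f := fun z : ↥(UK K) × ↥(UK K) => z.1.1) (g := mu Θ N) (x := z)
        ((mu_cont h2).continuousAt ((Uch_open σ).mem_nhds hx)) (by fun_prop)
    have a2 : ContinuousAt (fun z : ↥(UK K) × ↥(UK K) => mu Θ N z.2.1) z :=
      ContinuousAt.comp (f := fun z : ↥(UK K) × ↥(UK K) => z.2.1) (g := mu Θ N) (x := z)
        ((mu_cont h2).continuousAt ((Uch_open σ).mem_nhds hy)) (by fun_prop)
    apply continuousAt_pi.2
    intro k
    exact ((continuous_apply k).continuousAt.comp a1).mul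
      (((continuous_apply k).continuousAt.comp a2).inv₀ ((mu_mem h1 h2 hy).1 k))
  refine hc.continuousWithinAt.congr_of_eventuallyEq ?_ ?_
  · have hnb : {z : ↥(UK K) × ↥(UK K) | z.1.1 ∈ Uch σ} ∈ nhds z :=
      ((Uch_open σ).preimage (by fun_prop :
        Continuous (fun z : ↥(UK K) × ↥(UK K) => z.1.1))).mem_nhds hx
    filter_upwards [self_mem_nhdsWithin, mem_nhdsWithin_of_mem_nhds hnb] with w hw hw2
    exact TT_formula h1 h2 (TT_mem w) hw2 (TT_mul hw)
  · exact TT_formula h1 h2 (TT_mem z) hx (TT_mul hz)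

end grp



/-! ### Lifting maps from cubes along the quotient map -/

section boxlift
variable {n r d : ℕ} {N : Fin r → Fin n → ℤ} {K : Set (Finset (Fin r))}

/-- partial lifts -/
def HasLift (N : Fin r → Fin n → ℤ) (K : Set (Finset (Fin r))) (G : (Fin d → ℝ) → XS N K)
    (B : Set (Fin d → ℝ)) : Prop :=
  ∃ f : (Fin d → ℝ) → ↥(UK K), ContinuousOn f B ∧ ∀ x ∈ B, qmap N K (f x) = G x

lemma HasLift.mono {G : (Fin d → ℝ) → XS N K} {B C : Set (Fin d → ℝ)} (h : HasLift N K G B)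
    (hC : C ⊆ B) : HasLift N K G C := by
  obtain ⟨f, h1, h2⟩ := h
  exact ⟨f, h1.mono hC, fun x hx => h2 x (hC hx)⟩

lemma HasLift.glue (hT : HasTheta N K) {G : (Fin d → ℝ) → XS N K} {B : Set (Fin d → ℝ)}
    (hB : IsClosed B) (i : Fin d) (t : ℝ) (hup : ∀ x ∈ B, Function.update x i t ∈ B)
    (h1 : HasLift N K G (B ∩ {x | x i ≤ t})) (h2 : HasLift N K G (B ∩ {x | t ≤ x i})) :
    HasLift N K G B := by
  obtain ⟨f1, c1, q1⟩ := h1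
  obtain ⟨f2, c2, q2⟩ := h2
  have hpc : Continuous (fun x : Fin d → ℝ => Function.update x i t) :=
    continuous_id.update i continuous_const
  have hm1 : ∀ x ∈ B, Function.update x i t ∈ B ∩ {x | x i ≤ t} := fun x hx =>
    ⟨hup x hx, by simp⟩
  have hm2 : ∀ x ∈ B, Function.update x i t ∈ B ∩ {x | t ≤ x i} := fun x hx =>
    ⟨hup x hx, by simp⟩
  let T : (Fin d → ℝ) → (Fin r → ℂ) := fun x =>
    TT N K (f2 (Function.update x i t), f1 (Function.update x i t))
  have hrel : ∀ x ∈ B, toricRel N K (f2 (Function.update x i t)) (f1 (Function.update x i t)) := by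
    intro x hx
    rw [← qmap_eq_iff, q1 _ (hm1 x hx), q2 _ (hm2 x hx)]
  have hTc : ContinuousOn T B := by
    refine (TT_cont hT).comp (ContinuousOn.prodMk ?_ ?_) (fun x hx => hrel x hx)
    · exact c2.comp hpc.continuousOn hm2
    · exact c1.comp hpc.continuousOn hm1
  have hTm : ∀ x, T x ∈ GSet N := fun x => TT_mem _
  let g : (Fin d → ℝ) → ↥(UK K) := fun x => ⟨T x * (f2 x).1, G_smul_UK (hTm x).1 (f2 x).2⟩
  have hg : ContinuousOn g (B ∩ {x | t ≤ x i}) := by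
    rw [Topology.IsInducing.subtypeVal.continuousOn_iff]
    exact (hTc.mono Set.inter_subset_left).mul (continuous_subtype_val.comp_continuousOn c2)
  have hgq : ∀ x ∈ B ∩ {x | t ≤ x i}, qmap N K (g x) = G x := by
    intro x hx
    rw [← q2 x hx, eq_comm, qmap_eq_iff]
    exact ⟨T x, hTm x, rfl⟩
  have hgf : ∀ x ∈ B, x i = t → g x = f1 x := by
    intro x hx hxt
    have e : Function.update x i t = x := by rw [← hxt]; simp
    have := TT_mul (z := (f2 (Function.update x i t), f1 (Function.update x i t))) (hrel x hx)
    ext1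
    change T x * (f2 x).1 = _
    simp only [T]
    rw [e] at this ⊢
    exact this
  let f : (Fin d → ℝ) → ↥(UK K) := fun x => if x i ≤ t then f1 x else g x
  have hf1 : ∀ x ∈ B ∩ {x | x i ≤ t}, f x = f1 x := fun x hx => if_pos hx.2
  have hf2 : ∀ x ∈ B ∩ {x | t ≤ x i}, f x = g x := by
    intro x hx
    by_cases hle : x i ≤ t
    · rw [hgf x hx.1 (le_antisymm hle hx.2)]; exact if_pos hle
    · exact if_neg hle
  have hU : B = (B ∩ {x | x i ≤ t}) ∪ (B ∩ {x | t ≤ x i}) := by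
    ext x
    constructor
    · intro hx
      rcases le_total (x i) t with h | h
      · exact Or.inl ⟨hx, h⟩
      · exact Or.inr ⟨hx, h⟩
    · rintro (h | h)
      · exact h.1
      · exact h.1
  refine ⟨f, ?_, ?_⟩
  · rw [hU]
    refine ContinuousOn.union_of_isClosed (c1.congr hf1) (hg.congr hf2) ?_ ?_
    · exact hB.inter (isClosed_le (continuous_apply i) continuous_const)
    · exact hB.inter (isClosed_le continuous_const (continuous_apply i))
  · intro x hx
    rw [hU] at hx
    rcases hx with h | h
    · rw [hf1 x h, q1 x h]
    · rw [hf2 x h, hgq x h]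

lemma lift_small (hT : HasTheta N K) (G : C(Fin d → ℝ, XS N K)) : ∃ δ : ℝ, 0 < δ ∧
    ∀ a b : Fin d → ℝ, Set.Icc a b ⊆ Set.Icc 0 1 → (∀ i, b i - a i ≤ δ) →
      HasLift N K G (Set.Icc a b) := by
  choose V hVo hyV s hs1 hs2 using fun y => local_section (N := N) hT y
  obtain ⟨δ, hδ, h⟩ := lebesgue_number_lemma_of_metric (s := Set.Icc (0 : Fin d → ℝ) 1)
    (c := fun y => G ⁻¹' (V y)) isCompact_Icc (fun y => (hVo y).preimage G.continuous)
    (fun x _ => Set.mem_iUnion.2 ⟨G x, hyV _⟩)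
  refine ⟨δ / 2, by positivity, fun a b hab hsm => ?_⟩
  by_cases hle : a ≤ b
  · obtain ⟨y, hy⟩ := h a (hab ⟨le_rfl, hle⟩)
    have hsub : Set.Icc a b ⊆ G ⁻¹' (V y) := by
      refine Set.Subset.trans ?_ hy
      intro x hx
      rw [Metric.mem_ball]
      refine lt_of_le_of_lt ?_ (half_lt_self hδ)
      rw [dist_pi_le_iff (by positivity)]
      intro i
      rw [Real.dist_eq, abs_of_nonneg (sub_nonneg.2 (hx.1 i))]
      linarith [hx.2 i, hsm i]
    exact ⟨s y ∘ G, (hs1 y).comp G.continuous.continuousOn hsub, fun x hx => hs2 y _ (hsub hx)⟩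
  · rw [Set.Icc_eq_empty hle]
    refine ⟨fun x => s (G x) (G x), ?_, fun x hx => hx.elim⟩
    exact continuousOn_empty _

lemma lift_boxes (hT : HasTheta N K) (G : C(Fin d → ℝ, XS N K)) (δ : ℝ) (hδ : 0 < δ)
    (h0 : ∀ a b : Fin d → ℝ, Set.Icc a b ⊆ Set.Icc 0 1 → (∀ i, b i - a i ≤ δ) →
      HasLift N K G (Set.Icc a b)) (S : Finset (Fin d)) :
    ∀ a b : Fin d → ℝ, Set.Icc a b ⊆ Set.Icc 0 1 → (∀ i, i ∉ S → b i - a i ≤ δ) →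
      HasLift N K G (Set.Icc a b) := by
  induction S using Finset.induction_on with
  | empty => exact fun a b h1 h2 => h0 a b h1 fun i => h2 i (by simp)
  | insert i S hi ih =>
    have key : ∀ L : ℕ, ∀ a b : Fin d → ℝ, Set.Icc a b ⊆ Set.Icc 0 1 →
        (∀ j, j ∉ insert i S → b j - a j ≤ δ) → b i - a i ≤ L * δ →
        HasLift N K G (Set.Icc a b) := by
      intro L
      induction L with
      | zero =>
        intro a b h1 h2 h3
        refine ih a b h1 fun j hj => ?_
        by_cases hji : j = i
        · subst hji
          simp at h3; linarith
        · exact h2 j (by simp [hji, hj])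
      | succ L ihL =>
        intro a b h1 h2 h3
        by_cases hle : b i - a i ≤ δ
        · refine ih a b h1 fun j hj => ?_
          by_cases hji : j = i
          · subst hji; exact hle
          · exact h2 j (by simp [hji, hj])
        push Not at hle
        refine HasLift.glue hT isClosed_Icc i (a i + δ) ?_ ?_ ?_
        · intro x hx
          constructor
          · intro j
            by_cases hj : j = i
            · subst hj; simp; linarith
            · simp [hj]; exact hx.1 j
          · intro j
            by_cases hj : j = i
            · subst hj; simp; linarith
            · simp [hj]; exact hx.2 j
        · have hs : Set.Icc a (Function.update b i (a i + δ)) ⊆ Set.Icc a b := by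
            intro x hx
            refine ⟨hx.1, fun j => (hx.2 j).trans ?_⟩
            by_cases hj : j = i
            · subst hj; simp; linarith
            · simp [hj]
          refine (ih a (Function.update b i (a i + δ)) (hs.trans h1) ?_).mono ?_
          · intro j hj
            by_cases hji : j = i
            · subst hji; simp
            · simp only [ne_eq, hji, not_false_eq_true, Function.update_of_ne]
              exact h2 j (by simp [hji, hj])
          · rintro x ⟨hx, hx2⟩
            refine ⟨hx.1, fun j => ?_⟩
            by_cases hj : j = i
            · subst hj; simpa using hx2
            · simp [hj]; exact hx.2 j
        · have hs : Set.Icc (Function.update a i (a i + δ)) b ⊆ Set.Icc a b := by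
            intro x hx
            refine ⟨fun j => le_trans ?_ (hx.1 j), hx.2⟩
            by_cases hj : j = i
            · subst hj; simp; linarith
            · simp [hj]
          refine (ihL (Function.update a i (a i + δ)) b (hs.trans h1) ?_ ?_).mono ?_
          · intro j hj
            have hji : j ≠ i := fun h => hj (by simp [h])
            simp only [ne_eq, hji, not_false_eq_true, Function.update_of_ne]
            exact h2 j hj
          · push_cast at h3
            simp
            linarith
          · rintro x ⟨hx, hx2⟩
            refine ⟨fun j => ?_, hx.2⟩
            by_cases hj : j = i
            · subst hj; simpa using hx2
            · simp [hj]; exact hx.1 j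
    intro a b h1 h2
    obtain ⟨L, hL⟩ := exists_nat_ge ((b i - a i) / δ)
    exact key L a b h1 h2 ((div_le_iff₀ hδ).1 hL)

theorem cube_lift (hT : HasTheta N K) (G : C(Fin d → unitInterval, XS N K)) :
    ∃ f : C(Fin d → unitInterval, ↥(UK K)), ∀ x, qmap N K (f x) = G x := by
  let G' : C(Fin d → ℝ, XS N K) := G.comp
    ⟨fun x i => Set.projIcc (0:ℝ) 1 zero_le_one (x i), by
      apply continuous_pi; intro i
      exact continuous_projIcc.comp (continuous_apply i)⟩
  obtain ⟨δ, hδ, h⟩ := lift_small hT G'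
  obtain ⟨f, hf, hq⟩ := lift_boxes hT G' δ hδ h Finset.univ 0 1 subset_rfl (by simp)
  have hm : ∀ x : Fin d → unitInterval, (fun i => (x i : ℝ)) ∈ Set.Icc (0 : Fin d → ℝ) 1 :=
    fun x => ⟨fun i => (x i).2.1, fun i => (x i).2.2⟩
  have hc : Continuous (fun x : Fin d → unitInterval => f (fun i => (x i : ℝ))) :=
    hf.comp_continuous (by fun_prop) hm
  refine ⟨⟨_, hc⟩, fun x => ?_⟩
  rw [ContinuousMap.coe_mk, hq _ (hm x)]
  simp [G']

theorem cube_lift' {m : ℕ} (hT : HasTheta N K) (G : C(Cu m × unitInterval, XS N K)) :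
    ∃ f : C(Cu m × unitInterval, ↥(UK K)), ∀ x, qmap N K (f x) = G x := by
  let G' : C(Fin (m+1) → unitInterval, XS N K) := G.comp
    ⟨fun x => (fun i => x i.succ, x 0), by fun_prop⟩
  obtain ⟨f, hf⟩ := cube_lift hT G'
  have hc : Continuous (fun p : Cu m × unitInterval => (Fin.cons p.2 p.1 : Fin (m+1) → unitInterval)) := by
    apply continuous_pi
    intro i
    refine Fin.cases ?_ (fun j => ?_) i
    · simpa using continuous_snd
    · simp only [Fin.cons_succ]
      exact (continuous_apply j).comp continuous_fst
  refine ⟨f.comp ⟨_, hc⟩, fun x => ?_⟩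
  simp [hf, G']

end boxlift



/-! ### The parametrization of the circle by the interval -/

/-- the quotient map from the interval to the circle -/
def kap (τ : unitInterval) : OnePoint ℝ :=
  if (τ : ℝ) = 0 ∨ (τ : ℝ) = 1 then OnePoint.infty
  else (((2 * (τ : ℝ) - 1) / ((τ : ℝ) * (1 - τ)) : ℝ) : OnePoint ℝ)

lemma kap_zero : kap 0 = OnePoint.infty := by simp [kap]
lemma kap_one : kap 1 = OnePoint.infty := by simp [kap]

lemma kap_pos {τ : unitInterval} (h : ¬ ((τ : ℝ) = 0 ∨ (τ : ℝ) = 1)) :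
    0 < (τ : ℝ) ∧ (τ : ℝ) < 1 := by
  push Not at h
  exact ⟨lt_of_le_of_ne τ.2.1 (Ne.symm h.1), lt_of_le_of_ne τ.2.2 h.2⟩

lemma u0_injective : Function.Injective (u0 Complex.I) := by
  intro p q h
  induction p using OnePoint.rec with
  | infty =>
    induction q using OnePoint.rec with
    | infty => rfl
    | coe t =>
      rw [u0_infty, u0_coe] at h
      exact absurd h.symm (inv_ne_zero (real_add_ne I_im_ne t))
  | coe s =>
    induction q using OnePoint.rec with
    | infty =>
      rw [u0_infty, u0_coe] at h
      exact absurd h (inv_ne_zero (real_add_ne I_im_ne s))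
    | coe t =>
      rw [u0_coe, u0_coe, inv_inj] at h
      have : (s : ℂ) = t := by simpa using h
      rw [Complex.ofReal_inj.1 this]

lemma u0_embedding : Topology.IsClosedEmbedding (u0 Complex.I) :=
  (u0_continuous I_im_ne).isClosedEmbedding u0_injective

lemma u0_kap (τ : unitInterval) : u0 Complex.I (kap τ) =
    ((τ : ℂ) * (1 - τ)) / ((2 * (τ : ℂ) - 1) + Complex.I * ((τ : ℂ) * (1 - τ))) := by
  unfold kap
  split_ifs with h
  · rw [u0_infty]
    rcases h with h | h <;> simp [h]
  · obtain ⟨h0, h1⟩ := kap_pos h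
    have ha : ((τ : ℂ)) ≠ 0 := by exact_mod_cast h0.ne'
    have hb : (1 - (τ : ℂ)) ≠ 0 := by
      have : (1 - (τ : ℝ)) ≠ 0 := by linarith
      exact_mod_cast this
    rw [u0_coe]
    push_cast
    have e : (2 * (τ : ℂ) - 1) / ((τ : ℂ) * (1 - τ)) + Complex.I
        = ((2 * (τ : ℂ) - 1) + Complex.I * ((τ : ℂ) * (1 - τ))) / ((τ : ℂ) * (1 - τ)) := by
      field_simp
    rw [e, inv_div]

lemma kap_den (τ : ℝ) : (2 * (τ : ℂ) - 1) + Complex.I * ((τ : ℂ) * (1 - τ)) ≠ 0 := by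
  intro h
  have h1 := congrArg Complex.re h
  have h2 := congrArg Complex.im h
  simp at h1 h2
  rcases h2 with h2 | h2
  · rw [h2] at h1; norm_num at h1
  · have : τ = 1 := by linarith
    rw [this] at h1; norm_num at h1

lemma kap_cont : Continuous kap := by
  rw [u0_embedding.isInducing.continuous_iff]
  have : u0 Complex.I ∘ kap = fun τ : unitInterval =>
    ((τ : ℂ) * (1 - τ)) / ((2 * (τ : ℂ) - 1) + Complex.I * ((τ : ℂ) * (1 - τ))) := funext u0_kap
  rw [this]
  exact Continuous.div (by fun_prop) (by fun_prop) fun τ => kap_den τ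

lemma kap_inj {a b : unitInterval} (h : kap a = kap b) :
    a = b ∨ ((a = 0 ∨ a = 1) ∧ (b = 0 ∨ b = 1)) := by
  have conv : ∀ c : unitInterval, ((c : ℝ) = 0 ∨ (c : ℝ) = 1) → (c = 0 ∨ c = 1) := by
    intro c hc
    rcases hc with hc | hc
    · exact Or.inl (Subtype.ext hc)
    · exact Or.inr (Subtype.ext hc)
  unfold kap at h
  split_ifs at h with h1 h2 h2
  · exact Or.inr ⟨conv a h1, conv b h2⟩
  · exact absurd h (OnePoint.infty_ne_coe _)
  · exact absurd h (OnePoint.coe_ne_infty _)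
  · left
    have h' := OnePoint.coe_injective h
    obtain ⟨a0, a1⟩ := kap_pos h1
    obtain ⟨b0, b1⟩ := kap_pos h2
    rw [div_eq_div_iff (by nlinarith) (by nlinarith)] at h'
    have h3 : ((a : ℝ) - b) * (1 + (2 * (a : ℝ) - 1) * (2 * b - 1)) = 0 := by
      linear_combination 2 * h'
    have h4 : 0 < 1 + (2 * (a : ℝ) - 1) * (2 * b - 1) := by
      nlinarith [mul_pos a0 b0, mul_pos (sub_pos.2 a1) (sub_pos.2 b1)]
    rcases mul_eq_zero.1 h3 with h5 | h5
    · exact Subtype.ext (by linarith)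
    · linarith

lemma kap_surj : Function.Surjective kap := by
  intro p
  induction p using OnePoint.rec with
  | infty => exact ⟨0, kap_zero⟩
  | coe t =>
    have hc : ContinuousOn (fun x : ℝ => t * (x * (1 - x)) - (2 * x - 1)) (Set.Icc 0 1) := by
      fun_prop
    have := intermediate_value_Icc' (zero_le_one' ℝ) hc
    obtain ⟨x, hx, hx0⟩ := this (show (0:ℝ) ∈ _ by constructor <;> norm_num)
    simp only at hx0
    have hx1 : x ≠ 0 := by rintro rfl; norm_num at hx0
    have hx2 : x ≠ 1 := by rintro rfl; norm_num at hx0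
    refine ⟨⟨x, hx⟩, ?_⟩
    unfold kap
    rw [if_neg (by simp [hx1, hx2])]
    congr 1
    have : 1 - x ≠ 0 := sub_ne_zero.2 (Ne.symm hx2)
    simp only
    rw [div_eq_iff (mul_ne_zero hx1 this)]
    linarith

/-- the quotient map from the cylinder to the product with the circle -/
def kapC (m : ℕ) : C(Cu m × unitInterval, Cu m × OnePoint ℝ) :=
  ⟨fun x => (x.1, kap x.2), by have := kap_cont; fun_prop⟩

lemma kapC_quot (m : ℕ) : Topology.IsQuotientMap (kapC m) := by
  apply Topology.IsQuotientMap.of_surjective_continuous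
  · rintro ⟨s, p⟩
    obtain ⟨τ, rfl⟩ := kap_surj p
    exact ⟨(s, τ), rfl⟩
  · exact (kapC m).continuous

lemma kapC_descend {m : ℕ} {Z : Type*} [TopologicalSpace Z] (F : C(Cu m × unitInterval, Z))
    (h : ∀ s, F (s, 0) = F (s, 1)) :
    ∃ F' : C(Cu m × OnePoint ℝ, Z), ∀ s τ, F' (s, kap τ) = F (s, τ) := by
  have hf : Function.FactorsThrough F (kapC m) := by
    rintro ⟨s, a⟩ ⟨s', b⟩ hab
    simp only [kapC, ContinuousMap.coe_mk, Prod.mk.injEq] at hab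
    obtain ⟨rfl, hk⟩ := hab
    rcases kap_inj hk with rfl | ⟨ha, hb⟩
    · rfl
    · rcases ha with rfl | rfl <;> rcases hb with rfl | rfl <;> simp [h]
  refine ⟨(kapC_quot m).lift F hf, fun s τ => ?_⟩
  have := congrArg (fun f => f (s, τ)) ((kapC_quot m).lift_comp F hf)
  exact this

/-! ### Logarithms -/

lemma exp_const {A : Type*} [TopologicalSpace A] [PreconnectedSpace A] (g : A → ℂ)
    (hg : Continuous g) (h1 : ∀ a, Complex.exp (g a) = 1) (a₀ : A) (h0 : g a₀ = 0) (a : A) :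
    g a = 0 := by
  have := Complex.isCoveringMap_exp.eq_of_comp_eq (g₁ := g) (g₂ := fun _ => 0) hg continuous_const
    (by funext a; apply Subtype.ext; simp [h1]) a₀ h0
  exact congrFun this a

lemma exists_log {A : Type*} [TopologicalSpace A] (μ : A × unitInterval → ℂ) (hc : Continuous μ)
    (h0 : ∀ x, μ x ≠ 0) (h1 : ∀ a, μ (a, 0) = 1) :
    ∃ η : A × unitInterval → ℂ, Continuous η ∧ (∀ x, Complex.exp (η x) = μ x) ∧
      ∀ a, η (a, 0) = 0 := by
  let H : C(unitInterval × A, {z : ℂ // z ≠ 0}) :=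
    ⟨fun x => ⟨μ (x.2, x.1), h0 _⟩, by
      apply Continuous.subtype_mk
      exact hc.comp (by fun_prop)⟩
  let f : C(A, ℂ) := ContinuousMap.const A 0
  have H0 : ∀ a, H (0, a) = (⟨_, (f a).exp_ne_zero⟩ : {z : ℂ // z ≠ 0}) := by
    intro a
    apply Subtype.ext
    simp [H, f, h1]
  refine ⟨fun x => Complex.isCoveringMap_exp.liftHomotopy H f H0 (x.2, x.1), ?_, ?_, ?_⟩
  · exact (Complex.isCoveringMap_exp.liftHomotopy H f H0).continuous.comp (by fun_prop)
  · intro x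
    have := congrFun (Complex.isCoveringMap_exp.liftHomotopy_lifts H f H0) (x.2, x.1)
    exact congrArg Subtype.val this
  · intro a
    exact Complex.isCoveringMap_exp.liftHomotopy_zero H f H0 a

section grp
variable {n r : ℕ} {N : Fin r → Fin n → ℤ} {K : Set (Finset (Fin r))}

/-- the linear map given by the generators -/
def NN (N : Fin r → Fin n → ℤ) (v : Fin r → ℂ) (i : Fin n) : ℂ := ∑ k, (N k i : ℂ) * v k

lemma exp_mem_G {v : Fin r → ℂ} (h : ∀ i, NN N v i = 0) : (fun k => Complex.exp (v k)) ∈ GSet N := by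
  refine ⟨fun k => Complex.exp_ne_zero _, fun m => ?_⟩
  simp only [← Complex.exp_int_mul]
  rw [← Complex.exp_sum]
  convert Complex.exp_zero
  push_cast
  simp only [Finset.sum_mul]
  rw [Finset.sum_comm]
  apply Finset.sum_eq_zero
  intro i _
  have := h i
  unfold NN at this
  calc ∑ k, (N k i : ℂ) * (m i : ℂ) * v k = (m i : ℂ) * ∑ k, (N k i : ℂ) * v k := by
        rw [Finset.mul_sum]; apply Finset.sum_congr rfl; intros; ring
    _ = 0 := by rw [this, mul_zero]

lemma NN_exp {v : Fin r → ℂ} (h : (fun k => Complex.exp (v k)) ∈ GSet N) (i : Fin n) :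
    Complex.exp (NN N v i) = 1 := by
  have := h.2 (Pi.single i 1)
  unfold NN
  rw [Complex.exp_sum, ← this]
  apply Finset.prod_congr rfl
  intro k _
  rw [← Complex.exp_int_mul]
  simp [Pi.single_apply]

lemma NN_cont (i : Fin n) : Continuous (fun v : Fin r → ℂ => NN N v i) := by
  unfold NN; fun_prop

/-- simultaneous logarithms of group valued families of paths -/
lemma exists_logG {A : Type*} [TopologicalSpace A] (μ : A × unitInterval → Fin r → ℂ)
    (hc : Continuous μ) (hG : ∀ x, μ x ∈ GSet N) (h1 : ∀ a, μ (a, 0) = 1) :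
    ∃ η : A × unitInterval → Fin r → ℂ, Continuous η ∧
      (∀ x, (fun k => Complex.exp (η x k)) = μ x) ∧ (∀ a, η (a, 0) = 0) ∧
      ∀ x i, NN N (η x) i = 0 := by
  choose η h2 h3 h4 using fun k => exists_log (fun x => μ x k) (by fun_prop) (fun x => (hG x).1 k)
    (fun a => by rw [h1]; rfl)
  have e : ∀ x, (fun k => Complex.exp (η k x)) = μ x := fun x => funext fun k => h3 k x
  refine ⟨fun x k => η k x, continuous_pi h2, e, fun a => funext fun k => h4 k a, ?_⟩
  rintro ⟨a, τ⟩ i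
  refine exp_const (fun τ : unitInterval => NN N (fun k => η k (a, τ)) i) ?_ ?_ 0 ?_ τ
  · refine (NN_cont i).comp (continuous_pi fun k => ?_)
    exact (h2 k).comp (by fun_prop)
  · intro τ
    apply NN_exp
    rw [e (a, τ)]
    exact hG _
  · simp [h4, NN]

end grp

/-! ### The boundary of the cube is connected -/

lemma bd_preconnected {m : ℕ} (hm : 2 ≤ m) : IsPreconnected (bd m) := by
  have h1 : IsPreconnected (Metric.sphere (0 : Fin m → ℝ) 1) := by
    apply isPreconnected_sphere
    rw [rank_fin_fun]
    exact_mod_cast hm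
  let f : (Fin m → ℝ) → Cu m := fun x i => Set.projIcc (0:ℝ) 1 zero_le_one ((1 + x i) / 2)
  have hf : Continuous f := by
    apply continuous_pi
    intro i
    exact continuous_projIcc.comp (by fun_prop)
  have := h1.image f hf.continuousOn
  convert this
  ext s
  constructor
  · rintro ⟨i, hi⟩
    refine ⟨fun i => 2 * (s i : ℝ) - 1, ?_, ?_⟩
    · rw [mem_sphere_zero_iff_norm]
      apply le_antisymm
      · rw [pi_norm_le_iff_of_nonneg zero_le_one]
        intro j
        rw [Real.norm_eq_abs, abs_le]
        constructor <;> linarith [(s j).2.1, (s j).2.2]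
      · refine le_trans ?_ (norm_le_pi_norm _ i)
        rcases hi with hi | hi <;> simp [hi]
        norm_num
    · funext j
      simp [f, Set.projIcc_val]
  · rintro ⟨x, hx, rfl⟩
    rw [mem_sphere_zero_iff_norm] at hx
    have hex : ∃ i, 1 ≤ |x i| := by
      by_contra hcon
      push Not at hcon
      have : ‖x‖ < 1 := (pi_norm_lt_iff zero_lt_one).2 fun i => by
        rw [Real.norm_eq_abs]; exact hcon i
      linarith
    obtain ⟨i, hi⟩ := hex
    refine ⟨i, ?_⟩
    rcases le_abs.1 hi with h | h
    · right
      exact Set.projIcc_of_right_le _ (by linarith)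
    · left
      exact Set.projIcc_of_le_left _ (by linarith)



/-! ### Lifting families of loops relative to the boundary -/

section lm
variable {n r m : ℕ} {N : Fin r → Fin n → ℤ} {K : Set (Finset (Fin r))}

lemma actC {A : Type*} [TopologicalSpace A] (g : A → Fin r → ℂ) (hc : Continuous g)
    (hg : ∀ a, g a ∈ GSet N) (f : C(A, ↥(UK K))) :
    ∃ f' : C(A, ↥(UK K)), (∀ a, (f' a).1 = g a * (f a).1) ∧ ∀ a, qmap N K (f' a) = qmap N K (f a) := by
  refine ⟨⟨fun a => ⟨g a * (f a).1, G_smul_UK (hg a).1 (f a).2⟩, ?_⟩, fun a => rfl, fun a => ?_⟩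
  · apply Continuous.subtype_mk
    exact hc.mul (continuous_subtype_val.comp f.continuous)
  · rw [eq_comm, qmap_eq_iff]
    exact ⟨g a, hg a, rfl⟩

lemma TT_contC {A : Type*} [TopologicalSpace A] (hT : HasTheta N K) (f g : A → ↥(UK K))
    (hf : Continuous f) (hg : Continuous g) (h : ∀ a, qmap N K (f a) = qmap N K (g a)) :
    Continuous (fun a => TT N K (f a, g a)) :=
  (TT_cont hT).comp_continuous (hf.prodMk hg) fun a => qmap_eq_iff.1 (h a)

lemma onesUK_val (hE : (∅ : Finset (Fin r)) ∈ K) : (onesUK hE).1 = 1 := rfl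

lemma lift_norm (hT : HasTheta N K) (hE : (∅ : Finset (Fin r)) ∈ K)
    (G : C(Cu m × OnePoint ℝ, XS N K)) (hG : ∀ s, G (s, OnePoint.infty) = baseX N K hE) :
    ∃ f : C(Cu m × unitInterval, ↥(UK K)), (∀ s τ, qmap N K (f (s, τ)) = G (s, kap τ)) ∧
      ∀ s, (f (s, 0)).1 = 1 := by
  obtain ⟨f, hf⟩ := cube_lift' hT (G.comp (kapC m))
  have hf' : ∀ s τ, qmap N K (f (s, τ)) = G (s, kap τ) := fun s τ => hf (s, τ)
  have hq : ∀ x : Cu m × unitInterval, qmap N K (f (x.1, 0)) = qmap N K (onesUK hE) := by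
    intro x
    rw [hf', kap_zero, hG]; rfl
  obtain ⟨f', h1, h2⟩ := actC (N := N) (fun x : Cu m × unitInterval => TT N K (f (x.1, 0), onesUK hE))
    (TT_contC hT (fun x : Cu m × unitInterval => f (x.1, 0)) (fun _ => onesUK hE) (by fun_prop) continuous_const hq)
    (fun x => TT_mem _) f
  refine ⟨f', fun s τ => by rw [h2, hf'], fun s => ?_⟩
  rw [h1]
  exact TT_mul (z := (f (s, 0), onesUK hE)) (qmap_eq_iff.1 (hq (s, 0)))

/-- complexified splitting -/
def ThC (Θ : (Fin n → ℤ) →ₗ[ℤ] (Fin r → ℤ)) (w : Fin n → ℂ) (k : Fin r) : ℂ :=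
  ∑ i, w i * (Θ (Pi.single i 1) k : ℂ)

lemma NN_ThC {Θ : (Fin n → ℤ) →ₗ[ℤ] (Fin r → ℤ)} (h1 : ∀ v, ∑ k, Θ v k • N k = v)
    (w : Fin n → ℂ) (j : Fin n) : NN N (ThC Θ w) j = w j := by
  unfold NN ThC
  simp only [Finset.mul_sum]
  rw [Finset.sum_comm]
  have e : ∀ i, ∑ k, (N k j : ℂ) * (w i * (Θ (Pi.single i 1) k : ℂ))
      = w i * (((Pi.single i 1 : Fin n → ℤ) j : ℤ) : ℂ) := by
    intro i
    have := congrFun (h1 (Pi.single i 1)) j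
    rw [← this]
    simp only [Finset.sum_apply, Pi.smul_apply, smul_eq_mul]
    push_cast
    rw [Finset.mul_sum]
    apply Finset.sum_congr rfl
    intros; ring
  simp only [e]
  rw [Finset.sum_eq_single j]
  · simp
  · intro i _ hi
    simp [hi.symm]
  · simp

lemma NN_sub (v w : Fin r → ℂ) (i : Fin n) : NN N (v - w) i = NN N v i - NN N w i := by
  simp [NN, mul_sub, Finset.sum_sub_distrib]

lemma NN_smul (c : ℂ) (v : Fin r → ℂ) (i : Fin n) : NN N (c • v) i = c * NN N v i := by
  simp only [NN, Finset.mul_sum, Pi.smul_apply, smul_eq_mul]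
  apply Finset.sum_congr rfl
  intros; ring

lemma ThC_zero (Θ : (Fin n → ℤ) →ₗ[ℤ] (Fin r → ℤ)) : ThC Θ (0 : Fin n → ℂ) = 0 := by
  funext k; simp [ThC]

lemma lift_bdry (hT : HasTheta N K) (hE : (∅ : Finset (Fin r)) ∈ K)
    (f : C(Cu m × unitInterval, ↥(UK K))) (hf0 : ∀ s, (f (s, 0)).1 = 1)
    (J : C(↥(bd m) × unitInterval, ↥(UK K))) (hJ0 : ∀ s, (J (s, 0)).1 = 1)
    (hJ : ∀ (s : ↥(bd m)) τ, qmap N K (f (s, τ)) = qmap N K (J (s, τ))) :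
    ∃ f' : C(Cu m × unitInterval, ↥(UK K)), (∀ x, qmap N K (f' x) = qmap N K (f x)) ∧
      (∀ s, (f' (s, 0)).1 = 1) ∧ ∀ (s : ↥(bd m)) τ, f' (s, τ) = J (s, τ) := by
  let μ : ↥(bd m) × unitInterval → Fin r → ℂ := fun x => TT N K (f (x.1, x.2), J x)
  obtain ⟨η, hηc, hηe, hη0, hηN⟩ := exists_logG (N := N) μ
    (TT_contC hT (fun x : ↥(bd m) × unitInterval => f (x.1, x.2)) J (by fun_prop) J.continuous
      (fun x => hJ x.1 x.2)) (fun x => TT_mem _)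
    (fun a => TT_unique hT G_one (by
      change 1 * (f (a, 0)).1 = (J (a, 0)).1
      rw [hf0, hJ0, one_mul]))
  obtain ⟨Θ, hΘ, -⟩ := hT ∅ hE
  let S : Set (Cu m × unitInterval) := {p | p.1 ∈ bd m}
  have hS : IsClosed S := (bd_closed m).preimage continuous_fst
  let η₁ : C(S, Fin r → ℂ) := ⟨fun p => η (⟨p.1.1, p.2⟩, p.1.2), hηc.comp (by fun_prop)⟩
  obtain ⟨g, hg⟩ := ContinuousMap.exists_restrict_eq hS η₁
  have hg' : ∀ (a : ↥(bd m)) τ, g (a, τ) = η (a, τ) := fun a τ =>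
    congrArg (fun F => F ⟨((a : Cu m), τ), a.2⟩) hg
  let η₂ : Cu m × unitInterval → Fin r → ℂ := fun p => g p - g (p.1, 0)
  have hη₂c : Continuous η₂ := by fun_prop
  let η₃ : Cu m × unitInterval → Fin r → ℂ := fun p => η₂ p - ThC Θ (NN N (η₂ p))
  have hη₃c : Continuous η₃ := by
    have : Continuous (fun v : Fin r → ℂ => ThC Θ (NN N v)) := by
      unfold ThC NN; fun_prop
    exact hη₂c.sub (this.comp hη₂c)
  have hη₃N : ∀ p i, NN N (η₃ p) i = 0 := by
    intro p i
    simp only [η₃]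
    rw [NN_sub, NN_ThC hΘ, sub_self]
  have hη₃0 : ∀ s, η₃ (s, 0) = 0 := by
    intro s
    have : η₂ (s, 0) = 0 := by simp [η₂]
    simp only [η₃, this]
    have : NN N (0 : Fin r → ℂ) = 0 := by funext i; simp [NN]
    rw [this, ThC_zero, sub_self]
  have hη₃b : ∀ (a : ↥(bd m)) τ, η₃ (a, τ) = η (a, τ) := by
    intro a τ
    have : η₂ (a, τ) = η (a, τ) := by
      simp only [η₂]
      rw [hg', hg', hη0, sub_zero]
    simp only [η₃, this]
    have : NN N (η (a, τ)) = 0 := funext fun i => hηN _ i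
    rw [this, ThC_zero, sub_zero]
  obtain ⟨f', h1, h2⟩ := actC (N := N) (fun p k => Complex.exp (η₃ p k)) (by fun_prop)
    (fun p => exp_mem_G (hη₃N p)) f
  refine ⟨f', h2, fun s => ?_, fun s τ => ?_⟩
  · rw [h1, hf0, hη₃0]
    funext k; simp
  · ext1
    rw [h1, hη₃b, hηe]
    exact TT_mul (z := (f (s, τ), J (s, τ))) (qmap_eq_iff.1 (hJ s τ))

lemma zero_mem_bd (hm : 2 ≤ m) : (0 : Cu m) ∈ bd m := ⟨⟨0, by omega⟩, Or.inl rfl⟩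

lemma lift_end (hE : (∅ : Finset (Fin r)) ∈ K) (hm : 2 ≤ m)
    (f : C(Cu m × unitInterval, ↥(UK K))) (hf0 : ∀ s, (f (s, 0)).1 = 1)
    (hf1 : ∀ s, qmap N K (f (s, 1)) = baseX N K hE) (hfb : ∀ s ∈ bd m, (f (s, 1)).1 = 1) :
    ∃ f' : C(Cu m × unitInterval, ↥(UK K)), (∀ x, qmap N K (f' x) = qmap N K (f x)) ∧
      (∀ s, (f' (s, 0)).1 = 1) ∧ (∀ s, (f' (s, 1)).1 = 1) ∧ ∀ s ∈ bd m, ∀ τ, f' (s, τ) = f (s, τ) := by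
  let ω : Cu m → Fin r → ℂ := fun s => (f (s, 1)).1
  have hωc : Continuous ω := continuous_subtype_val.comp (f.continuous.comp (by fun_prop))
  have hωG : ∀ s, ω s ∈ GSet N := by
    intro s
    obtain ⟨μ, hμ, h⟩ := qmap_eq_iff.1 (hf1 s).symm
    have : μ = ω s := by
      change μ = (f (s, 1)).1
      rw [← h]; funext k; simp [onesUK, onesC]
    rw [← this]; exact hμ
  have hω0 : ω 0 = 1 := hfb 0 (zero_mem_bd hm)
  obtain ⟨η, hηc, hηe, hη0, hηN⟩ := exists_logG (N := N)
    (fun x : Cu m × unitInterval => ω (fun i => x.2 * x.1 i)) (hωc.comp (by fun_prop))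
    (fun x => hωG _) (fun a => by
      rw [← hω0]; congr 1; funext i; simp)
  have e1 : ∀ s, (fun k => Complex.exp (η (s, 1) k)) = ω s := by
    intro s; rw [hηe]; simp
  have e0 : ∀ k, η (0, 1) k = 0 := by
    intro k
    refine exp_const (fun τ : unitInterval => η (0, τ) k) (by fun_prop) ?_ 0 (by rw [hη0]; rfl) 1
    intro τ
    have := congrFun (hηe (0, τ)) k
    simp only at this
    rw [this]
    have e : (fun i : Fin m => τ * (0 : Cu m) i) = 0 := by funext i; simp
    rw [e, hω0]; rfl
  have eb : ∀ s ∈ bd m, η (s, 1) = 0 := by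
    intro s hs
    funext k
    have hpc : PreconnectedSpace ↥(bd m) := isPreconnected_iff_preconnectedSpace.1 (bd_preconnected hm)
    refine exp_const (fun a : ↥(bd m) => η (a, 1) k) (by fun_prop) ?_ ⟨0, zero_mem_bd hm⟩ (e0 k) ⟨s, hs⟩
    intro a
    exact (congrFun (e1 a) k).trans (congrFun (hfb a a.2) k)
  obtain ⟨f', h1, h2⟩ := actC (N := N)
    (fun (p : Cu m × unitInterval) k => Complex.exp (((-(p.2 : ℝ) : ℂ) • η (p.1, 1)) k))
    (by
      simp only [Pi.smul_apply, smul_eq_mul]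
      fun_prop)
    (fun p => exp_mem_G fun i => by rw [NN_smul, hηN, mul_zero]) f
  refine ⟨f', h2, fun s => ?_, fun s => ?_, fun s hs τ => ?_⟩
  · rw [h1, hf0]
    funext k; simp
  · rw [h1]
    funext k
    have := congrFun (e1 s) k
    simp only [ω] at this
    rw [Pi.mul_apply, ← this, ← Complex.exp_add]
    simp
  · ext1
    rw [h1]
    funext k
    simp only [Pi.mul_apply]
    rw [eb s hs]
    simp

theorem lift_main (hT : HasTheta N K) (hE : (∅ : Finset (Fin r)) ∈ K) (hm : 2 ≤ m)
    (G : C(Cu m × OnePoint ℝ, XS N K)) (hG : ∀ s, G (s, OnePoint.infty) = baseX N K hE)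
    (J : C(↥(bd m) × OnePoint ℝ, ↥(UK K))) (hJ1 : ∀ s, (J (s, OnePoint.infty)).1 = 1)
    (hJ : ∀ (s : ↥(bd m)) p, qmap N K (J (s, p)) = G (s, p)) :
    ∃ F : C(Cu m × OnePoint ℝ, ↥(UK K)), (∀ x, qmap N K (F x) = G x) ∧
      (∀ s, (F (s, OnePoint.infty)).1 = 1) ∧ ∀ (s : ↥(bd m)) p, F (s, p) = J (s, p) := by
  obtain ⟨f, hf, hf0⟩ := lift_norm hT hE G hG
  let J' : C(↥(bd m) × unitInterval, ↥(UK K)) :=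
    ⟨fun x => J (x.1, kap x.2), by have := kap_cont; fun_prop⟩
  obtain ⟨f₁, a1, a2, a3⟩ := lift_bdry hT hE f hf0 J' (fun s => by
    change (J (s, kap 0)).1 = 1
    rw [kap_zero, hJ1]) (fun s τ => by
    change _ = qmap N K (J (s, kap τ))
    rw [hf, hJ])
  obtain ⟨f₂, b1, b2, b3, b4⟩ := lift_end (N := N) hE hm f₁ a2
    (fun s => by rw [a1, hf, kap_one, hG]) (fun s hs => by
      rw [a3 ⟨s, hs⟩ 1]
      change (J (_, kap 1)).1 = 1
      rw [kap_one, hJ1])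
  obtain ⟨F, hF⟩ := kapC_descend f₂ (fun s => Subtype.ext (by rw [b2, b3]))
  refine ⟨F, ?_, ?_, ?_⟩
  · rintro ⟨s, p⟩
    obtain ⟨τ, rfl⟩ := kap_surj p
    rw [hF, b1, a1, hf]
  · intro s
    rw [← kap_zero, hF, b2]
  · intro s p
    obtain ⟨τ, rfl⟩ := kap_surj p
    rw [hF, b4 s s.2, a3]
    rfl

end lm



/-! ### Compression of cubes of loops into polynomial spaces -/

section comp
variable {n r m : ℕ} {N : Fin r → Fin n → ℤ} {K : Set (Finset (Fin r))} {D : Fin r → ℕ}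

lemma den_mem_G (hsum : ∑ k, (D k : ℤ) • N k = 0) {z : ℂ} (hz : z ≠ 0) :
    (fun k => z ^ (D k)) ∈ GSet N := by
  refine ⟨fun k => pow_ne_zero _ hz, fun v => ?_⟩
  have hs : ∀ (s : Finset (Fin r)) (e : Fin r → ℤ), ∏ k ∈ s, z ^ e k = z ^ (∑ k ∈ s, e k) := by
    intro s e
    induction s using Finset.induction_on with
    | empty => simp
    | insert a s ha ih => rw [Finset.prod_insert ha, Finset.sum_insert ha, ih, zpow_add₀ hz]
  simp only [← zpow_natCast, ← zpow_mul]
  rw [hs]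
  convert zpow_zero z
  simp only [Finset.mul_sum]
  rw [Finset.sum_comm]
  apply Finset.sum_eq_zero
  intro j _
  have := congrFun hsum j
  simp only [Finset.sum_apply, Pi.smul_apply, smul_eq_mul, Pi.zero_apply] at this
  simp only [← mul_assoc]
  rw [← Finset.sum_mul, this, zero_mul]

lemma polSp_RV (hE : (∅ : Finset (Fin r)) ∈ K) (y : ∀ j, Fin (D j + 2 * 0) → ℂ) :
    y ∈ PolSp K D ↔ ∀ p, (fun j => rat (D j) 0 (y j) p) ∈ UK K :=
  polSp_iff K D (fun _ => 0) hE y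

/-- the lift of the evaluation map -/
def jm (hE : (∅ : Finset (Fin r)) ∈ K) (f : ↥(PolSp K D)) (p : OnePoint ℝ) : ↥(UK K) :=
  ⟨fun j => rat (D j) 0 (f.1 j) p, (polSp_RV hE f.1).1 f.2 p⟩

lemma jm_cont (hE : (∅ : Finset (Fin r)) ∈ K) {A : Type*} [TopologicalSpace A]
    (f : A → ↥(PolSp K D)) (hf : Continuous f) (g : A → OnePoint ℝ) (hg : Continuous g) :
    Continuous (fun a => jm hE (f a) (g a)) := by
  apply Continuous.subtype_mk
  apply continuous_pi
  intro j
  exact rat_cont2 (d := D j) (l := 0) (f := fun a => (f a).1 j)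
    ((continuous_apply j).comp (continuous_subtype_val.comp hf)) hg

lemma jm_q (hE : (∅ : Finset (Fin r)) ∈ K) (hsum : ∑ k, (D k : ℤ) • N k = 0)
    (i : ↥(PolSp K D) → Loop (XS N K) (baseX N K hE)) (hi : IsID N K hE D i)
    (f : ↥(PolSp K D)) (p : OnePoint ℝ) : qmap N K (jm hE f p) = (i f).1 p := by
  induction p using OnePoint.rec with
  | infty =>
    rw [(i f).2]
    unfold baseX
    congr 1
    ext1
    funext j
    exact rat_infty _ _ _
  | coe t =>
    rw [hi f t, qmap_eq_iff]
    refine ⟨fun k => ((t : ℂ) + Complex.I) ^ (D k), den_mem_G hsum (real_add_ne I_im_ne t), ?_⟩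
    funext k
    change _ * rat (D k) 0 (f.1 k) (t : OnePoint ℝ) = _
    rw [rat_coe, den, pow_zero, mul_one]
    exact mul_div_cancel₀ _ (pow_ne_zero _ (real_add_ne I_im_ne t))

theorem compress (hT : HasTheta N K) (hE : (∅ : Finset (Fin r)) ∈ K) (hm : 2 ≤ m)
    (hsum : ∑ k, (D k : ℤ) • N k = 0) (ρ : ℕ) (hρ : 2 ≤ ρ)
    (hK : ∀ σ : Finset (Fin r), σ ∉ K → ρ ≤ σ.card) (hD : ∀ j, m < 2 * (ρ - 1) * D j)
    (i : C(↥(PolSp K D), Loop (XS N K) (baseX N K hE))) (hi : IsID N K hE D i)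
    (G : C(Cu m, Loop (XS N K) (baseX N K hE))) (P : C(↥(bd m), ↥(PolSp K D)))
    (hP : ∀ s : ↥(bd m), i (P s) = G s) :
    ∃ P' : C(Cu m, ↥(PolSp K D)), (∀ s : ↥(bd m), P' s = P s) ∧
      G.HomotopicRel (i.comp P') (bd m) := by
  have hGc : Continuous (fun x : Cu m × OnePoint ℝ => (G x.1).1 x.2) := by
    have h : Continuous (fun s => (G s).1) := continuous_subtype_val.comp G.continuous
    exact (h.comp continuous_fst).eval continuous_snd
  let G' : C(Cu m × OnePoint ℝ, XS N K) := ⟨_, hGc⟩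
  let J : C(↥(bd m) × OnePoint ℝ, ↥(UK K)) :=
    ⟨fun x => jm hE (P x.1) x.2, jm_cont hE _ (by fun_prop) _ continuous_snd⟩
  obtain ⟨F, hFq, hF1, hFJ⟩ := lift_main hT hE hm G' (fun s => (G s).2) J
    (fun s => funext fun j => rat_infty _ _ _) (fun s p => by
      change qmap N K (jm hE (P s) p) = (G s).1 p
      rw [jm_q hE hsum i hi, hP])
  have hext : ∀ j, ∃ g : C(Cu m, Fin (D j + 2 * 0) → ℂ), ∀ s : ↥(bd m), g s = (P s).1 j := by
    intro j
    let h : C(↥(bd m), Fin (D j + 2 * 0) → ℂ) :=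
      ⟨fun s => (P s).1 j, (continuous_apply j).comp (continuous_subtype_val.comp P.continuous)⟩
    obtain ⟨g, hg⟩ := ContinuousMap.exists_restrict_eq (bd_closed m) h
    exact ⟨g, fun s => congrArg (fun F => F s) hg⟩
  choose Ph hPh using hext
  have hb : BC K D Ph F := by
    intro s hs p j
    rw [hFJ ⟨s, hs⟩ p, hPh j ⟨s, hs⟩]
    rfl
  obtain ⟨F₁, M, hh1, hst⟩ := approx K D Ph F hb (fun s j => congrFun (hF1 s) j)
  obtain ⟨F₂, hh2, hst2⟩ := step_all K D ρ hρ hK hD Ph M F₁ (BC_of_homotopic K D hh1 hb) hst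
  have hh := hh1.trans hh2
  have hb2 : BC K D Ph F₂ := BC_of_homotopic K D hh hb
  choose c hc using hst2
  have hcm : ∀ s, (fun j => c j s) ∈ PolSp K D := by
    intro s
    rw [polSp_RV hE]
    intro p
    have : (fun j => rat (D j) 0 (c j s) p) = (F₂ (s, p)).1 := by
      funext j; rw [hc]
    rw [this]
    exact (F₂ (s, p)).2
  let P' : C(Cu m, ↥(PolSp K D)) := ⟨fun s => ⟨fun j => c j s, hcm s⟩, by
    apply Continuous.subtype_mk
    apply continuous_pi
    intro j
    exact (c j).continuous⟩
  have hPF : ∀ s p, jm hE (P' s) p = F₂ (s, p) := by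
    intro s p
    ext1
    funext j
    rw [hc]
    rfl
  have hPP : ∀ s : ↥(bd m), P' s = P s := by
    intro s
    ext1
    funext j
    refine rat_injective (D j) 0 (c j s) ((P s).1 j) fun p => ?_
    rw [← hc, hb2 s s.2, hPh]
  refine ⟨P', hPP, ?_⟩
  obtain ⟨H⟩ := hh
  have hHr : ∀ u x, x ∈ SS m → H (u, x) = F x := fun u x hx => H.eq_fst u hx
  let Hc : C((unitInterval × Cu m) × OnePoint ℝ, XS N K) :=
    ⟨fun x => qmap N K (H (x.1.1, (x.1.2, x.2))), by
      refine (qCont N K).continuous.comp ?_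
      exact (map_continuous H).comp (by fun_prop)⟩
  have hinf : ∀ x, Hc (x, OnePoint.infty) = baseX N K hE := by
    intro x
    change qmap N K (H (x.1, (x.2, OnePoint.infty))) = _
    rw [hHr _ _ (Or.inr rfl), hFq]
    exact (G x.2).2
  let L : unitInterval × Cu m → Loop (XS N K) (baseX N K hE) := fun x => ⟨Hc.curry x, hinf x⟩
  have hL : Continuous L := by
    apply Continuous.subtype_mk
    exact Hc.curry.continuous
  refine ⟨⟨⟨⟨L, hL⟩, ?_, ?_⟩, ?_⟩⟩
  · intro s
    apply Subtype.ext
    ext p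
    change qmap N K (H (0, (s, p))) = (G s).1 p
    rw [H.apply_zero, hFq]
    rfl
  · intro s
    apply Subtype.ext
    ext p
    change qmap N K (H (1, (s, p))) = (i (P' s)).1 p
    rw [H.apply_one, ← hPF, jm_q hE hsum i hi]
  · intro u s hs
    apply Subtype.ext
    ext p
    change qmap N K (H (u, (s, p))) = (G s).1 p
    rw [hHr _ _ (Or.inl hs), hFq]
    rfl

end comp

/-! ### Homotopy groups -/

section final
variable {n r : ℕ} {N : Fin r → Fin n → ℤ} {K : Set (Finset (Fin r))} {D : Fin r → ℕ}

theorem pi_surj {k : ℕ} (hT : HasTheta N K) (hE : (∅ : Finset (Fin r)) ∈ K) (hk : 2 ≤ k)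
    (hsum : ∑ k, (D k : ℤ) • N k = 0) (ρ : ℕ) (hρ : 2 ≤ ρ)
    (hK : ∀ σ : Finset (Fin r), σ ∉ K → ρ ≤ σ.card) (hD : ∀ j, k < 2 * (ρ - 1) * D j)
    (i : C(↥(PolSp K D), Loop (XS N K) (baseX N K hE))) (hi : IsID N K hE D i)
    (f₀ : ↥(PolSp K D)) : Function.Surjective (piMap k i f₀) := by
  intro y
  obtain ⟨g, rfl⟩ := Quotient.exists_rep y
  obtain ⟨P', h1, h2⟩ := compress hT hE hk hsum ρ hρ hK hD i hi g.1 (ContinuousMap.const _ f₀)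
    (fun s => (g.2 s s.2).symm)
  refine ⟨Quotient.mk _ ⟨P', fun s hs => h1 ⟨s, hs⟩⟩, ?_⟩
  exact Quotient.sound h2.symm

theorem pi_inj {k : ℕ} (hT : HasTheta N K) (hE : (∅ : Finset (Fin r)) ∈ K) (hk : 2 ≤ k)
    (hsum : ∑ k, (D k : ℤ) • N k = 0) (ρ : ℕ) (hρ : 2 ≤ ρ)
    (hK : ∀ σ : Finset (Fin r), σ ∉ K → ρ ≤ σ.card) (hD : ∀ j, k + 1 < 2 * (ρ - 1) * D j)
    (i : C(↥(PolSp K D), Loop (XS N K) (baseX N K hE))) (hi : IsID N K hE D i)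
    (f₀ : ↥(PolSp K D)) : Function.Injective (piMap k i f₀) := by
  intro y₀ y₁ hy
  obtain ⟨p₀, rfl⟩ := Quotient.exists_rep y₀
  obtain ⟨p₁, rfl⟩ := Quotient.exists_rep y₁
  obtain ⟨H⟩ : (i.comp p₀.1).HomotopicRel (i.comp p₁.1) (bd k) := Quotient.exact hy
  let tl : Cu (k+1) → Cu k := fun x j => x j.succ
  have htl : Continuous tl := by
    apply continuous_pi; intro j; exact continuous_apply _
  let G : C(Cu (k+1), Loop (XS N K) (baseX N K hE)) :=
    ⟨fun x => H (x 0, tl x), (map_continuous H).comp ((continuous_apply 0).prodMk htl)⟩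
  let Q : Cu (k+1) → ↥(PolSp K D) := fun x => if x 0 = 1 then p₁.1 (tl x) else p₀.1 (tl x)
  let A1 : Set (Cu (k+1)) := {x | x 0 = 1}
  let A2 : Set (Cu (k+1)) := {x | x 0 = 0} ∪ {x | tl x ∈ bd k}
  have hA1 : IsClosed A1 := isClosed_eq (continuous_apply 0) continuous_const
  have hA2 : IsClosed A2 := (isClosed_eq (continuous_apply 0) continuous_const).union
    ((bd_closed k).preimage htl)
  have hQ1 : ∀ x ∈ A1, Q x = p₁.1 (tl x) := fun x hx => if_pos hx
  have hQ2 : ∀ x ∈ A2, Q x = p₀.1 (tl x) := by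
    intro x hx
    by_cases h : x 0 = 1
    · rcases hx with hx | hx
      · exact absurd (h.symm.trans hx) one_ne_zero
      · rw [hQ1 x h, p₁.2 _ hx, p₀.2 _ hx]
    · exact if_neg h
  have hQc : ContinuousOn Q (A1 ∪ A2) := by
    refine ContinuousOn.union_of_isClosed ?_ ?_ hA1 hA2
    · exact ((p₁.1.continuous.comp htl).continuousOn).congr hQ1
    · exact ((p₀.1.continuous.comp htl).continuousOn).congr hQ2
  have hbd : ∀ x ∈ bd (k+1), x ∈ A1 ∪ A2 := by
    rintro x ⟨j, hj⟩
    refine Fin.cases (motive := fun j => (x j = 0 ∨ x j = 1) → x ∈ A1 ∪ A2) ?_ ?_ j hj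
    · rintro (h | h)
      · exact Or.inr (Or.inl h)
      · exact Or.inl h
    · intro j hj
      exact Or.inr (Or.inr ⟨j, hj⟩)
  let P : C(↥(bd (k+1)), ↥(PolSp K D)) :=
    ⟨fun s => Q s, hQc.comp_continuous continuous_subtype_val fun s => hbd s s.2⟩
  have hPG : ∀ s : ↥(bd (k+1)), i (P s) = G s := by
    rintro ⟨s, hs⟩
    change i (Q s) = H (s 0, tl s)
    rcases hbd s hs with h | h
    · rw [hQ1 s h]
      have : s 0 = 1 := h
      rw [this, H.apply_one]; rfl
    · rw [hQ2 s h]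
      rcases h with h | h
      · have : s 0 = 0 := h
        rw [this, H.apply_zero]; rfl
      · rw [H.eq_fst _ h]; rfl
  obtain ⟨P', h1, -⟩ := compress hT hE (by omega) hsum ρ hρ hK hD i hi G P hPG
  have hcons : Continuous (fun x : unitInterval × Cu k => (Fin.cons x.1 x.2 : Cu (k+1))) := by
    apply continuous_pi
    intro j
    refine Fin.cases ?_ (fun j => ?_) j
    · simpa using continuous_fst
    · simp only [Fin.cons_succ]
      exact (continuous_apply j).comp continuous_snd
  have htc : ∀ u (s : Cu k), tl (Fin.cons u s) = s := by
    intro u s; funext j; simp [tl]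
  have hb0 : ∀ u (s : Cu k), (Fin.cons u s : Cu (k+1)) ∈ bd (k+1) →
      P' (Fin.cons u s) = Q (Fin.cons u s) := fun u s hs => h1 ⟨_, hs⟩
  refine Quotient.sound ⟨⟨⟨⟨fun x => P' (Fin.cons x.1 x.2), P'.continuous.comp hcons⟩, ?_, ?_⟩, ?_⟩⟩
  · intro s
    change P' (Fin.cons 0 s) = p₀.1 s
    rw [hb0 0 s ⟨0, Or.inl rfl⟩, hQ2 _ (Or.inl rfl), htc]
  · intro s
    change P' (Fin.cons 1 s) = p₁.1 s
    rw [hb0 1 s ⟨0, Or.inr rfl⟩, hQ1 _ rfl, htc]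
  · rintro u s ⟨j, hj⟩
    change P' (Fin.cons u s) = p₀.1 s
    rw [hb0 u s ⟨j.succ, by simpa using hj⟩, hQ2 _ (Or.inr (by
      change tl (Fin.cons u s) ∈ bd k
      rw [htc]; exact ⟨j, hj⟩)), htc]

end final

lemma nonface_card {r : ℕ} (K : Set (Finset (Fin r))) (σ : Finset (Fin r)) (hσ : σ ∉ K) :
    rmin K ≤ σ.card := by
  induction σ using Finset.strongInduction with
  | H σ ih =>
    by_cases h : ∀ t ⊂ σ, t ∈ K
    · exact Nat.sInf_le ⟨σ, ⟨hσ, h⟩, rfl⟩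
    · push Not at h
      obtain ⟨t, ht, htK⟩ := h
      exact (ih t ht htK).trans (Finset.card_le_card ht.1)


/-- Under the hypotheses of Theorem I, the evaluation map
`i_D : Pol*_D(S¹, X_Σ) → Ω X_Σ` induces an isomorphism on `π_k` for `2 ≤ k ≤ d(D,Σ)`. -/
theorem polSpace_iD_pi_iso
    {n r : ℕ} (F : Fan n) (N : Fin r → Fin n → ℤ)
    (hPG : IsPrimGens F N) (hNS : F.NonSingular)
    (h1 : Cond1 N) (h2 : Cond2 N)
    (D : Fin r → ℕ) (hD : ∀ k, 0 < D k)
    (hsum : ∑ k, (D k : ℤ) • N k = 0) :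
    ∀ i : C(↥(PolSp (KC F N) D),
        Loop (XS N (KC F N)) (baseX N (KC F N) (empty_mem_KC F N))),
      IsID N (KC F N) (empty_mem_KC F N) D ⇑i →
      ∀ k : ℕ, 2 ≤ k → (k : ℤ) ≤ dBound (KC F N) D →
        ∀ f₀ : ↥(PolSp (KC F N) D), Function.Bijective (piMap k i f₀) := by
  intro i hi k hk hkd f₀
  have hT : HasTheta N (KC F N) := fun σ hσ => exists_theta F hNS N hPG h2 σ hσ
  unfold dBound at hkd
  have hρ : 2 ≤ rmin (KC F N) := by
    by_contra hlt
    have h3 : ((rmin (KC F N) : ℤ) - 1) ≤ 0 := by omega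
    have h4 : ((rmin (KC F N) : ℤ) - 1) * (dmin D : ℤ) ≤ 0 :=
      mul_nonpos_of_nonpos_of_nonneg h3 (by positivity)
    have h5 : (2 : ℤ) ≤ k := by exact_mod_cast hk
    nlinarith
  have hdj : ∀ j, k + 1 < 2 * (rmin (KC F N) - 1) * D j := by
    intro j
    have h3 : dmin D ≤ D j := Nat.sInf_le ⟨j, rfl⟩
    have h4 : 2 * (rmin (KC F N) - 1) * dmin D ≤ 2 * (rmin (KC F N) - 1) * D j :=
      Nat.mul_le_mul_left _ h3
    have h5 : ((2 * (rmin (KC F N) - 1) * dmin D : ℕ) : ℤ)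
        = 2 * ((rmin (KC F N) : ℤ) - 1) * (dmin D : ℤ) := by
      push_cast [Nat.cast_sub (show 1 ≤ rmin (KC F N) by omega)]
      ring
    omega
  have hc := nonface_card (KC F N)
  exact ⟨pi_inj hT _ hk hsum _ hρ hc hdj i hi f₀,
    pi_surj hT _ hk hsum _ hρ hc (fun j => by have := hdj j; omega) i hi f₀⟩

end Toric
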